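/- Let K be a pure 3-dimensional simplicial complex with K = L ∪ P, where L and P are pure 3-dimensional subcomplexes of K. Suppose P = v∗D is the join of a vertex v with a triangulated 2-disk D not containing v (so P is generated by the tetrahedra t∪{v} for t a triangle of D, and its boundary is ∂P = D ∪ (v∗∂D), where ∂D is the subcomplex generated by the edges of D contained in exactly one triangle of D). Suppose further that L ∩ P is a triangulated 2-disk fully contained in ∂P. Then K shells down to L. -/

import Mathlib

/-!
STATEMENT 12 (Lemma 6.1): if K = L ∪ P where P = v ∗ D is a cone over a
triangulated 2-disk D and L ∩ P is a 2-disk contained in ∂P, then K shells down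
to L.
-/

open scoped Classical

namespace PaperFormal

variable {V : Type*}

/-- `K` is a finite abstract simplicial complex. -/
def IsComplex (K : Set (Finset V)) : Prop :=
  (∀ σ ∈ K, σ ≠ ∅) ∧ ∀ σ ∈ K, ∀ τ : Finset V, τ ⊆ σ → τ ≠ ∅ → τ ∈ K

/-- A facet is an inclusion-maximal face. -/
def IsFacet (K : Set (Finset V)) (σ : Finset V) : Prop :=
  σ ∈ K ∧ ∀ τ ∈ K, σ ⊆ τ → σ = τ

/-- `K` is pure of dimension `d`. -/
def PureDim (K : Set (Finset V)) (d : ℕ) : Prop :=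
  K.Nonempty ∧ ∀ σ, IsFacet K σ → σ.card = d + 1

/-- `K[θ_1,…,θ_m]` for the list `l = [θ_1,…,θ_m]`. -/
def generatedByL (K : Set (Finset V)) (l : List (Finset V)) : Set (Finset V) :=
  {τ ∈ K | ∃ θ ∈ l, τ ⊆ θ}

/-- The subcomplex of `K` generated by the faces in `S`. -/
def generatedBy (K S : Set (Finset V)) : Set (Finset V) :=
  {τ ∈ K | ∃ θ ∈ S, τ ⊆ θ}

/-- The shelling-down condition for the first `k` entries of `l`. -/
def DownSteps (K : Set (Finset V)) (d : ℕ) (l : List (Finset V)) (k : ℕ) : Prop :=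
  ∀ i, i < k →
    PureDim (generatedByL K [l.getD i ∅] ∩ generatedByL K (l.drop (i + 1))) (d - 1)

/-- The first `k` entries of `l` (which enumerates all facets of `K`) form a
shelling down of `K`. -/
def IsShellingDown (K : Set (Finset V)) (d : ℕ) (l : List (Finset V)) (k : ℕ) : Prop :=
  l.Nodup ∧ (∀ σ, σ ∈ l ↔ IsFacet K σ) ∧ k + 1 ≤ l.length ∧ DownSteps K d l k

/-- `K` shells down to the subcomplex `L`. -/
def ShellsDownTo (K : Set (Finset V)) (d : ℕ) (L : Set (Finset V)) : Prop :=
  ∃ l k, IsShellingDown K d l k ∧ L = generatedByL K (l.drop k)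

/-- The boundary of a pure `d`-dimensional complex `K`. -/
def bdry (K : Set (Finset V)) (d : ℕ) : Set (Finset V) :=
  generatedBy K {σ : Finset V | σ ∈ K ∧ σ.card = d ∧
    ∃! F, F ∈ K ∧ F.card = d + 1 ∧ σ ⊆ F}

/-- The join `v ∗ D` of a vertex `v` (not in any face of `D`) with `D`: its
faces are the faces of `D`, the sets `σ ∪ {v}` for `σ ∈ D`, and `{v}`. -/
def cone [DecidableEq V] (v : V) (D : Set (Finset V)) : Set (Finset V) :=
  D ∪ (insert v '' D) ∪ {{v}}

/-- The polyhedron of a collection of geometric faces. -/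
def poly {N : ℕ} (S : Set (Finset (EuclideanSpace ℝ (Fin N)))) :
    Set (EuclideanSpace ℝ (Fin N)) :=
  ⋃ σ ∈ S, convexHull ℝ (σ : Set (EuclideanSpace ℝ (Fin N)))

/-- `S` is homeomorphic to the closed `d`-dimensional ball. -/
def IsBallSet {N : ℕ} (d : ℕ) (S : Set (EuclideanSpace ℝ (Fin N))) : Prop :=
  Nonempty (↥S ≃ₜ ↥(Metric.closedBall (0 : EuclideanSpace ℝ (Fin d)) 1))

/-!
Call a set of triangles a *disk or sphere* if it is a connected surface with connected vertex stars
and `H¹(T, ∂T; ℤ/2) = 0`. If `Y ⊊ T` are two of these, then some triangle outside `Y` can be removed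
from `T` such that the rest is a disk or sphere again: a triangle `t ∉ Y` with a boundary edge that
cannot be removed separates `T`, and turning around the corner at which it does leads to another
such triangle, which is removable or cuts off fewer triangles. Hence `T` can be shelled down to `Y`.

Let `S` and `X` be the triangles of `D` and of `L ∩ P`. The triangles of `X` containing `v` form a
fan attached to `S` along boundary edges, so `S ∪ X` is a disk or sphere. Shell it down to `X`, and
`X` further down to the star of `v` in `X` (or to a single triangle, if that star is empty).
Removing the tetrahedra `v ∪ t` in the order in which the triangles `t` disappear shells `K` down
to `L`.

That triangulated disks are disks or spheres in this sense follows from planar topology. Invariance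
of domain shows that no edge lies in three triangles, and that the boundary edges lie on the
boundary circle; points do not separate convex sets, which makes the stars connected; and a relative
cocycle is a Čech cocycle of the cover by open stars, whose covering space splits because the disk
is simply connected.
-/

/-! ### Combinatorial disks and spheres -/

section TriangleEdges

theorem sum_add_const_of_card_eq_two {e : Finset V} (he : e.card = 2) (g : V → ZMod 2)
    (k : ZMod 2) : ∑ x ∈ e, (g x + k) = ∑ x ∈ e, g x := by
  rw [Finset.sum_add_distrib, Finset.sum_const, he, CharTwo.two_nsmul, add_zero]

theorem card_filter_mem_powersetCard_two [DecidableEq V] {t : Finset V} {x : V} (ht : t.card = 3)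
    (hx : x ∈ t) : ((t.powersetCard 2).filter (x ∈ ·)).card = 2 := by
  have hnot : (t.powersetCard 2).filter (x ∉ ·) = (t.erase x).powersetCard 2 := by
    ext e
    simp only [Finset.mem_filter, Finset.mem_powersetCard, Finset.subset_erase]
    tauto
  have hsplit := Finset.card_filter_add_card_filter_not (s := t.powersetCard 2) (x ∈ ·)
  rw [hnot, Finset.card_powersetCard, Finset.card_powersetCard, Finset.card_erase_of_mem hx, ht]
    at hsplit
  simpa using hsplit

theorem sum_powersetCard_two_coboundary {t : Finset V} (ht : t.card = 3) (g : V → ZMod 2) :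
    ∑ e ∈ t.powersetCard 2, ∑ x ∈ e, g x = 0 := by
  have hcomm : ∑ e ∈ t.powersetCard 2, ∑ x ∈ e, g x =
      ∑ x ∈ t, ∑ _e ∈ (t.powersetCard 2).filter (x ∈ ·), g x := by
    refine Finset.sum_comm' fun e x ↦ ?_
    simp only [Finset.mem_filter, Finset.mem_powersetCard]
    exact ⟨fun h ↦ ⟨⟨h.1, h.2⟩, h.1.1 h.2⟩, fun h ↦ ⟨h.1.1, h.1.2⟩⟩
  rw [hcomm]
  refine Finset.sum_eq_zero fun x hx ↦ ?_
  rw [Finset.sum_const, card_filter_mem_powersetCard_two ht hx, CharTwo.two_nsmul]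

theorem sum_eq_zero_iff_forall_eq {e : Finset V} (he : e.card = 2) (g : V → ZMod 2) :
    ∑ x ∈ e, g x = 0 ↔ ∀ x ∈ e, ∀ y ∈ e, g x = g y := by
  obtain ⟨x, y, hxy, rfl⟩ := Finset.card_eq_two.1 he
  rw [Finset.sum_pair hxy, CharTwo.add_eq_zero]
  simp only [Finset.mem_insert, Finset.mem_singleton, forall_eq_or_imp, forall_eq]
  tauto

theorem exists_mem_inter_of_edges {t e f : Finset V} (ht : t.card = 3) (he : e.card = 2)
    (hf : f.card = 2) (het : e ⊆ t) (hft : f ⊆ t) : ∃ c ∈ e, c ∈ f := by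
  by_contra! hdisj
  have hcard := Finset.card_le_card (Finset.union_subset het hft)
  rw [Finset.card_union_of_disjoint (Finset.disjoint_left.2 hdisj)] at hcard
  omega

theorem insert_eq_of_edge [DecidableEq V] {t e : Finset V} {c : V} (ht : t.card = 3)
    (he : e.card = 2) (het : e ⊆ t) (hct : c ∈ t) (hce : c ∉ e) : insert c e = t := by
  refine Finset.eq_of_subset_of_card_le (Finset.insert_subset hct het) ?_
  rw [Finset.card_insert_of_notMem hce, he, ht]

theorem eq_or_eq_of_mem_edges [DecidableEq V] {t e₁ e₂ e : Finset V} {c : V} (ht : t.card = 3)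
    (h₁ : e₁ ∈ (t.powersetCard 2).filter (c ∈ ·)) (h₂ : e₂ ∈ (t.powersetCard 2).filter (c ∈ ·))
    (he : e ∈ (t.powersetCard 2).filter (c ∈ ·)) (hne : e₁ ≠ e₂) : e = e₁ ∨ e = e₂ := by
  have hct : c ∈ t := by
    simp only [Finset.mem_filter, Finset.mem_powersetCard] at he
    exact he.1.1 he.2
  have hpair : {e₁, e₂} = (t.powersetCard 2).filter (c ∈ ·) := by
    refine Finset.eq_of_subset_of_card_le (by simp only [Finset.insert_subset_iff, h₁, true_and,
      Finset.singleton_subset_iff, h₂]) ?_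
    rw [card_filter_mem_powersetCard_two ht hct, Finset.card_pair hne]
  simpa [← hpair] using he

end TriangleEdges

/-- The edge `e` lies in exactly one triangle of `T`, i.e. it is a boundary edge of the surface with
triangle set `T`. -/
def IsFreeEdge (T : Finset (Finset V)) (e : Finset V) : Prop :=
  e.card = 2 ∧ ∃! t, t ∈ T ∧ e ⊆ t

/-- The triangles `r` and `s` have a common edge containing `σ`. Taking `σ = {x}` describes
adjacency in the star of the vertex `x`, taking `σ = ∅` adjacency in the dual graph. -/
def EdgeAdj (σ r s : Finset V) : Prop :=
  ∃ e : Finset V, e.card = 2 ∧ σ ⊆ e ∧ e ⊆ r ∧ e ⊆ s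

/-- The set of triangles `p` is closed in `T` under adjacency along edges containing `σ`. -/
def EdgeInvariant (T : Finset (Finset V)) (σ : Finset V) (p : Finset V → Prop) : Prop :=
  ∀ r ∈ T, ∀ s ∈ T, EdgeAdj σ r s → p r → p s

/-- Any two triangles of `T` containing `σ` are joined by a chain of triangles of `T` in which
consecutive ones have a common edge containing `σ`; expressed through invariant sets. -/
def StarConnected (T : Finset (Finset V)) (σ : Finset V) : Prop :=
  ∀ p, EdgeInvariant T σ p → ∀ s ∈ T, ∀ t ∈ T, σ ⊆ s → σ ⊆ t → p s → p t

/-- A set of triangles in which no edge lies in more than two of them. -/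
structure IsPseudosurface (T : Finset (Finset V)) : Prop where
  card_eq_three : ∀ t ∈ T, t.card = 3
  eq_of_ne : ∀ e : Finset V, e.card = 2 → ∀ r ∈ T, ∀ s ∈ T, ∀ t ∈ T, e ⊆ r → e ⊆ s → e ⊆ t →
    r ≠ t → s ≠ t → r = s

/-- A simplicial 1-cocycle of `T` modulo 2 relative to the boundary of `T`. -/
structure IsRelCocycle (T : Finset (Finset V)) (φ : Finset V → ZMod 2) : Prop where
  sum_eq_zero : ∀ t ∈ T, ∑ e ∈ t.powersetCard 2, φ e = 0
  eq_zero_of_isFreeEdge : ∀ e, IsFreeEdge T e → φ e = 0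

/-- The 0-cochain `g` vanishes on the boundary of `T` and has coboundary `φ`. -/
structure IsRelPrimitive (T : Finset (Finset V)) (φ : Finset V → ZMod 2) (g : V → ZMod 2) :
    Prop where
  eq_sum : ∀ t ∈ T, ∀ e : Finset V, e.card = 2 → e ⊆ t → φ e = ∑ x ∈ e, g x
  eq_zero : ∀ e, IsFreeEdge T e → ∀ x ∈ e, g x = 0

/-- `T` is the set of triangles of a triangulated disk or sphere: a connected surface with
`H¹(T, ∂T; ℤ/2) = 0`. Disks and spheres are treated together because a sphere becomes a disk when a
triangle is removed. -/
structure IsDiskOrSphere (T : Finset (Finset V)) : Prop extends IsPseudosurface T where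
  nonempty : T.Nonempty
  starConnected : ∀ σ : Finset V, σ.card ≤ 1 → StarConnected T σ
  exists_primitive : ∀ φ, IsRelCocycle T φ → ∃ g, IsRelPrimitive T φ g

section Basic

variable {T : Finset (Finset V)} {σ τ e r s t : Finset V} {p : Finset V → Prop}

theorem EdgeAdj.symm (h : EdgeAdj σ r s) : EdgeAdj σ s r :=
  let ⟨e, he, hσ, her, hes⟩ := h
  ⟨e, he, hσ, hes, her⟩

theorem EdgeAdj.mono (hστ : σ ⊆ τ) (h : EdgeAdj τ r s) : EdgeAdj σ r s :=
  let ⟨e, he, hτ, her, hes⟩ := h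
  ⟨e, he, hστ.trans hτ, her, hes⟩

theorem EdgeAdj.mem_left {x : V} (h : EdgeAdj {x} r s) : x ∈ r :=
  let ⟨_, _, hx, her, _⟩ := h
  her (hx (Finset.mem_singleton_self x))

theorem EdgeInvariant.mono (hστ : σ ⊆ τ) (h : EdgeInvariant T σ p) : EdgeInvariant T τ p :=
  fun r hr s hs hrs ↦ h r hr s hs (hrs.mono hστ)

theorem EdgeInvariant.not (h : EdgeInvariant T σ p) : EdgeInvariant T σ (fun r ↦ ¬ p r) :=
  fun r hr s hs hrs hpr hps ↦ hpr (h s hs r hr hrs.symm hps)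

theorem IsFreeEdge.eq (he : IsFreeEdge T e) (hr : r ∈ T) (hs : s ∈ T) (her : e ⊆ r) (hes : e ⊆ s) :
    r = s :=
  he.2.unique ⟨hr, her⟩ ⟨hs, hes⟩

theorem IsFreeEdge.of_subset {Y : Finset (Finset V)} (he : IsFreeEdge T e) (hYT : Y ⊆ T)
    (ht : t ∈ Y) (het : e ⊆ t) : IsFreeEdge Y e :=
  ⟨he.1, t, ⟨ht, het⟩, fun _ hs ↦ he.eq (hYT hs.1) (hYT ht) hs.2 het⟩

theorem IsPseudosurface.subset {Y : Finset (Finset V)} (hT : IsPseudosurface T) (hYT : Y ⊆ T) :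
    IsPseudosurface Y where
  card_eq_three t ht := hT.card_eq_three t (hYT ht)
  eq_of_ne e he r hr s hs t ht := hT.eq_of_ne e he r (hYT hr) s (hYT hs) t (hYT ht)

theorem IsDiskOrSphere.of_edgeInvariant (hT : IsDiskOrSphere T) (hp : EdgeInvariant T ∅ p)
    (hs : s ∈ T) (ht : t ∈ T) (hps : p s) : p t :=
  hT.starConnected ∅ (by simp) p hp s hs t ht (Finset.empty_subset _) (Finset.empty_subset _) hps

theorem IsDiskOrSphere.eq_of_forall_triangle {α : Type*} (hT : IsDiskOrSphere T) {g : V → α}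
    (hg : ∀ t ∈ T, ∀ x ∈ t, ∀ y ∈ t, g x = g y) {x y : V} (hs : s ∈ T) (ht : t ∈ T)
    (hx : x ∈ s) (hy : y ∈ t) : g x = g y := by
  refine hT.of_edgeInvariant (p := fun r ↦ ∀ z ∈ r, g x = g z) ?_ hs ht (hg s hs x hx) y hy
  rintro r - r' hr' ⟨e, he, -, her, her'⟩ hgr z hz
  obtain ⟨u, hu⟩ := Finset.card_pos.1 (he ▸ Nat.two_pos)
  exact (hgr u (her hu)).trans (hg r' hr' u (her' hu) z hz)

theorem IsRelPrimitive.add_const {φ : Finset V → ZMod 2} {g : V → ZMod 2}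
    (hg : IsRelPrimitive T φ g) (hclosed : ∀ e, ¬ IsFreeEdge T e) (k : ZMod 2) :
    IsRelPrimitive T φ (fun x ↦ g x + k) where
  eq_sum t ht e he het := by
    rw [hg.eq_sum t ht e he het, sum_add_const_of_card_eq_two he]
  eq_zero e he := absurd he (hclosed e)

theorem isDiskOrSphere_singleton (ht : t.card = 3) : IsDiskOrSphere {t} where
  card_eq_three := by simpa using ht
  eq_of_ne e _ r hr s hs _ _ _ _ _ _ _ := by
    rw [Finset.mem_singleton.1 hr, Finset.mem_singleton.1 hs]
  nonempty := Finset.singleton_nonempty t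
  starConnected σ _ p _ r hr s hs _ _ hpr := by
    rwa [Finset.mem_singleton.1 hs, ← Finset.mem_singleton.1 hr]
  exists_primitive φ hφ := by
    refine ⟨0, fun s hs e he hes ↦ ?_, fun _ _ _ _ ↦ rfl⟩
    have hfree : IsFreeEdge {t} e :=
      ⟨he, s, ⟨hs, hes⟩, fun r hr ↦ by
        rw [Finset.mem_singleton.1 hr.1, Finset.mem_singleton.1 hs]⟩
    simp [hφ.eq_zero_of_isFreeEdge e hfree]

end Basic

section Counting

variable [DecidableEq V] {T : Finset (Finset V)} {e f : Finset V} {x : V}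

/-- The edges at the vertex `x` of the triangles in `T`. -/
def edgesAt (T : Finset (Finset V)) (x : V) : Finset (Finset V) :=
  T.biUnion fun t ↦ (t.powersetCard 2).filter (x ∈ ·)

theorem mem_edgesAt : e ∈ edgesAt T x ↔ e.card = 2 ∧ x ∈ e ∧ ∃ t ∈ T, e ⊆ t := by
  simp only [edgesAt, Finset.mem_biUnion, Finset.mem_filter, Finset.mem_powersetCard]
  tauto

theorem IsFreeEdge.mem_edgesAt (he : IsFreeEdge T e) (hx : x ∈ e) : e ∈ edgesAt T x :=
  PaperFormal.mem_edgesAt.2 ⟨he.1, hx, he.2.exists⟩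

theorem IsPseudosurface.card_filter_add_ite (hT : IsPseudosurface T) (he : e ∈ edgesAt T x) :
    ((T.filter (x ∈ ·)).filter (e ⊆ ·)).card + (if IsFreeEdge T e then 1 else 0) = 2 := by
  obtain ⟨hcard, hx, t, ht, het⟩ := mem_edgesAt.1 he
  have hfilter : (T.filter (x ∈ ·)).filter (e ⊆ ·) = T.filter (e ⊆ ·) := by
    ext s
    simp only [Finset.mem_filter]
    exact ⟨fun h ↦ ⟨h.1.1, h.2⟩, fun h ↦ ⟨⟨h.1, h.2 hx⟩, h.2⟩⟩
  rw [hfilter]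
  split_ifs with hfree
  · have : T.filter (e ⊆ ·) = {t} := by
      ext s
      simp only [Finset.mem_filter, Finset.mem_singleton]
      exact ⟨fun h ↦ hfree.eq h.1 ht h.2 het, fun h ↦ h ▸ ⟨ht, het⟩⟩
    rw [this, Finset.card_singleton]
  · obtain ⟨s, hs, hes, hst⟩ : ∃ s ∈ T, e ⊆ s ∧ s ≠ t := by
      by_contra! h
      exact hfree ⟨hcard, t, ⟨ht, het⟩, fun s hs ↦ h s hs.1 hs.2⟩
    have : T.filter (e ⊆ ·) = {s, t} := by
      ext r
      simp only [Finset.mem_filter, Finset.mem_insert, Finset.mem_singleton]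
      refine ⟨fun h ↦ or_iff_not_imp_right.2 fun hrt ↦
        hT.eq_of_ne e hcard r h.1 s hs t ht h.2 hes het hrt hst, ?_⟩
      rintro (rfl | rfl)
      exacts [⟨hs, hes⟩, ⟨ht, het⟩]
    rw [this, Finset.card_pair hst]

theorem IsPseudosurface.handshake (hT : IsPseudosurface T) (x : V) :
    2 * (T.filter (x ∈ ·)).card + ((edgesAt T x).filter (IsFreeEdge T)).card =
      2 * (edgesAt T x).card := by
  have hdouble := Finset.sum_card_bipartiteAbove_eq_sum_card_bipartiteBelow
    (s := edgesAt T x) (t := T.filter (x ∈ ·)) (fun e t ↦ e ⊆ t)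
  have htri : ∀ t ∈ T.filter (x ∈ ·), ((edgesAt T x).filter (· ⊆ t)).card = 2 := by
    intro t ht
    rw [Finset.mem_filter] at ht
    rw [← card_filter_mem_powersetCard_two (hT.card_eq_three t ht.1) ht.2]
    congr 1
    ext e
    simp only [Finset.mem_filter, mem_edgesAt, Finset.mem_powersetCard]
    exact ⟨fun h ↦ ⟨⟨h.2, h.1.1⟩, h.1.2.1⟩, fun h ↦ ⟨⟨h.1.2, h.2, t, ht.1, h.1.1⟩, h.1.1⟩⟩
  have hedge := Finset.sum_congr rfl fun e he ↦ hT.card_filter_add_ite (x := x) (e := e) he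
  rw [Finset.sum_add_distrib, ← Finset.card_filter] at hedge
  simp only [Finset.bipartiteAbove, Finset.bipartiteBelow] at hdouble
  rw [Finset.sum_congr rfl htri] at hdouble
  rw [hdouble, Finset.sum_const, Finset.sum_const, smul_eq_mul, smul_eq_mul] at hedge
  rw [mul_comm 2, mul_comm 2]
  exact hedge

theorem edgesAt_filter_mem (T : Finset (Finset V)) (x : V) :
    edgesAt (T.filter (x ∈ ·)) x = edgesAt T x := by
  ext e
  simp only [mem_edgesAt, Finset.mem_filter]
  exact ⟨fun ⟨he, hx, t, ht, het⟩ ↦ ⟨he, hx, t, ht.1, het⟩,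
    fun ⟨he, hx, t, ht, het⟩ ↦ ⟨he, hx, t, ⟨ht, het hx⟩, het⟩⟩

theorem card_edgesAt_insert_le {Q : Finset (Finset V)} {r s : Finset V} (hs : s.card = 3)
    (hr : r ∈ Q) (hrs : EdgeAdj {x} r s) :
    (edgesAt (insert s Q) x).card ≤ (edgesAt Q x).card + 1 := by
  obtain ⟨e, he, hxe, her, hes⟩ := hrs
  rw [Finset.singleton_subset_iff] at hxe
  let sides := (s.powersetCard 2).filter (x ∈ ·)
  have hsides : sides.card = 2 := card_filter_mem_powersetCard_two hs (hes hxe)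
  have hold : e ∈ sides ∩ edgesAt Q x := Finset.mem_inter.2
    ⟨by simp [sides, hes, he, hxe], mem_edgesAt.2 ⟨he, hxe, r, hr, her⟩⟩
  have hunion : edgesAt (insert s Q) x = sides ∪ edgesAt Q x := Finset.biUnion_insert
  have hincl := Finset.card_union_add_card_inter sides (edgesAt Q x)
  have := Finset.card_pos.2 ⟨e, hold⟩
  rw [hunion]
  omega

theorem StarConnected.card_edgesAt_le (hT : StarConnected T {x}) (hcard : ∀ t ∈ T, t.card = 3) :
    (edgesAt T x).card ≤ (T.filter (x ∈ ·)).card + 1 := by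
  rw [← edgesAt_filter_mem]
  rcases (T.filter (x ∈ ·)).eq_empty_or_nonempty with hempty | ⟨t₀, ht₀⟩
  · simp [hempty, edgesAt]
  let family := (T.filter (x ∈ ·)).powerset.filter
    fun Q ↦ t₀ ∈ Q ∧ (edgesAt Q x).card ≤ Q.card + 1
  have hmem : ∀ {Q}, Q ∈ family ↔
      Q ⊆ T.filter (x ∈ ·) ∧ t₀ ∈ Q ∧ (edgesAt Q x).card ≤ Q.card + 1 := by
    simp [family]
  have hstart : {t₀} ∈ family := by
    rw [hmem, Finset.singleton_subset_iff, edgesAt, Finset.singleton_biUnion]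
    have ht₀' := Finset.mem_filter.1 ht₀
    rw [card_filter_mem_powersetCard_two (hcard t₀ ht₀'.1) ht₀'.2]
    simp [ht₀]
  obtain ⟨Q, hQ, hmax⟩ := family.exists_max_image Finset.card ⟨_, hstart⟩
  obtain ⟨hsub, ht₀Q, hQcard⟩ := hmem.1 hQ
  have hinv : EdgeInvariant T {x} (· ∈ Q) := by
    intro r _ s hs hrs hrQ
    by_contra hsQ
    have hxs : s ∈ T.filter (x ∈ ·) := by
      obtain ⟨e, -, hxe, -, hes⟩ := hrs
      exact Finset.mem_filter.2 ⟨hs, hes (hxe (Finset.mem_singleton_self x))⟩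
    have hle := card_edgesAt_insert_le (hcard s hs) hrQ hrs
    have hins := Finset.card_insert_of_notMem hsQ
    have := hmax (insert s Q) (hmem.2
      ⟨Finset.insert_subset hxs hsub, Finset.mem_insert_of_mem ht₀Q, by omega⟩)
    omega
  suffices Q = T.filter (x ∈ ·) from this ▸ hQcard
  refine hsub.antisymm fun t ht ↦ ?_
  rw [Finset.mem_filter] at ht ht₀
  exact hT _ hinv t₀ ht₀.1 t ht.1 (by simpa using ht₀.2) (by simpa using ht.2) ht₀Q

end Counting

section FreeEdges

variable {T : Finset (Finset V)} {e t : Finset V} {x y : V}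

theorem IsPseudosurface.exists_isFreeEdge_ne (hT : IsPseudosurface T) (he : IsFreeEdge T e)
    (hx : x ∈ e) : ∃ f, IsFreeEdge T f ∧ x ∈ f ∧ f ≠ e := by
  have hmem : e ∈ (edgesAt T x).filter (IsFreeEdge T) :=
    Finset.mem_filter.2 ⟨he.mem_edgesAt hx, he⟩
  have hpos : 0 < ((edgesAt T x).filter (IsFreeEdge T)).card := Finset.card_pos.2 ⟨e, hmem⟩
  have := hT.handshake x
  obtain ⟨f, hf, hfe⟩ := Finset.exists_mem_ne
    (show 1 < ((edgesAt T x).filter (IsFreeEdge T)).card by omega) e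
  rw [Finset.mem_filter] at hf
  exact ⟨f, hf.2, (PaperFormal.mem_edgesAt.1 hf.1).2.1, hfe⟩

theorem IsDiskOrSphere.eq_or_eq_or_eq_of_isFreeEdge {e₁ e₂ e₃ : Finset V} (hT : IsDiskOrSphere T)
    (h₁ : IsFreeEdge T e₁) (h₂ : IsFreeEdge T e₂) (h₃ : IsFreeEdge T e₃)
    (hx₁ : x ∈ e₁) (hx₂ : x ∈ e₂) (hx₃ : x ∈ e₃) : e₁ = e₂ ∨ e₁ = e₃ ∨ e₂ = e₃ := by
  by_contra! hne
  have hthree : 2 < ((edgesAt T x).filter (IsFreeEdge T)).card := Finset.two_lt_card.2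
    ⟨e₁, Finset.mem_filter.2 ⟨h₁.mem_edgesAt hx₁, h₁⟩, e₂, Finset.mem_filter.2
      ⟨h₂.mem_edgesAt hx₂, h₂⟩, e₃, Finset.mem_filter.2 ⟨h₃.mem_edgesAt hx₃, h₃⟩, hne⟩
  have hcount := hT.handshake x
  have hle := (hT.starConnected {x} (by simp)).card_edgesAt_le hT.card_eq_three
  omega

theorem IsRelPrimitive.eq_of_forall_edge_eq_zero {φ : Finset V → ZMod 2} {g : V → ZMod 2}
    (hg : IsRelPrimitive T φ g) (ht : t ∈ T) (hφ : ∀ e ⊆ t, e.card = 2 → φ e = 0)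
    (hx : x ∈ t) (hy : y ∈ t) : g x = g y := by
  by_cases hxy : x = y
  · rw [hxy]
  have hsub : {x, y} ⊆ t := by simp [Finset.insert_subset_iff, hx, hy]
  have hcard := Finset.card_pair hxy
  refine (sum_eq_zero_iff_forall_eq hcard g).1 ?_ x (by simp) y (by simp)
  rw [← hg.eq_sum t ht _ hcard hsub, hφ _ hsub hcard]

end FreeEdges

section Removal

variable [DecidableEq V] {T : Finset (Finset V)} {σ s₁ s₂ t : Finset V} {c : V}
  {p : Finset V → Prop}

/-- The fan of triangles satisfying `p` that starts at the side of `t` shared with `s₁` and turns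
around `c` must end in a boundary edge. -/
theorem IsPseudosurface.exists_isFreeEdge_of_separated (hT : IsPseudosurface T) (ht : t ∈ T)
    (hp : EdgeInvariant (T.erase t) {c} p) (hs₁ : s₁ ∈ T.erase t) (hs₂ : s₂ ∈ T.erase t)
    (h₁ : EdgeAdj {c} t s₁) (h₂ : EdgeAdj {c} t s₂) (hp₁ : p s₁) (hp₂ : ¬ p s₂) :
    ∃ q ∈ T.erase t, p q ∧ ∃ e, IsFreeEdge T e ∧ c ∈ e ∧ e ⊆ q := by
  obtain ⟨e₁, he₁, hc₁, he₁t, he₁s⟩ := h₁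
  obtain ⟨e₂, he₂, hc₂, he₂t, he₂s⟩ := h₂
  have hsub : (T.erase t).filter p ⊆ T :=
    (Finset.filter_subset _ _).trans (Finset.erase_subset _ _)
  have hne : e₁ ≠ e₂ := by
    rintro rfl
    exact hp₂ (hp s₁ hs₁ s₂ hs₂ ⟨e₁, he₁, hc₁, he₁s, he₂s⟩ hp₁)
  have hunique : ∀ e : Finset V, e.card = 2 → e ⊆ t → ∀ r ∈ T.erase t, ∀ s ∈ T.erase t, e ⊆ r →
      e ⊆ s → r = s := fun e he het r hr s hs her hes ↦
    hT.eq_of_ne e he r (Finset.mem_of_mem_erase hr) s (Finset.mem_of_mem_erase hs) t ht her hes het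
      (Finset.ne_of_mem_erase hr) (Finset.ne_of_mem_erase hs)
  have hfree : IsFreeEdge ((T.erase t).filter p) e₁ :=
    ⟨he₁, s₁, ⟨Finset.mem_filter.2 ⟨hs₁, hp₁⟩, he₁s⟩, fun r hr ↦
      hunique e₁ he₁ he₁t r (Finset.mem_of_mem_filter r hr.1) s₁ hs₁ hr.2 he₁s⟩
  rw [Finset.singleton_subset_iff] at hc₁ hc₂
  obtain ⟨f, hf, hcf, hfe⟩ := (hT.subset hsub).exists_isFreeEdge_ne hfree hc₁
  obtain ⟨q, hq, hfq⟩ := hf.2.exists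
  obtain ⟨hqT, hpq⟩ := Finset.mem_filter.1 hq
  have hft : ¬ f ⊆ t := by
    intro hft
    rcases eq_or_eq_of_mem_edges (c := c) (e := f) (hT.card_eq_three t ht)
      (by simp [he₁, he₁t, hc₁]) (by simp [he₂, he₂t, hc₂]) (by simp [hf.1, hft, hcf])
      hne with rfl | rfl
    · exact hfe rfl
    · exact hp₂ (hunique f he₂ he₂t q hqT s₂ hs₂ hfq he₂s ▸ hpq)
  refine ⟨q, hqT, hpq, f, ⟨hf.1, q, ⟨Finset.mem_of_mem_erase hqT, hfq⟩, fun s hs ↦ ?_⟩, hcf, hfq⟩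
  have hsT : s ∈ T.erase t := Finset.mem_erase.2 ⟨fun h ↦ hft (h ▸ hs.2), hs.1⟩
  have hps := hp q hqT s hsT ⟨f, hf.1, by simpa using hcf, hfq, hs.2⟩ hpq
  exact hf.eq (Finset.mem_filter.2 ⟨hsT, hps⟩) hq hs.2 hfq

/-- Both sides of the triangle `t` at its vertex `c` lie in further triangles of `T`. -/
def IsSharedCorner (T : Finset (Finset V)) (t : Finset V) (c : V) : Prop :=
  c ∈ t ∧ ∀ e ⊆ t, e.card = 2 → c ∈ e → ∃ s ∈ T.erase t, e ⊆ s

/-- The triangle `t` of `T` can be removed without destroying the property of being a disk or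
sphere: it meets the remaining triangles in an arc, or in its whole boundary if `T` is a sphere. -/
structure IsRemovable (T : Finset (Finset V)) (t : Finset V) : Prop where
  mem : t ∈ T
  exists_edgeAdj : ∃ s ∈ T.erase t, EdgeAdj ∅ t s
  notMem_of_isSharedCorner : ∀ c, IsSharedCorner T t c → ∀ f, IsFreeEdge T f → c ∉ f
  free_or_closed : (∃ e, IsFreeEdge T e ∧ e ⊆ t) ∨ ∀ e, ¬ IsFreeEdge T e

theorem IsPseudosurface.isFreeEdge_erase (hT : IsPseudosurface T) (ht : t ∈ T) {e s : Finset V}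
    (he : e.card = 2) (het : e ⊆ t) (hs : s ∈ T.erase t) (hes : e ⊆ s) :
    IsFreeEdge (T.erase t) e :=
  ⟨he, s, ⟨hs, hes⟩, fun r hr ↦ hT.eq_of_ne e he r (Finset.mem_of_mem_erase hr.1) s
    (Finset.mem_of_mem_erase hs) t ht hr.2 hes het (Finset.ne_of_mem_erase hr.1)
    (Finset.ne_of_mem_erase hs)⟩

theorem isFreeEdge_erase_iff {e : Finset V} (het : ¬ e ⊆ t) :
    IsFreeEdge (T.erase t) e ↔ IsFreeEdge T e := by
  have hmem : ∀ s, s ∈ T.erase t ∧ e ⊆ s ↔ s ∈ T ∧ e ⊆ s := fun s ↦ by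
    rw [Finset.mem_erase]
    exact ⟨fun h ↦ ⟨h.1.2, h.2⟩, fun h ↦ ⟨⟨fun hst ↦ het (hst ▸ h.2), h.1⟩, h.2⟩⟩
  simp only [IsFreeEdge, hmem]

theorem IsRemovable.of_edgeAdj_corner (ht : IsRemovable T t) (hT : IsPseudosurface T)
    (hp : EdgeInvariant (T.erase t) {c} p) (hs₁ : s₁ ∈ T.erase t) (hs₂ : s₂ ∈ T.erase t)
    (h₁ : EdgeAdj {c} t s₁) (h₂ : EdgeAdj {c} t s₂) (hp₁ : p s₁) : p s₂ := by
  by_contra hp₂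
  obtain ⟨-, -, -, f, hf, hcf, -⟩ :=
    hT.exists_isFreeEdge_of_separated ht.mem hp hs₁ hs₂ h₁ h₂ hp₁ hp₂
  obtain ⟨e₁, he₁, hc₁, he₁t, he₁s⟩ := h₁
  obtain ⟨e₂, he₂, hc₂, he₂t, he₂s⟩ := h₂
  have hne : e₁ ≠ e₂ := by
    rintro rfl
    exact hp₂ (hp s₁ hs₁ s₂ hs₂ ⟨e₁, he₁, hc₁, he₁s, he₂s⟩ hp₁)
  rw [Finset.singleton_subset_iff] at hc₁ hc₂
  refine ht.notMem_of_isSharedCorner c ⟨he₁t hc₁, fun e het he hce ↦ ?_⟩ f hf hcf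
  rcases eq_or_eq_of_mem_edges (c := c) (e := e) (hT.card_eq_three t ht.mem)
    (by simp [he₁, he₁t, hc₁]) (by simp [he₂, he₂t, hc₂]) (by simp [he, het, hce])
    hne with rfl | rfl
  exacts [⟨s₁, hs₁, he₁s⟩, ⟨s₂, hs₂, he₂s⟩]

theorem IsRemovable.of_edgeAdj (ht : IsRemovable T t) (hT : IsPseudosurface T) (hσ : σ.card ≤ 1)
    (hp : EdgeInvariant (T.erase t) σ p) (hs₁ : s₁ ∈ T.erase t) (hs₂ : s₂ ∈ T.erase t)
    (h₁ : EdgeAdj σ t s₁) (h₂ : EdgeAdj σ t s₂) (hp₁ : p s₁) : p s₂ := by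
  obtain ⟨e₁, he₁, hσ₁, he₁t, he₁s⟩ := h₁
  obtain ⟨e₂, he₂, hσ₂, he₂t, he₂s⟩ := h₂
  obtain ⟨c, hσc, hc₁, hc₂⟩ : ∃ c, σ ⊆ {c} ∧ c ∈ e₁ ∧ c ∈ e₂ := by
    rcases σ.eq_empty_or_nonempty with rfl | ⟨x, hx⟩
    · obtain ⟨c, hc₁, hc₂⟩ :=
        exists_mem_inter_of_edges (hT.card_eq_three t ht.mem) he₁ he₂ he₁t he₂t
      exact ⟨c, Finset.empty_subset _, hc₁, hc₂⟩
    · exact ⟨x, fun y hy ↦ Finset.mem_singleton.2 (Finset.card_le_one.1 hσ y hy x hx),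
        hσ₁ hx, hσ₂ hx⟩
  exact ht.of_edgeAdj_corner hT (hp.mono hσc) hs₁ hs₂
    ⟨e₁, he₁, by simpa using hc₁, he₁t, he₁s⟩ ⟨e₂, he₂, by simpa using hc₂, he₂t, he₂s⟩ hp₁

theorem IsRemovable.starConnected_erase (ht : IsRemovable T t) (hT : IsPseudosurface T)
    (hσ : σ.card ≤ 1) (hconn : StarConnected T σ) : StarConnected (T.erase t) σ := by
  intro p hp s hs s' hs' hσs hσs' hps
  let extended : Finset V → Prop := fun r ↦
    if r = t then ∃ q ∈ T.erase t, EdgeAdj σ t q ∧ p q else p r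
  have hne : ∀ {r}, r ∈ T.erase t → (extended r ↔ p r) := fun hr ↦ by
    simp only [extended, if_neg (Finset.ne_of_mem_erase hr)]
  have hinv : EdgeInvariant T σ extended := by
    intro r hr q hq hrq hpr
    by_cases hrt : r = t <;> by_cases hqt : q = t
    · rwa [hqt, ← hrt]
    · subst hrt
      have hq' := Finset.mem_erase.2 ⟨hqt, hq⟩
      obtain ⟨u, hu, hru, hpu⟩ : ∃ u ∈ T.erase r, EdgeAdj σ r u ∧ p u := by
        simpa only [extended, if_true] using hpr
      exact (hne hq').2 (ht.of_edgeAdj hT hσ hp hu hq' hru hrq hpu)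
    · subst hqt
      have hr' := Finset.mem_erase.2 ⟨hrt, hr⟩
      simp only [extended, if_true]
      exact ⟨r, hr', hrq.symm, (hne hr').1 hpr⟩
    · have hr' := Finset.mem_erase.2 ⟨hrt, hr⟩
      have hq' := Finset.mem_erase.2 ⟨hqt, hq⟩
      exact (hne hq').2 (hp r hr' q hq' hrq ((hne hr').1 hpr))
  exact (hne hs').1 (hconn extended hinv s (Finset.mem_of_mem_erase hs) s'
    (Finset.mem_of_mem_erase hs') hσs hσs' ((hne hs).2 hps))

theorem IsRemovable.exists_isRelPrimitive_eq_zero (ht : IsRemovable T t) (hT : IsDiskOrSphere T)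
    {φ : Finset V → ZMod 2} (hφ : IsRelCocycle T φ) (hφt : ∀ e ⊆ t, e.card = 2 → φ e = 0) :
    ∃ g, IsRelPrimitive T φ g ∧ ∀ x ∈ t, g x = 0 := by
  obtain ⟨g, hg⟩ := hT.exists_primitive φ hφ
  rcases ht.free_or_closed with ⟨f, hf, hft⟩ | hclosed
  · obtain ⟨y, hy⟩ := Finset.card_pos.1 (hf.1 ▸ Nat.two_pos)
    exact ⟨g, hg, fun x hx ↦
      (hg.eq_of_forall_edge_eq_zero ht.mem hφt hx (hft hy)).trans (hg.eq_zero f hf y hy)⟩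
  · obtain ⟨y, hy⟩ := Finset.card_pos.1 (by simp [hT.card_eq_three t ht.mem] : 0 < t.card)
    refine ⟨_, hg.add_const hclosed (g y), fun x hx ↦ ?_⟩
    rw [hg.eq_of_forall_edge_eq_zero ht.mem hφt hx hy, CharTwo.add_self_eq_zero]

theorem IsRelCocycle.extend_erase {φ : Finset V → ZMod 2} (hφ : IsRelCocycle (T.erase t) φ)
    (hT : IsPseudosurface T) (ht : t ∈ T) : IsRelCocycle T (fun e ↦ if e ⊆ t then 0 else φ e) where
  sum_eq_zero s hs := by
    by_cases hst : s = t
    · exact Finset.sum_eq_zero fun e he ↦ if_pos (hst ▸ (Finset.mem_powersetCard.1 he).1)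
    · have hs' := Finset.mem_erase.2 ⟨hst, hs⟩
      refine (Finset.sum_congr rfl fun e he ↦ ?_).trans (hφ.sum_eq_zero s hs')
      obtain ⟨hes, hcard⟩ := Finset.mem_powersetCard.1 he
      split_ifs with het
      · exact (hφ.eq_zero_of_isFreeEdge e (hT.isFreeEdge_erase ht hcard het hs' hes)).symm
      · rfl
  eq_zero_of_isFreeEdge e he := by
    split_ifs with het
    · rfl
    · exact hφ.eq_zero_of_isFreeEdge e ((isFreeEdge_erase_iff het).2 he)

theorem IsRemovable.exists_primitive_erase (ht : IsRemovable T t) (hT : IsDiskOrSphere T)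
    {φ : Finset V → ZMod 2} (hφ : IsRelCocycle (T.erase t) φ) :
    ∃ g, IsRelPrimitive (T.erase t) φ g := by
  obtain ⟨g, hg, hgt⟩ := ht.exists_isRelPrimitive_eq_zero hT
    (hφ.extend_erase hT.toIsPseudosurface ht.mem) fun e het _ ↦ if_pos het
  refine ⟨g, fun s hs e he hes ↦ ?_, fun e he x hx ↦ ?_⟩
  · rw [← hg.eq_sum s (Finset.mem_of_mem_erase hs) e he hes]
    split_ifs with het
    · exact hφ.eq_zero_of_isFreeEdge e (hT.isFreeEdge_erase ht.mem he het hs hes)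
    · rfl
  · by_cases het : e ⊆ t
    · exact hgt x (het hx)
    · exact hg.eq_zero e ((isFreeEdge_erase_iff het).1 he) x hx

theorem IsDiskOrSphere.erase (hT : IsDiskOrSphere T) (ht : IsRemovable T t) :
    IsDiskOrSphere (T.erase t) where
  toIsPseudosurface := hT.subset (Finset.erase_subset _ _)
  nonempty := ht.exists_edgeAdj.imp fun _ h ↦ h.1
  starConnected σ hσ := ht.starConnected_erase hT.toIsPseudosurface hσ (hT.starConnected σ hσ)
  exists_primitive _ hφ := ht.exists_primitive_erase hT hφ

theorem StarConnected.exists_edgeAdj (hT : StarConnected T σ) (ht : t ∈ T) (hσt : σ ⊆ t)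
    {s : Finset V} (hs : s ∈ T.erase t) (hσs : σ ⊆ s) : ∃ r ∈ T.erase t, EdgeAdj σ t r := by
  by_contra! hnone
  refine Finset.ne_of_mem_erase hs (hT (· = t) ?_ t ht s (Finset.mem_of_mem_erase hs) hσt hσs rfl)
  rintro r - q hq hrq rfl
  by_contra hqr
  exact hnone q (Finset.mem_erase.2 ⟨hqr, hq⟩) hrq

end Removal

section BoundaryConnected

variable {T Y : Finset (Finset V)} {e f : Finset V} {x y : V}

/-- If `g` is constant on boundary edges, its coboundary is a relative cocycle; subtracting a
primitive that vanishes on the boundary leaves a constant. -/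
theorem IsDiskOrSphere.eq_of_forall_isFreeEdge (hT : IsDiskOrSphere T) {g : V → ZMod 2}
    (hg : ∀ e, IsFreeEdge T e → ∀ x ∈ e, ∀ y ∈ e, g x = g y) (he : IsFreeEdge T e)
    (hf : IsFreeEdge T f) (hx : x ∈ e) (hy : y ∈ f) : g x = g y := by
  obtain ⟨h, hh⟩ := hT.exists_primitive (fun e ↦ ∑ x ∈ e, g x)
    ⟨fun t ht ↦ sum_powersetCard_two_coboundary (hT.card_eq_three t ht) g,
      fun e he ↦ (sum_eq_zero_iff_forall_eq he.1 g).2 (hg e he)⟩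
  have hconst : ∀ t ∈ T, ∀ x ∈ t, ∀ y ∈ t, g x + h x = g y + h y := by
    intro t ht x hx y hy
    by_cases hxy : x = y
    · rw [hxy]
    refine (sum_eq_zero_iff_forall_eq (Finset.card_pair hxy) fun z ↦ g z + h z).1 ?_ x (by simp) y
      (by simp)
    rw [Finset.sum_add_distrib, ← hh.eq_sum t ht {x, y} (Finset.card_pair hxy)
      (by simp [Finset.insert_subset_iff, hx, hy]), CharTwo.add_self_eq_zero]
  obtain ⟨s, hs, hes⟩ := he.2.exists
  obtain ⟨t, ht, hft⟩ := hf.2.exists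
  have := hT.eq_of_forall_triangle hconst hs ht (hes hx) (hft hy)
  rwa [hh.eq_zero e he x hx, hh.eq_zero f hf y hy, add_zero, add_zero] at this

theorem IsDiskOrSphere.isFreeEdge_of_subset (hT : IsPseudosurface T) (hY : IsDiskOrSphere Y)
    (hle : ∀ e, IsFreeEdge T e → IsFreeEdge Y e) (hf : IsFreeEdge T f) (he : IsFreeEdge Y e) :
    IsFreeEdge T e := by
  have hvertex : ∀ {e x}, IsFreeEdge Y e → x ∈ e → (∃ f, IsFreeEdge T f ∧ x ∈ f) →
      IsFreeEdge T e := by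
    rintro e x he hxe ⟨f, hf, hxf⟩
    obtain ⟨f', hf', hxf', hne⟩ := hT.exists_isFreeEdge_ne hf hxf
    rcases hY.eq_or_eq_or_eq_of_isFreeEdge he (hle f hf) (hle f' hf') hxe hxf hxf'
      with rfl | rfl | rfl
    exacts [hf, hf', absurd rfl hne]
  let onBoundary : V → ZMod 2 := fun x ↦ if ∃ f, IsFreeEdge T f ∧ x ∈ f then 1 else 0
  have hconst : ∀ e, IsFreeEdge Y e → ∀ x ∈ e, ∀ y ∈ e, onBoundary x = onBoundary y := by
    intro e he x hx y hy
    have : (∃ f, IsFreeEdge T f ∧ x ∈ f) ↔ ∃ f, IsFreeEdge T f ∧ y ∈ f :=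
      ⟨fun h ↦ ⟨e, hvertex he hx h, hy⟩, fun h ↦ ⟨e, hvertex he hy h, hx⟩⟩
    simp only [onBoundary, this]
  obtain ⟨x, hx⟩ := Finset.card_pos.1 (he.1 ▸ Nat.two_pos)
  obtain ⟨y, hy⟩ := Finset.card_pos.1 (hf.1 ▸ Nat.two_pos)
  have hxy := hY.eq_of_forall_isFreeEdge hconst he (hle f hf) hx hy
  refine hvertex he hx ?_
  by_contra hxT
  simp only [onBoundary, if_neg hxT, if_pos (⟨f, hf, hy⟩ : ∃ f, IsFreeEdge T f ∧ y ∈ f)] at hxy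
  exact zero_ne_one hxy

theorem IsDiskOrSphere.exists_isFreeEdge_notMem (hT : IsDiskOrSphere T) (hY : IsDiskOrSphere Y)
    (hYT : Y ⊂ T) (hf : IsFreeEdge T f) : ∃ t ∈ T, t ∉ Y ∧ ∃ e, IsFreeEdge T e ∧ e ⊆ t := by
  by_contra! hall
  have hle : ∀ e, IsFreeEdge T e → IsFreeEdge Y e := by
    intro e he
    obtain ⟨t, ht, het⟩ := he.2.exists
    exact he.of_subset hYT.1 (by_contra fun h ↦ hall t ht h e he het) het
  have hinv : EdgeInvariant T ∅ (· ∈ Y) := by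
    rintro r hr s hs ⟨e, he, -, her, hes⟩ hrY
    by_contra hsY
    have hfree : IsFreeEdge Y e := ⟨he, r, ⟨hrY, her⟩, fun q hq ↦ hT.eq_of_ne e he q (hYT.1 hq.1)
      r hr s hs hq.2 her hes (fun h ↦ hsY (h ▸ hq.1)) (fun h ↦ hsY (h ▸ hrY))⟩
    exact hsY ((hY.isFreeEdge_of_subset hT.toIsPseudosurface hle hf hfree).eq hr hs her hes ▸ hrY)
  obtain ⟨y, hy⟩ := hY.nonempty
  exact hYT.2 fun t ht ↦ hT.of_edgeInvariant hinv (hYT.1 hy) ht hy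

end BoundaryConnected

section SeparatingCorner

variable [DecidableEq V] {T : Finset (Finset V)} {e r s t : Finset V} {c : V}
  {p : Finset V → Prop}

theorem IsPseudosurface.sum_single (hT : IsPseudosurface T) (he : e.card = 2) (hr : r ∈ T)
    (hs : s ∈ T) (her : e ⊆ r) (hes : e ⊆ s) (hrs : r ≠ s) {q : Finset V} (hq : q ∈ T) :
    ∑ e' ∈ q.powersetCard 2, (Pi.single e 1 : Finset V → ZMod 2) e' =
      (Pi.single r 1 : Finset V → ZMod 2) q + (Pi.single s 1 : Finset V → ZMod 2) q := by
  simp only [Pi.single_apply, Finset.sum_ite_eq', Finset.mem_powersetCard, he, and_true]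
  by_cases hqr : q = r
  · simp [hqr, her, hrs]
  by_cases hqs : q = s
  · simp [hqs, hes, hrs.symm]
  have heq : ¬ e ⊆ q := fun heq ↦
    hqr (hT.eq_of_ne e he q hq r hr s hs heq her hes hqs hrs)
  simp [hqr, hqs, heq]

/-- The cochain `ψ` is (the set of edges crossed by) a mod 2 chain of the dual graph of `T.erase t`
with endpoints `r` and `s`. -/
structure IsDualChain (T : Finset (Finset V)) (t r s : Finset V) (ψ : Finset V → ZMod 2) :
    Prop where
  sum_eq : ∀ q ∈ T, ∑ e ∈ q.powersetCard 2, ψ e =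
    (Pi.single r 1 : Finset V → ZMod 2) q + (Pi.single s 1 : Finset V → ZMod 2) q
  not_isFreeEdge : ∀ e, ψ e ≠ 0 → ¬ IsFreeEdge T e
  not_subset : ∀ e, ψ e ≠ 0 → ¬ e ⊆ t

theorem IsPseudosurface.edgeInvariant_exists_isDualChain (hT : IsPseudosurface T) (ht : t ∈ T)
    (r : Finset V) : EdgeInvariant (T.erase t) ∅ (fun s ↦ ∃ ψ, IsDualChain T t r s ψ) := by
  rintro s hs s' hs' ⟨e, he, -, hes, hes'⟩ ⟨ψ, hψ⟩
  obtain ⟨hst, hsT⟩ := Finset.mem_erase.1 hs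
  obtain ⟨hst', hsT'⟩ := Finset.mem_erase.1 hs'
  by_cases hss' : s = s'
  · exact ⟨ψ, hss' ▸ hψ⟩
  have hsupport : ∀ e', (ψ + (Pi.single e 1 : Finset V → ZMod 2)) e' ≠ 0 → ψ e' ≠ 0 ∨ e' = e := by
    intro e' hne
    by_cases hee : e' = e
    · exact Or.inr hee
    · exact Or.inl (by simpa [hee] using hne)
  refine ⟨ψ + Pi.single e 1, fun q hq ↦ ?_, fun e' hne ↦ ?_, fun e' hne ↦ ?_⟩
  · simp only [Pi.add_apply, Finset.sum_add_distrib, hψ.sum_eq q hq,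
      hT.sum_single he hsT hsT' hes hes' hss' hq]
    rw [add_assoc, CharTwo.add_cancel_left]
  · rcases hsupport e' hne with h | rfl
    · exact hψ.not_isFreeEdge e' h
    · exact fun hfree ↦ hss' (hfree.eq hsT hsT' hes hes')
  · rcases hsupport e' hne with h | rfl
    · exact hψ.not_subset e' h
    · exact fun het ↦ hss' (hT.eq_of_ne e' he s hsT s' hsT' t ht hes hes' het hst hst')

theorem isDualChain_zero (T : Finset (Finset V)) (t r : Finset V) : IsDualChain T t r r 0 where
  sum_eq q _ := by simp [CharTwo.add_self_eq_zero]
  not_isFreeEdge e h := absurd rfl h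
  not_subset e h := absurd rfl h

/-- A dual chain in `T.erase t` from `s₁` to `s₂` would close up through `t` to a loop separating
the boundary at `c` from the boundary at the free side `e` of `t`. -/
theorem IsDiskOrSphere.not_isDualChain (hT : IsDiskOrSphere T) (ht : t ∈ T) (he : IsFreeEdge T e)
    (het : e ⊆ t) {f e₁ e₂ s₁ s₂ : Finset V} (hf : IsFreeEdge T f) (hcf : c ∈ f)
    (hs₁ : s₁ ∈ T.erase t) (hs₂ : s₂ ∈ T.erase t) (he₁ : e₁.card = 2) (he₂ : e₂.card = 2)
    (hc₁ : c ∈ e₁) (he₁t : e₁ ⊆ t) (he₂t : e₂ ⊆ t) (he₁s : e₁ ⊆ s₁) (he₂s : e₂ ⊆ s₂)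
    (hne : e₁ ≠ e₂) (hce : c ∉ e) (ψ : Finset V → ZMod 2) : ¬ IsDualChain T t s₁ s₂ ψ := by
  intro hψ
  obtain ⟨hs₁t, hs₁T⟩ := Finset.mem_erase.1 hs₁
  obtain ⟨hs₂t, hs₂T⟩ := Finset.mem_erase.1 hs₂
  let φ : Finset V → ZMod 2 := ψ + (Pi.single e₁ 1 + Pi.single e₂ 1)
  have hφ : IsRelCocycle T φ := by
    refine ⟨fun q hq ↦ ?_, fun e' he' ↦ ?_⟩
    · simp only [φ, Pi.add_apply, Finset.sum_add_distrib, hψ.sum_eq q hq,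
        hT.sum_single he₁ hs₁T ht he₁s he₁t hs₁t hq, hT.sum_single he₂ hs₂T ht he₂s he₂t hs₂t hq]
      linear_combination ((Pi.single s₁ 1 : Finset V → ZMod 2) q +
        (Pi.single s₂ 1 : Finset V → ZMod 2) q + (Pi.single t 1 : Finset V → ZMod 2) q) *
        (CharTwo.two_eq_zero : (2 : ZMod 2) = 0)
    · have hne₁ : e' ≠ e₁ := by rintro rfl; exact hs₁t (he'.eq hs₁T ht he₁s he₁t)
      have hne₂ : e' ≠ e₂ := by rintro rfl; exact hs₂t (he'.eq hs₂T ht he₂s he₂t)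
      have hψe : ψ e' = 0 := by_contra fun h ↦ hψ.not_isFreeEdge e' h he'
      simp [φ, hne₁, hne₂, hψe]
  obtain ⟨g, hg⟩ := hT.exists_primitive φ hφ
  have hgt : ∀ x ∈ t, g x = 0 := by
    intro x hx
    rw [← insert_eq_of_edge (hT.card_eq_three t ht) he.1 het (he₁t hc₁) hce,
      Finset.mem_insert] at hx
    rcases hx with rfl | hx
    exacts [hg.eq_zero f hf _ hcf, hg.eq_zero e he x hx]
  have hφ₁ : φ e₁ = 0 := by
    rw [hg.eq_sum t ht e₁ he₁ he₁t]
    exact Finset.sum_eq_zero fun x hx ↦ hgt x (he₁t hx)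
  have hψ₁ : ψ e₁ = 0 := by_contra fun h ↦ hψ.not_subset e₁ h he₁t
  simp [φ, hψ₁, hne] at hφ₁

/-- At some vertex of `t`, the set of triangles `p` contains one of the two neighbours of `t` but
not the other, although it is closed under adjacency away from `t`. -/
def SeparatesCorner (T : Finset (Finset V)) (t : Finset V) (p : Finset V → Prop) : Prop :=
  EdgeInvariant (T.erase t) ∅ p ∧ ∃ c, ∃ s₁ ∈ T.erase t, ∃ s₂ ∈ T.erase t,
    EdgeAdj {c} t s₁ ∧ EdgeAdj {c} t s₂ ∧ p s₁ ∧ ¬ p s₂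

theorem SeparatesCorner.not (h : SeparatesCorner T t p) : SeparatesCorner T t (fun r ↦ ¬ p r) :=
  let ⟨hp, c, s₁, hs₁, s₂, hs₂, h₁, h₂, hp₁, hp₂⟩ := h
  ⟨hp.not, c, s₂, hs₂, s₁, hs₁, h₂, h₁, hp₂, not_not.2 hp₁⟩

theorem IsDiskOrSphere.exists_separatesCorner (hT : IsDiskOrSphere T) (ht : t ∈ T)
    (he : IsFreeEdge T e) (het : e ⊆ t) (hc : IsSharedCorner T t c) {f : Finset V}
    (hf : IsFreeEdge T f) (hcf : c ∈ f) : ∃ p, SeparatesCorner T t p := by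
  obtain ⟨e₁, e₂, hne, hsides⟩ := Finset.card_eq_two.1
    (card_filter_mem_powersetCard_two (hT.card_eq_three t ht) hc.1)
  have hside : ∀ {e'}, e' = e₁ ∨ e' = e₂ → e' ⊆ t ∧ e'.card = 2 ∧ c ∈ e' := by
    intro e' he'
    have : e' ∈ (t.powersetCard 2).filter (c ∈ ·) := by simpa [hsides] using he'
    simpa only [Finset.mem_filter, Finset.mem_powersetCard, and_assoc] using this
  obtain ⟨he₁t, he₁, hc₁⟩ := hside (Or.inl rfl)
  obtain ⟨he₂t, he₂, hc₂⟩ := hside (Or.inr rfl)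
  obtain ⟨s₁, hs₁, he₁s⟩ := hc.2 e₁ he₁t he₁ hc₁
  obtain ⟨s₂, hs₂, he₂s⟩ := hc.2 e₂ he₂t he₂ hc₂
  have hce : c ∉ e := by
    intro hce
    obtain ⟨s, hs, hes⟩ := hc.2 e het he.1 hce
    exact Finset.ne_of_mem_erase hs (he.eq (Finset.mem_of_mem_erase hs) ht hes het)
  refine ⟨_, hT.edgeInvariant_exists_isDualChain ht s₁, c, s₁, hs₁, s₂, hs₂,
    ⟨e₁, he₁, by simpa using hc₁, he₁t, he₁s⟩, ⟨e₂, he₂, by simpa using hc₂, he₂t, he₂s⟩,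
    ⟨0, isDualChain_zero T t s₁⟩, fun ⟨ψ, hψ⟩ ↦ ?_⟩
  exact hT.not_isDualChain ht he het hf hcf hs₁ hs₂ he₁ he₂ hc₁ he₁t he₂t he₁s he₂s hne hce ψ hψ

end SeparatingCorner

section Shelling

variable [DecidableEq V] {T Y : Finset (Finset V)} {e q r s t : Finset V} {p p' : Finset V → Prop}

theorem IsDiskOrSphere.isRemovable_or_separatesCorner (hT : IsDiskOrSphere T) (ht : t ∈ T)
    (hs : s ∈ T.erase t) (he : IsFreeEdge T e) (het : e ⊆ t) :
    IsRemovable T t ∨ ∃ p, SeparatesCorner T t p := by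
  refine or_iff_not_imp_right.2 fun hsep ↦ ⟨ht, ?_, fun c hc f hf hcf ↦ ?_, Or.inl ⟨e, he, het⟩⟩
  · exact (hT.starConnected ∅ (by simp)).exists_edgeAdj ht (Finset.empty_subset _) hs
      (Finset.empty_subset _)
  · exact hsep (hT.exists_separatesCorner ht he het hc hf hcf)

/-- If `p` and `p'` are invariant away from `t` and `q` respectively, then `p' ∖ p` is invariant
everywhere once it avoids `t` and `q`. -/
theorem IsDiskOrSphere.of_nested_separation (hT : IsDiskOrSphere T) (ht : t ∈ T)
    (hq : q ∈ T.erase t) (hp : EdgeInvariant (T.erase t) ∅ p) (hp' : EdgeInvariant (T.erase q) ∅ p')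
    (hpq : p q) (hp't : ¬ p' t) (hr : r ∈ T.erase q) (hp'r : p' r) : r ∈ T.erase t ∧ p r := by
  obtain ⟨hqt, hqT⟩ := Finset.mem_erase.1 hq
  have hrt : r ≠ t := by rintro rfl; exact hp't hp'r
  refine ⟨Finset.mem_erase.2 ⟨hrt, Finset.mem_of_mem_erase hr⟩, by_contra fun hpr ↦ ?_⟩
  have hinv : EdgeInvariant T ∅ (fun s ↦ s ∈ T.erase t ∧ s ∈ T.erase q ∧ p' s ∧ ¬ p s) := by
    rintro s - s' hs' hadj ⟨hst, hsq, hp's, hps⟩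
    have hs't : s' ≠ t := by
      rintro rfl
      exact hp't (hp' s hsq s' (Finset.mem_erase.2 ⟨hqt.symm, hs'⟩) hadj hp's)
    have hs't' := Finset.mem_erase.2 ⟨hs't, hs'⟩
    have hps' : ¬ p s' := hp.not s hst s' hs't' hadj hps
    have hs'_ne : s' ≠ q := by rintro rfl; exact hps' hpq
    have hs'q := Finset.mem_erase.2 ⟨hs'_ne, hs'⟩
    exact ⟨hs't', hs'q, hp' s hsq s' hs'q hadj hp's, hps'⟩
  have hrT := Finset.mem_of_mem_erase hr
  exact Finset.notMem_erase t T (hT.of_edgeInvariant hinv hrT ht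
    ⟨Finset.mem_erase.2 ⟨hrt, hrT⟩, hr, hp'r, hpr⟩).1

/-- Induction on the number of triangles cut off by `p`: the fan around the separated corner ends in
a triangle `q` with a free side, which is removable or cuts off fewer triangles. -/
theorem IsDiskOrSphere.exists_isRemovable_of_separatesCorner (hT : IsDiskOrSphere T) (hYT : Y ⊆ T)
    (ht : t ∈ T) (htY : t ∉ Y) (hsep : SeparatesCorner T t p) (hpY : ∀ y ∈ Y, ¬ p y) :
    ∃ q, q ∉ Y ∧ IsRemovable T q := by
  induction hn : ((T.erase t).filter p).card using Nat.strong_induction_on generalizing t p with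
  | _ n ih =>
    obtain ⟨hp, c, s₁, hs₁, s₂, hs₂, h₁, h₂, hp₁, hp₂⟩ := hsep
    obtain ⟨q, hq, hpq, e, he, -, heq⟩ := hT.exists_isFreeEdge_of_separated ht
      (hp.mono (Finset.empty_subset _)) hs₁ hs₂ h₁ h₂ hp₁ hp₂
    obtain ⟨hqt, hqT⟩ := Finset.mem_erase.1 hq
    have hqY : q ∉ Y := fun h ↦ hpY q h hpq
    rcases hT.isRemovable_or_separatesCorner hqT (Finset.mem_erase.2 ⟨hqt.symm, ht⟩) he heq
      with hrem | ⟨p₀, hp₀⟩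
    · exact ⟨q, hqY, hrem⟩
    obtain ⟨p', hp', hp't⟩ : ∃ p', SeparatesCorner T q p' ∧ ¬ p' t := by
      by_cases h : p₀ t
      exacts [⟨_, hp₀.not, not_not.2 h⟩, ⟨p₀, hp₀, h⟩]
    have hsub : ∀ {r}, r ∈ T.erase q → p' r → r ∈ T.erase t ∧ p r :=
      hT.of_nested_separation ht hq hp hp'.1 hpq hp't
    refine ih ((T.erase q).filter p').card ?_ hqT hqY hp' (fun y hy hp'y ↦ ?_) rfl
    · refine hn ▸ Finset.card_lt_card ((Finset.ssubset_iff_of_subset fun r hr ↦ ?_).2 ⟨q, ?_, ?_⟩)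
      · obtain ⟨hrq, hp'r⟩ := Finset.mem_filter.1 hr
        exact Finset.mem_filter.2 (hsub hrq hp'r)
      · exact Finset.mem_filter.2 ⟨hq, hpq⟩
      · simp
    · have hyq : y ≠ q := by rintro rfl; exact hqY hy
      exact hpY y hy (hsub (Finset.mem_erase.2 ⟨hyq, hYT hy⟩) hp'y).2

theorem IsDiskOrSphere.exists_isRemovable_of_isFreeEdge (hT : IsDiskOrSphere T)
    (hY : IsDiskOrSphere Y) (hYT : Y ⊂ T) (he : IsFreeEdge T e) :
    ∃ t, t ∉ Y ∧ IsRemovable T t := by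
  obtain ⟨t, ht, htY, f, hf, hft⟩ := hT.exists_isFreeEdge_notMem hY hYT he
  obtain ⟨y₀, hy₀⟩ := hY.nonempty
  have hY_erase : ∀ {y}, y ∈ Y → y ∈ T.erase t := fun {y} hy ↦
    Finset.mem_erase.2 ⟨fun h ↦ htY (h ▸ hy), hYT.1 hy⟩
  rcases hT.isRemovable_or_separatesCorner ht (hY_erase hy₀) hf hft with hrem | ⟨p, hp⟩
  · exact ⟨t, htY, hrem⟩
  have hpY : EdgeInvariant Y ∅ p := fun r hr s hs ↦ hp.1 r (hY_erase hr) s (hY_erase hs)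
  by_cases hp₀ : p y₀
  · exact hT.exists_isRemovable_of_separatesCorner hYT.1 ht htY hp.not fun y hy ↦
      not_not.2 (hY.of_edgeInvariant hpY hy₀ hy hp₀)
  · exact hT.exists_isRemovable_of_separatesCorner hYT.1 ht htY hp fun y hy hpy ↦
      hp₀ (hY.of_edgeInvariant hpY hy hy₀ hpy)

theorem IsDiskOrSphere.exists_isRemovable (hT : IsDiskOrSphere T) (hY : IsDiskOrSphere Y)
    (hYT : Y ⊂ T) : ∃ t, t ∉ Y ∧ IsRemovable T t := by
  by_cases hfree : ∃ e, IsFreeEdge T e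
  · obtain ⟨e, he⟩ := hfree
    exact hT.exists_isRemovable_of_isFreeEdge hY hYT he
  · push Not at hfree
    obtain ⟨t, ht, htY⟩ := Finset.exists_of_ssubset hYT
    obtain ⟨y, hy⟩ := hY.nonempty
    have hyt : y ∈ T.erase t := Finset.mem_erase.2 ⟨fun h ↦ htY (h ▸ hy), hYT.1 hy⟩
    exact ⟨t, htY, ht, (hT.starConnected ∅ (by simp)).exists_edgeAdj ht (Finset.empty_subset _) hyt
      (Finset.empty_subset _), fun c _ f hf ↦ absurd hf (hfree f), Or.inr hfree⟩

theorem IsDiskOrSphere.shelling_induction (hY : IsDiskOrSphere Y)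
    {motive : Finset (Finset V) → Prop} (base : motive Y)
    (step : ∀ R t, R ⊆ T → Y ⊆ R.erase t → IsDiskOrSphere R → t ∈ R → motive (R.erase t) → motive R)
    (hT : IsDiskOrSphere T) (hYT : Y ⊆ T) : motive T := by
  suffices ∀ R, IsDiskOrSphere R → Y ⊆ R → R ⊆ T → motive R from this T hT hYT subset_rfl
  intro R hR hYR hRT
  induction hn : R.card using Nat.strong_induction_on generalizing R with
  | _ n ih =>
    rcases hYR.eq_or_ssubset with rfl | hss
    · exact base
    obtain ⟨t, htY, ht⟩ := hR.exists_isRemovable hY hss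
    have hY_erase : Y ⊆ R.erase t := Finset.subset_erase.2 ⟨hYR, htY⟩
    exact step R t hRT hY_erase hR ht.mem (ih _ (hn ▸ Finset.card_erase_lt_of_mem ht.mem) _
      (hR.erase ht) hY_erase ((Finset.erase_subset t R).trans hRT) rfl)

end Shelling

/-! ### Stars and fans -/

section Star

variable {T : Finset (Finset V)} {e r s t : Finset V} {v x : V}
  {φ : Finset V → ZMod 2}

theorem exists_eq_pair_of_subset_insert [DecidableEq V] (he : e.card = 2) (hv : v ∈ e)
    (het : e ⊆ insert v t) : ∃ x ∈ t, x ≠ v ∧ e = {v, x} := by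
  obtain ⟨x, hx⟩ := Finset.card_eq_one.1 (by rw [Finset.card_erase_of_mem hv, he] :
    (e.erase v).card = 1)
  have hxe : x ∈ e.erase v := by simp [hx]
  exact ⟨x, Finset.subset_insert_iff.1 het hxe, Finset.ne_of_mem_erase hxe,
    by rw [← Finset.insert_erase hv, hx]⟩

theorem sum_powersetCard_two_insert [DecidableEq V] (φ : Finset V → ZMod 2) (he : e.card = 2)
    (hv : v ∉ e) :
    ∑ e' ∈ (insert v e).powersetCard 2, φ e' = φ e + ∑ x ∈ e, φ {v, x} := by
  have hdisj : Disjoint (e.powersetCard 2) ((e.powersetCard 1).image (insert v)) := by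
    rw [Finset.disjoint_left]
    intro e' he' hmem
    obtain ⟨f, -, rfl⟩ := Finset.mem_image.1 hmem
    exact hv ((Finset.mem_powersetCard.1 he').1 (Finset.mem_insert_self v f))
  have hinj : Set.InjOn (insert v) (e.powersetCard 1 : Set (Finset V)) := fun f hf f' hf' h ↦ by
    have hvf := fun h ↦ hv ((Finset.mem_powersetCard.1 hf).1 h)
    have hvf' := fun h ↦ hv ((Finset.mem_powersetCard.1 hf').1 h)
    rw [← Finset.erase_insert hvf, h, Finset.erase_insert hvf']
  have hself : e.powersetCard 2 = {e} := he ▸ Finset.powersetCard_self e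
  rw [Finset.powersetCard_succ_insert hv, Finset.sum_union hdisj, Finset.sum_image hinj,
    Finset.powersetCard_one, Finset.sum_map, hself, Finset.sum_singleton]
  rfl

theorem IsRelCocycle.eq_sum_apex [DecidableEq V] (hφ : IsRelCocycle T φ) (he : e.card = 2)
    (hv : v ∉ e) (ht : insert v e ∈ T) : φ e = ∑ x ∈ e, φ {v, x} := by
  rw [← CharTwo.add_eq_zero, ← sum_powersetCard_two_insert φ he hv]
  exact hφ.sum_eq_zero _ ht

theorem isFreeEdge_of_forall_mem (hcard : ∀ t ∈ T, t.card = 3) (hT : ∀ t ∈ T, v ∈ t)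
    (he : e.card = 2) (hv : v ∉ e) (ht : t ∈ T) (het : e ⊆ t) : IsFreeEdge T e :=
  ⟨he, t, ⟨ht, het⟩, fun s hs ↦ by
    rw [← insert_eq_of_edge (hcard s hs.1) he hs.2 (hT s hs.1) hv,
      insert_eq_of_edge (hcard t ht) he het (hT t ht) hv]⟩

theorem IsRelCocycle.eq_of_forall_mem [DecidableEq V] (hφ : IsRelCocycle T φ)
    (hcard : ∀ t ∈ T, t.card = 3) (hT : ∀ t ∈ T, v ∈ t) (hconn : StarConnected T {v})
    (hs : s ∈ T) (ht : t ∈ T) {y : V} (hx : x ∈ s.erase v) (hy : y ∈ t.erase v) :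
    φ {v, x} = φ {v, y} := by
  have htri : ∀ t ∈ T, ∀ x ∈ t.erase v, ∀ y ∈ t.erase v, φ {v, x} = φ {v, y} := by
    intro t ht
    have he : (t.erase v).card = 2 := by rw [Finset.card_erase_of_mem (hT t ht), hcard t ht]
    have hv := Finset.notMem_erase v t
    have hfree := isFreeEdge_of_forall_mem hcard hT he hv ht (Finset.erase_subset v t)
    rw [← sum_eq_zero_iff_forall_eq he fun x ↦ φ {v, x}, ← hφ.eq_sum_apex he hv
      (by rwa [Finset.insert_erase (hT t ht)])]
    exact hφ.eq_zero_of_isFreeEdge _ hfree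
  refine hconn (fun r ↦ ∀ z ∈ r.erase v, φ {v, x} = φ {v, z}) ?_ s hs t ht
    (by simpa using hT s hs) (by simpa using hT t ht) (htri s hs x hx) y hy
  rintro r - r' hr' ⟨e, he, -, her, her'⟩ hr z hz
  obtain ⟨u, hu, huv⟩ := Finset.exists_mem_ne (by omega : 1 < e.card) v
  exact (hr u (Finset.mem_erase.2 ⟨huv, her hu⟩)).trans
    (htri r' hr' u (Finset.mem_erase.2 ⟨huv, her' hu⟩) z hz)

theorem IsRelCocycle.exists_primitive_of_forall_mem (hφ : IsRelCocycle T φ)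
    (hcard : ∀ t ∈ T, t.card = 3) (hT : ∀ t ∈ T, v ∈ t) (hconn : StarConnected T {v})
    (hne : T.Nonempty) : ∃ g, IsRelPrimitive T φ g := by
  obtain ⟨t₀, ht₀⟩ := hne
  obtain ⟨x₀, hx₀, hx₀v⟩ := Finset.exists_mem_ne (by rw [hcard t₀ ht₀]; omega : 1 < t₀.card) v
  have hspoke : ∀ t ∈ T, ∀ e : Finset V, e.card = 2 → e ⊆ t → v ∈ e → φ e = φ {v, x₀} := by
    intro t ht e he het hve
    obtain ⟨x, hx, hxv, rfl⟩ := exists_eq_pair_of_subset_insert he hve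
      (het.trans (Finset.subset_insert v t))
    exact hφ.eq_of_forall_mem hcard hT hconn ht ht₀ (Finset.mem_erase.2 ⟨hxv, hx⟩)
      (Finset.mem_erase.2 ⟨hx₀v, hx₀⟩)
  refine ⟨Pi.single v (φ {v, x₀}), fun t ht e he het ↦ ?_, fun e he x hx ↦ ?_⟩
  · rw [Finset.sum_pi_single']
    split_ifs with hve
    · exact hspoke t ht e he het hve
    · exact hφ.eq_zero_of_isFreeEdge e (isFreeEdge_of_forall_mem hcard hT he hve ht het)
  · rcases eq_or_ne x v with rfl | hxv
    · obtain ⟨t, ht, het⟩ := he.2.exists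
      rw [Pi.single_eq_same, ← hspoke t ht e he.1 het hx]
      exact hφ.eq_zero_of_isFreeEdge e he
    · exact Pi.single_eq_of_ne hxv _

theorem StarConnected.filter_mem [DecidableEq V] (hT : StarConnected T {v}) :
    StarConnected (T.filter (v ∈ ·)) {v} := by
  refine fun p hp s hs t ht ↦ hT p (fun r hr r' hr' hadj ↦ ?_) s (Finset.mem_filter.1 hs).1 t
    (Finset.mem_filter.1 ht).1
  exact hp r (Finset.mem_filter.2 ⟨hr, hadj.mem_left⟩) r'
    (Finset.mem_filter.2 ⟨hr', hadj.symm.mem_left⟩) hadj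

theorem IsDiskOrSphere.filter_mem [DecidableEq V] (hT : IsDiskOrSphere T) (hne : ∃ t ∈ T, v ∈ t) :
    IsDiskOrSphere (T.filter (v ∈ ·)) := by
  have hpseudo := hT.subset (Finset.filter_subset (v ∈ ·) T)
  have hv : ∀ t ∈ T.filter (v ∈ ·), v ∈ t := fun t ht ↦ (Finset.mem_filter.1 ht).2
  have hnonempty : (T.filter (v ∈ ·)).Nonempty := Finset.filter_nonempty_iff.2 hne
  have hconn : StarConnected (T.filter (v ∈ ·)) {v} := (hT.starConnected {v} (by simp)).filter_mem
  refine ⟨hpseudo, hnonempty, fun σ hσ p hp s hs t ht hσs hσt hps ↦ ?_,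
    fun φ hφ ↦ hφ.exists_primitive_of_forall_mem hpseudo.card_eq_three hv hconn hnonempty⟩
  rcases Nat.le_one_iff_eq_zero_or_eq_one.1 hσ with h | h
  · rw [Finset.card_eq_zero] at h
    subst h
    exact hconn p (hp.mono (Finset.empty_subset _)) s hs t ht (by simpa using hv s hs)
      (by simpa using hv t ht) hps
  obtain ⟨x, rfl⟩ := Finset.card_eq_one.1 h
  rcases eq_or_ne x v with rfl | hxv
  · exact hconn p hp s hs t ht hσs hσt hps
  · refine hp s hs t ht ⟨{x, v}, Finset.card_pair hxv, by simp, ?_, ?_⟩ hps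
    · exact Finset.insert_subset (by simpa using hσs) (by simpa using hv s hs)
    · exact Finset.insert_subset (by simpa using hσt) (by simpa using hv t ht)

end Star

/-- The triangles `v ∪ e`, `e ∈ A`, form a fan around `v` (a connected, possibly empty one) attached
to the surface `D` along the set `A` of boundary edges of `D`. -/
structure IsAttachedFan [DecidableEq V] (D A : Finset (Finset V)) (v : V) : Prop where
  notMem : ∀ t ∈ D, v ∉ t
  isFreeEdge : ∀ e ∈ A, IsFreeEdge D e
  isPseudosurface : IsPseudosurface (A.image (insert v))
  starConnected : StarConnected (A.image (insert v)) {v}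

section Fan

variable [DecidableEq V] {D A : Finset (Finset V)} {v : V} {e f s t : Finset V}
  {φ : Finset V → ZMod 2}

/-- A 0-cochain of `D` whose coboundary agrees with the cocycle `φ` on the edges in `A`: the
integral of `φ` along the spokes of the fan. -/
def fanPotential (A : Finset (Finset V)) (v : V) (φ : Finset V → ZMod 2) (x : V) : ZMod 2 :=
  if ∃ e ∈ A, x ∈ e then φ {v, x} else 0

theorem mem_union_fan : s ∈ D ∪ A.image (insert v) ↔ s ∈ D ∨ ∃ e ∈ A, insert v e = s := by
  rw [Finset.mem_union, Finset.mem_image]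

namespace IsAttachedFan

theorem notMem_of_subset (h : IsAttachedFan D A v) (ht : t ∈ D) (het : e ⊆ t) : v ∉ e :=
  fun hv ↦ h.notMem t ht (het hv)

theorem notMem_edge (h : IsAttachedFan D A v) (he : e ∈ A) : v ∉ e :=
  let ⟨_, ht, het⟩ := (h.isFreeEdge e he).2.exists
  h.notMem_of_subset ht het

theorem mem_image_of_mem (h : IsAttachedFan D A v) (hs : s ∈ D ∪ A.image (insert v)) (hv : v ∈ s) :
    s ∈ A.image (insert v) :=
  (Finset.mem_union.1 hs).resolve_left fun hsD ↦ h.notMem s hsD hv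

theorem eq_of_subset_insert (h : IsAttachedFan D A v) (he : e.card = 2) (hv : v ∉ e) (hf : f ∈ A)
    (hef : e ⊆ insert v f) : e = f :=
  Finset.eq_of_subset_of_card_le ((Finset.subset_insert_iff_of_notMem hv).1 hef)
    (by rw [he, (h.isFreeEdge f hf).1])

theorem eq_of_subset_of_subset (h : IsAttachedFan D A v) (he : e.card = 2) (hv : v ∉ e)
    (hs : s ∈ A.image (insert v)) (ht : t ∈ A.image (insert v)) (hes : e ⊆ s) (het : e ⊆ t) :
    s = t := by
  obtain ⟨f, hf, rfl⟩ := Finset.mem_image.1 hs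
  obtain ⟨f', hf', rfl⟩ := Finset.mem_image.1 ht
  rw [← h.eq_of_subset_insert he hv hf hes, ← h.eq_of_subset_insert he hv hf' het]

theorem eq_of_subset_of_subset_image (h : IsAttachedFan D A v) (he : e.card = 2) (hv : v ∉ e)
    {r : Finset V} (hr : r ∈ D) (hs : s ∈ D) (ht : t ∈ A.image (insert v)) (her : e ⊆ r)
    (hes : e ⊆ s) (het : e ⊆ t) : r = s := by
  obtain ⟨f, hf, rfl⟩ := Finset.mem_image.1 ht
  obtain rfl := h.eq_of_subset_insert he hv hf het
  exact (h.isFreeEdge e hf).eq hr hs her hes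

theorem isPseudosurface_union (h : IsAttachedFan D A v) (hD : IsPseudosurface D) :
    IsPseudosurface (D ∪ A.image (insert v)) where
  card_eq_three t ht := (Finset.mem_union.1 ht).elim (hD.card_eq_three t)
    (h.isPseudosurface.card_eq_three t)
  eq_of_ne e he r hr s hs t ht her hes het hrt hst := by
    by_cases hv : v ∈ e
    · exact h.isPseudosurface.eq_of_ne e he r (h.mem_image_of_mem hr (her hv)) s
        (h.mem_image_of_mem hs (hes hv)) t (h.mem_image_of_mem ht (het hv)) her hes het hrt hst
    rcases Finset.mem_union.1 hr with hr | hr <;> rcases Finset.mem_union.1 hs with hs | hs <;>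
      rcases Finset.mem_union.1 ht with ht | ht
    · exact hD.eq_of_ne e he r hr s hs t ht her hes het hrt hst
    · exact h.eq_of_subset_of_subset_image he hv hr hs ht her hes het
    · exact absurd (h.eq_of_subset_of_subset_image he hv hr ht hs her het hes) hrt
    · exact absurd (h.eq_of_subset_of_subset he hv hs ht hes het) hst
    · exact absurd (h.eq_of_subset_of_subset_image he hv hs ht hr hes het her) hst
    · exact absurd (h.eq_of_subset_of_subset he hv hr ht her het) hrt
    · exact h.eq_of_subset_of_subset he hv hr hs her hes
    · exact h.eq_of_subset_of_subset he hv hr hs her hes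

theorem starConnected_union (h : IsAttachedFan D A v) (hD : IsDiskOrSphere D) {σ : Finset V}
    (hσ : σ.card ≤ 1) : StarConnected (D ∪ A.image (insert v)) σ := by
  intro p hp s hs t ht hσs hσt hps
  by_cases hv : v ∈ σ
  · obtain rfl : {v} = σ := Finset.eq_of_subset_of_card_le (by simpa using hv) (by simpa using hσ)
    rw [Finset.singleton_subset_iff] at hσs hσt
    exact h.starConnected p
      (fun r hr r' hr' ↦ hp r (Finset.mem_union_right _ hr) r' (Finset.mem_union_right _ hr')) s
      (h.mem_image_of_mem hs hσs) t (h.mem_image_of_mem ht hσt) (by simpa using hσs)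
      (by simpa using hσt) hps
  have hreduce : ∀ s ∈ D ∪ A.image (insert v), σ ⊆ s → ∃ d ∈ D, σ ⊆ d ∧ (p s ↔ p d) := by
    intro s hs hσs
    rcases mem_union_fan.1 hs with hsD | ⟨e, he, rfl⟩
    · exact ⟨s, hsD, hσs, Iff.rfl⟩
    obtain ⟨hcard, d, ⟨hd, hed⟩, -⟩ := h.isFreeEdge e he
    have hσe := (Finset.subset_insert_iff_of_notMem hv).1 hσs
    have hadj : EdgeAdj σ (insert v e) d := ⟨e, hcard, hσe, Finset.subset_insert v e, hed⟩
    have hd' := Finset.mem_union_left (A.image (insert v)) hd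
    exact ⟨d, hd, hσe.trans hed, hp _ hs d hd' hadj, hp d hd' _ hs hadj.symm⟩
  obtain ⟨d, hd, hσd, hsd⟩ := hreduce s hs hσs
  obtain ⟨d', hd', hσd', htd'⟩ := hreduce t ht hσt
  exact htd'.2 (hD.starConnected σ hσ p (fun r hr r' hr' ↦ hp r (Finset.mem_union_left _ hr) r'
    (Finset.mem_union_left _ hr')) d hd d' hd' hσd hσd' (hsd.1 hps))

theorem isFreeEdge_union_iff (h : IsAttachedFan D A v) (hv : v ∉ e) :
    IsFreeEdge (D ∪ A.image (insert v)) e ↔ IsFreeEdge D e ∧ e ∉ A := by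
  constructor
  · rintro ⟨he, t, ⟨ht, het⟩, hunique⟩
    have heA : e ∉ A := fun heA ↦ by
      obtain ⟨d, hd, hed⟩ := (h.isFreeEdge e heA).2.exists
      have hdt := hunique d ⟨Finset.mem_union_left _ hd, hed⟩
      have hvt := hunique (insert v e) ⟨Finset.mem_union_right _ (Finset.mem_image_of_mem _ heA),
        Finset.subset_insert v e⟩
      exact h.notMem d hd (hdt.trans hvt.symm ▸ Finset.mem_insert_self v e)
    have htD : t ∈ D := by
      rcases mem_union_fan.1 ht with htD | ⟨f, hf, rfl⟩
      exacts [htD, absurd (h.eq_of_subset_insert he hv hf het ▸ hf) heA]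
    exact ⟨⟨he, t, ⟨htD, het⟩, fun s hs ↦ hunique s ⟨Finset.mem_union_left _ hs.1, hs.2⟩⟩, heA⟩
  · rintro ⟨⟨he, t, ⟨ht, het⟩, hunique⟩, heA⟩
    refine ⟨he, t, ⟨Finset.mem_union_left _ ht, het⟩, fun s hs ↦ ?_⟩
    rcases mem_union_fan.1 hs.1 with hsD | ⟨f, hf, rfl⟩
    exacts [hunique s ⟨hsD, hs.2⟩, absurd (h.eq_of_subset_insert he hv hf hs.2 ▸ hf) heA]

/-- A boundary vertex `x` of `D` incident to an edge in `A` and to a boundary edge outside `A` is an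
end of the fan, so its spoke `{v, x}` is free. -/
theorem fanPotential_eq_zero (h : IsAttachedFan D A v) (hD : IsDiskOrSphere D)
    (hφ : IsRelCocycle (D ∪ A.image (insert v)) φ) (he : IsFreeEdge D e) (heA : e ∉ A) {x : V}
    (hx : x ∈ e) : fanPotential A v φ x = 0 := by
  unfold fanPotential
  split_ifs with hxA
  swap
  · rfl
  obtain ⟨f, hf, hxf⟩ := hxA
  have hxv : v ≠ x := fun hvx ↦ h.notMem_edge hf (hvx ▸ hxf)
  refine hφ.eq_zero_of_isFreeEdge _ ⟨Finset.card_pair hxv, insert v f,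
    ⟨Finset.mem_union_right _ (Finset.mem_image_of_mem _ hf),
      Finset.insert_subset_insert v (Finset.singleton_subset_iff.2 hxf)⟩, fun s hs ↦ ?_⟩
  have hvs : v ∈ s := hs.2 (Finset.mem_insert_self v _)
  obtain ⟨f', hf', rfl⟩ := Finset.mem_image.1 (h.mem_image_of_mem hs.1 hvs)
  have hxf' : x ∈ f' := (Finset.mem_insert.1 (hs.2 (by simp))).resolve_left hxv.symm
  rcases hD.eq_or_eq_or_eq_of_isFreeEdge he (h.isFreeEdge f hf) (h.isFreeEdge f' hf') hx hxf hxf'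
    with rfl | rfl | rfl
  exacts [absurd hf heA, absurd hf' heA, rfl]

theorem isRelCocycle_add_fanPotential (h : IsAttachedFan D A v) (hD : IsDiskOrSphere D)
    (hφ : IsRelCocycle (D ∪ A.image (insert v)) φ) :
    IsRelCocycle D fun e ↦ φ e + ∑ x ∈ e, fanPotential A v φ x where
  sum_eq_zero t ht := by
    rw [Finset.sum_add_distrib, hφ.sum_eq_zero t (Finset.mem_union_left _ ht),
      sum_powersetCard_two_coboundary (hD.card_eq_three t ht), add_zero]
  eq_zero_of_isFreeEdge e he := by
    obtain ⟨t, ht, het⟩ := he.2.exists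
    by_cases heA : e ∈ A
    · have hpot : ∀ x ∈ e, fanPotential A v φ x = φ {v, x} := fun x hx ↦ if_pos ⟨e, heA, hx⟩
      rw [Finset.sum_congr rfl hpot, hφ.eq_sum_apex he.1 (h.notMem_edge heA)
        (Finset.mem_union_right _ (Finset.mem_image_of_mem _ heA)), CharTwo.add_self_eq_zero]
    · rw [hφ.eq_zero_of_isFreeEdge e
        ((h.isFreeEdge_union_iff (h.notMem_of_subset ht het)).2 ⟨he, heA⟩),
        Finset.sum_eq_zero fun x hx ↦ h.fanPotential_eq_zero hD hφ he heA hx, add_zero]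

theorem isRelPrimitive_update (h : IsAttachedFan D A v) (hD : IsDiskOrSphere D)
    (hφ : IsRelCocycle (D ∪ A.image (insert v)) φ) {g : V → ZMod 2}
    (hg : IsRelPrimitive D (fun e ↦ φ e + ∑ x ∈ e, fanPotential A v φ x) g) :
    IsRelPrimitive (D ∪ A.image (insert v)) φ
      (Function.update (g + fanPotential A v φ) v 0) := by
  set G := Function.update (g + fanPotential A v φ) v 0 with hG
  have hG_of_ne : ∀ {x}, x ≠ v → G x = g x + fanPotential A v φ x :=
    fun hxv ↦ Function.update_of_ne hxv _ _
  have hspoke : ∀ f ∈ A, ∀ x ∈ f, G x = φ {v, x} := fun f hf x hx ↦ by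
    rw [hG_of_ne fun hxv ↦ h.notMem_edge hf (hxv ▸ hx), hg.eq_zero f (h.isFreeEdge f hf) x hx,
      zero_add]
    exact if_pos ⟨f, hf, hx⟩
  have hD_edge : ∀ t ∈ D, ∀ e : Finset V, e.card = 2 → e ⊆ t → φ e = ∑ x ∈ e, G x := by
    intro t ht e he het
    rw [Finset.sum_congr rfl fun x hx ↦ hG_of_ne fun hxv ↦ h.notMem t ht (hxv ▸ het hx),
      Finset.sum_add_distrib, ← hg.eq_sum t ht e he het, CharTwo.add_cancel_right]
  refine ⟨fun t ht e he het ↦ ?_, fun e he x hx ↦ ?_⟩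
  · rcases mem_union_fan.1 ht with htD | ⟨f, hf, rfl⟩
    · exact hD_edge t htD e he het
    by_cases hve : v ∈ e
    · obtain ⟨x, hx, hxv, rfl⟩ := exists_eq_pair_of_subset_insert he hve het
      rw [Finset.sum_pair hxv.symm, hspoke f hf x hx, hG, Function.update_self, zero_add]
    · obtain ⟨d, hd, hfd⟩ := (h.isFreeEdge f hf).2.exists
      exact hD_edge d hd e he (h.eq_of_subset_insert he hve hf het ▸ hfd)
  · rcases eq_or_ne x v with rfl | hxv
    · exact Function.update_self ..
    by_cases hve : v ∈ e
    · obtain ⟨t, ht, het⟩ := he.2.exists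
      obtain ⟨f, hf, rfl⟩ := Finset.mem_image.1 (h.mem_image_of_mem ht (het hve))
      obtain ⟨y, hy, -, rfl⟩ := exists_eq_pair_of_subset_insert he.1 hve het
      obtain rfl : x = y := by simpa [hxv] using hx
      rw [hspoke f hf x hy, hφ.eq_zero_of_isFreeEdge _ he]
    · obtain ⟨heD, heA⟩ := (h.isFreeEdge_union_iff hve).1 he
      rw [hG_of_ne hxv, hg.eq_zero e heD x hx, h.fanPotential_eq_zero hD hφ heD heA hx, add_zero]

theorem isDiskOrSphere_union (h : IsAttachedFan D A v) (hD : IsDiskOrSphere D) :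
    IsDiskOrSphere (D ∪ A.image (insert v)) where
  toIsPseudosurface := h.isPseudosurface_union hD.toIsPseudosurface
  nonempty := hD.nonempty.mono Finset.subset_union_left
  starConnected _ := h.starConnected_union hD
  exists_primitive _ hφ :=
    let ⟨_, hg⟩ := hD.exists_primitive _ (h.isRelCocycle_add_fanPotential hD hφ)
    ⟨_, h.isRelPrimitive_update hD hφ hg⟩

end IsAttachedFan

end Fan

/-! ### Shelling off a cone -/

section PureComplexes

variable {K L : Set (Finset V)} {d : ℕ} {σ : Finset V}

theorem pureDim_of_forall_exists (hK : K.Nonempty)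
    (h : ∀ σ ∈ K, ∃ τ ∈ K, σ ⊆ τ ∧ τ.card = d + 1) : PureDim K d := by
  refine ⟨hK, fun σ hσ ↦ ?_⟩
  obtain ⟨τ, hτ, hστ, hcard⟩ := h σ hσ.1
  rw [hσ.2 τ hτ hστ, hcard]

theorem PureDim.exists_facet (hK : PureDim K d) (hfin : K.Finite) (hσ : σ ∈ K) :
    ∃ τ ∈ K, σ ⊆ τ ∧ τ.card = d + 1 := by
  obtain ⟨τ, hστ, hτ⟩ := hfin.exists_le_maximal hσ
  exact ⟨τ, hτ.prop, hστ, hK.2 τ ⟨hτ.prop, fun ρ hρ h ↦ le_antisymm h (hτ.le_of_ge hρ h)⟩⟩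

theorem PureDim.isFacet_iff (hK : PureDim K d) (hfin : K.Finite) :
    IsFacet K σ ↔ σ ∈ K ∧ σ.card = d + 1 := by
  refine ⟨fun h ↦ ⟨h.1, hK.2 σ h⟩, fun h ↦ ⟨h.1, fun τ hτ hστ ↦ ?_⟩⟩
  obtain ⟨ρ, -, hτρ, hρ⟩ := hK.exists_facet hfin hτ
  exact Finset.eq_of_subset_of_card_le hστ (by rw [h.2, ← hρ]; exact Finset.card_le_card hτρ)

theorem PureDim.eq_generatedByL (hL : PureDim L d) (hfin : L.Finite) (hLcx : IsComplex L)
    (hKcx : IsComplex K) (hLK : L ⊆ K) {l : List (Finset V)}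
    (hl : ∀ σ, σ ∈ l ↔ σ ∈ L ∧ σ.card = d + 1) : L = generatedByL K l := by
  refine Set.Subset.antisymm (fun σ hσ ↦ ?_) fun σ hσ ↦ ?_
  · obtain ⟨τ, hτ, hστ, hcard⟩ := hL.exists_facet hfin hσ
    exact ⟨hLK hσ, τ, (hl τ).2 ⟨hτ, hcard⟩, hστ⟩
  · obtain ⟨hσK, θ, hθ, hσθ⟩ := hσ
    exact hLcx.2 θ ((hl θ).1 hθ).1 σ hσθ (hKcx.1 σ hσK)

theorem generatedByL_append {l l' : List (Finset V)} {S : Finset (Finset V)}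
    (hl : ∀ F, F ∈ l ↔ F ∈ S) :
    generatedByL K (l ++ l') = generatedBy K S ∪ generatedByL K l' := by
  ext τ
  simp only [generatedByL, generatedBy, List.mem_append, hl, Finset.mem_coe, Set.mem_union,
    Set.mem_ofPred_eq, or_and_right, exists_or, and_or_left]

theorem generatedByL_singleton (K : Set (Finset V)) (F : Finset V) :
    generatedByL K [F] = generatedBy K {F} := by
  simp [generatedByL, generatedBy]

end PureComplexes

section ShellsOnto

variable [DecidableEq V] {K L : Set (Finset V)} {d : ℕ}

/-- The faces in `S` can be shelled off the subcomplex of `K` generated by `S` and `L`, leaving `L`.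
A shelling is built up backwards, starting with the face removed last. -/
inductive ShellsOnto (K L : Set (Finset V)) (d : ℕ) : Finset (Finset V) → Prop
  | empty : ShellsOnto K L d ∅
  | insert {S : Finset (Finset V)} {F : Finset V} (hF : F ∉ S) (hS : ShellsOnto K L d S)
    (hpure : PureDim (generatedBy K {F} ∩ (generatedBy K S ∪ L)) (d - 1)) :
    ShellsOnto K L d (insert F S)

theorem ShellsOnto.exists_list {S : Finset (Finset V)} (hS : ShellsOnto K L d S)
    {l' : List (Finset V)} (hl' : L = generatedByL K l') :
    ∃ l : List (Finset V), l.Nodup ∧ (∀ F, F ∈ l ↔ F ∈ S) ∧ DownSteps K d (l ++ l') l.length := by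
  induction hS with
  | empty => exact ⟨[], List.nodup_nil, by simp, fun i hi ↦ absurd hi (Nat.not_lt_zero i)⟩
  | @insert S F hF _ hpure ih =>
    obtain ⟨l, hnodup, hmem, hdown⟩ := ih
    refine ⟨F :: l, List.nodup_cons.2 ⟨fun h ↦ hF ((hmem F).1 h), hnodup⟩, by simp [hmem], ?_⟩
    rintro (_ | i) hi
    · have hstep := generatedByL_append (K := K) (l' := l') hmem
      rw [← hl'] at hstep
      simpa [hstep, generatedByL_singleton] using hpure
    · simpa using hdown i (by simpa using hi)

theorem ShellsOnto.shellsDownTo {S : Finset (Finset V)} (hS : ShellsOnto K L d S) (hfin : K.Finite)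
    (hKpure : PureDim K d) (hKcx : IsComplex K) (hLK : L ⊆ K) (hLcx : IsComplex L)
    (hLpure : PureDim L d) (hmem : ∀ F, F ∈ S ↔ F ∈ K \ L ∧ F.card = d + 1) :
    ShellsDownTo K d L := by
  have hLfin := hfin.subset hLK
  let lL := (hLfin.toFinset.filter (·.card = d + 1)).toList
  have hlL : ∀ σ, σ ∈ lL ↔ σ ∈ L ∧ σ.card = d + 1 := by simp [lL]
  have hgen := hLpure.eq_generatedByL hLfin hLcx hKcx hLK hlL
  obtain ⟨l, hnodup, hl, hdown⟩ := hS.exists_list hgen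
  have hdisj : l.Disjoint lL := fun F hF hFL ↦ ((hmem F).1 ((hl F).1 hF)).1.2 ((hlL F).1 hFL).1
  have hfacet : ∀ σ, σ ∈ l ++ lL ↔ IsFacet K σ := fun σ ↦ by
    rw [hKpure.isFacet_iff hfin, List.mem_append, hl, hmem, hlL, ← or_and_right, Set.mem_sdiff]
    have := @hLK σ
    tauto
  obtain ⟨σ, hσ⟩ := hLpure.1
  obtain ⟨τ, hτ, -, hcard⟩ := hLpure.exists_facet hLfin hσ
  have hpos : 0 < lL.length := List.length_pos_of_mem ((hlL τ).2 ⟨hτ, hcard⟩)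
  refine ⟨l ++ lL, l.length, ⟨?_, hfacet, ?_, hdown⟩, by rwa [List.drop_left]⟩
  · exact hnodup.append (Finset.nodup_toList _) hdisj
  · rw [List.length_append]
    omega

end ShellsOnto

section ConeFacets

variable [DecidableEq V] {K L : Set (Finset V)} {R T : Finset (Finset V)} {σ τ r t : Finset V}
  {v : V}

/-- The tetrahedra `v ∪ t` over the triangles `t ∈ T` that do not contain `v`. -/
def coneFacets (v : V) (T : Finset (Finset V)) : Finset (Finset V) :=
  (T.filter (v ∉ ·)).image (insert v)

theorem mem_coneFacets : σ ∈ coneFacets v T ↔ ∃ t ∈ T, v ∉ t ∧ insert v t = σ := by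
  simp only [coneFacets, Finset.mem_image, Finset.mem_filter, and_assoc]

theorem coneFacets_eq_insert_erase (ht : t ∈ T) (hvt : v ∉ t) :
    coneFacets v T = insert (insert v t) (coneFacets v (T.erase t)) := by
  rw [coneFacets, coneFacets, Finset.filter_erase, ← Finset.image_insert,
    Finset.insert_erase (Finset.mem_filter.2 ⟨ht, hvt⟩)]

theorem insert_notMem_coneFacets_erase (hvt : v ∉ t) :
    insert v t ∉ coneFacets v (T.erase t) := by
  rw [mem_coneFacets]
  rintro ⟨s, hs, hvs, heq⟩
  rw [← Finset.erase_insert hvs, heq, Finset.erase_insert hvt] at hs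
  exact Finset.notMem_erase t T hs

theorem mem_generatedBy_inter_iff :
    τ ∈ generatedBy K {insert v t} ∩ (generatedBy K (coneFacets v R) ∪ L) ↔
      τ ∈ K ∧ τ.erase v ⊆ t ∧ ((∃ r ∈ R, v ∉ r ∧ τ.erase v ⊆ r) ∨ τ ∈ L) := by
  simp only [generatedBy, Set.mem_inter_iff, Set.mem_union, Set.mem_ofPred_eq,
    Set.mem_singleton_iff, exists_eq_left, Finset.mem_coe, mem_coneFacets, Finset.subset_insert_iff]
  constructor
  · rintro ⟨⟨hK, ht⟩, ⟨-, θ, ⟨r, hr, hvr, rfl⟩, hθ⟩ | hL⟩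
    · exact ⟨hK, ht, .inl ⟨r, hr, hvr, Finset.subset_insert_iff.1 hθ⟩⟩
    · exact ⟨hK, ht, .inr hL⟩
  · rintro ⟨hK, ht, ⟨r, hr, hvr, hτr⟩ | hL⟩
    · exact ⟨⟨hK, ht⟩, .inl ⟨hK, _, ⟨r, hr, hvr, rfl⟩, Finset.subset_insert_iff.2 hτr⟩⟩
    · exact ⟨⟨hK, ht⟩, .inr hL⟩

theorem IsDiskOrSphere.exists_edgeAdj (hT : IsDiskOrSphere T) (ht : t ∈ T) (hσt : σ ⊆ t)
    (hr : r ∈ T.erase t) (hσr : σ ⊆ r) : ∃ s ∈ T.erase t, EdgeAdj σ t s := by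
  obtain ⟨hrt, hrT⟩ := Finset.mem_erase.1 hr
  have hcard_ne : σ.card ≠ 3 := fun h ↦ hrt <| by
    rw [← Finset.eq_of_subset_of_card_le hσt (by rw [h, hT.card_eq_three t ht]),
      ← Finset.eq_of_subset_of_card_le hσr (by rw [h, hT.card_eq_three r hrT])]
  have hcard_le : σ.card ≤ 3 := hT.card_eq_three t ht ▸ Finset.card_le_card hσt
  obtain hle | heq : σ.card ≤ 1 ∨ σ.card = 2 := by omega
  · exact (hT.starConnected σ hle).exists_edgeAdj ht hσt hr hσr
  · exact ⟨r, hr, σ, heq, subset_rfl, hσt, hσr⟩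

theorem insert_mem_inter_of_edgeAdj (hcard : ∀ r ∈ T, r.card = 3) (hvt : v ∉ t)
    (hK : ∀ ρ ⊆ insert v t, ρ ≠ ∅ → ρ ∈ K) (hL : ∀ r ∈ T, v ∈ r → r ∈ L) (hr : r ∈ T)
    (hadj : EdgeAdj σ t r) :
    ∃ ρ ∈ generatedBy K {insert v t} ∩ (generatedBy K (coneFacets v T) ∪ L),
      insert v σ ⊆ ρ ∧ ρ.card = 3 := by
  obtain ⟨e, he, hσe, het, her⟩ := hadj
  have hve : v ∉ e := fun h ↦ hvt (het h)
  have hcard_insert : (insert v e).card = 3 := by rw [Finset.card_insert_of_notMem hve, he]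
  refine ⟨insert v e, mem_generatedBy_inter_iff.2 ⟨?_, ?_, ?_⟩,
    Finset.insert_subset_insert v hσe, hcard_insert⟩
  · exact hK _ (Finset.insert_subset_insert v het) (Finset.insert_ne_empty v e)
  · rwa [Finset.erase_insert hve]
  · by_cases hvr : v ∈ r
    · have heq : insert v e = r := Finset.eq_of_subset_of_card_le (Finset.insert_subset hvr her)
        (by rw [hcard_insert, hcard r hr])
      exact .inr (heq ▸ hL r hr hvr)
    · exact .inl ⟨r, hr, hvr, by rwa [Finset.erase_insert hve]⟩

theorem shellsOnto_coneFacets_of_erase (hT : IsDiskOrSphere T) (ht : t ∈ T) (hvt : v ∉ t)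
    (hne : t ∈ L ∨ (T.erase t).Nonempty) (hK : ∀ ρ ⊆ insert v t, ρ ≠ ∅ → ρ ∈ K)
    (hL : ∀ r ∈ T, v ∈ r → r ∈ L)
    (htL : ∀ τ ∈ L, τ ⊆ insert v t → (τ ⊆ t ∧ t ∈ L) ∨ ∃ r ∈ T.erase t, τ.erase v ⊆ r)
    (h : ShellsOnto K L 3 (coneFacets v (T.erase t))) : ShellsOnto K L 3 (coneFacets v T) := by
  rw [coneFacets_eq_insert_erase ht hvt]
  have hcard_t := hT.card_eq_three t ht
  have hface : ∀ σ ⊆ t, ∀ r ∈ T.erase t, σ ⊆ r →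
      ∃ ρ ∈ generatedBy K {insert v t} ∩ (generatedBy K (coneFacets v (T.erase t)) ∪ L),
        insert v σ ⊆ ρ ∧ ρ.card = 3 := fun σ hσt r hr hσr ↦ by
    obtain ⟨s, hs, hadj⟩ := hT.exists_edgeAdj ht hσt hr hσr
    exact insert_mem_inter_of_edgeAdj (fun r hr ↦ hT.card_eq_three r (Finset.mem_of_mem_erase hr))
      hvt hK (fun r hr ↦ hL r (Finset.mem_of_mem_erase hr)) hs hadj
  have ht_mem (htL : t ∈ L) :
      t ∈ generatedBy K {insert v t} ∩ (generatedBy K (coneFacets v (T.erase t)) ∪ L) :=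
    mem_generatedBy_inter_iff.2 ⟨hK t (Finset.subset_insert v t)
      (Finset.card_pos.1 (by omega)).ne_empty, Finset.erase_subset v t, .inr htL⟩
  refine h.insert (insert_notMem_coneFacets_erase hvt) (pureDim_of_forall_exists ?_ fun τ hτ ↦ ?_)
  · rcases hne with htL | ⟨r, hr⟩
    · exact ⟨t, ht_mem htL⟩
    · obtain ⟨ρ, hρ, -⟩ := hface ∅ (Finset.empty_subset t) r hr (Finset.empty_subset r)
      exact ⟨ρ, hρ⟩
  · obtain ⟨-, hτt, hτ⟩ := mem_generatedBy_inter_iff.1 hτ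
    suffices (∃ r ∈ T.erase t, τ.erase v ⊆ r) ∨ (τ ⊆ t ∧ t ∈ L) by
      rcases this with ⟨r, hr, hτr⟩ | ⟨hτt, htL⟩
      · obtain ⟨ρ, hρ, hsub, hcard⟩ := hface _ hτt r hr hτr
        exact ⟨ρ, hρ, (Finset.insert_erase_subset v τ).trans hsub, hcard⟩
      · exact ⟨t, ht_mem htL, hτt, hcard_t⟩
    rcases hτ with ⟨r, hr, -, hτr⟩ | hτL
    · exact .inl ⟨r, hr, hτr⟩
    · exact (htL τ hτL (Finset.subset_insert_iff.2 hτt)).symm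

end ConeFacets

/-- `X` is a pure 2-dimensional complex that triangulates a disk or a sphere, and `T` is its set of
triangles. -/
structure IsDiskOrSphereComplex (X : Set (Finset V)) (T : Finset (Finset V)) : Prop extends
    IsDiskOrSphere T where
  mem_iff : ∀ t, t ∈ T ↔ t ∈ X ∧ t.card = 3
  exists_subset : ∀ σ ∈ X, ∃ t ∈ T, σ ⊆ t

theorem IsDiskOrSphereComplex.card_le {X : Set (Finset V)} {T : Finset (Finset V)} {σ : Finset V}
    (hX : IsDiskOrSphereComplex X T) (hσ : σ ∈ X) : σ.card ≤ 3 :=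
  let ⟨t, ht, hσt⟩ := hX.exists_subset σ hσ
  hX.card_eq_three t ht ▸ Finset.card_le_card hσt

/-- The edges opposite to `v` in the triangles of `X` containing `v`. -/
def linkEdges [DecidableEq V] (X : Finset (Finset V)) (v : V) : Finset (Finset V) :=
  (X.filter (v ∈ ·)).image (·.erase v)

theorem image_insert_linkEdges [DecidableEq V] (X : Finset (Finset V)) (v : V) :
    (linkEdges X v).image (insert v) = X.filter (v ∈ ·) := by
  rw [linkEdges, Finset.image_image]
  exact (Finset.image_congr fun t ht ↦
    Finset.insert_erase (Finset.mem_filter.1 ht).2).trans Finset.image_id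

theorem mem_cone [DecidableEq V] {v : V} {D : Set (Finset V)} {σ : Finset V} :
    σ ∈ cone v D ↔ σ ∈ D ∨ (∃ τ ∈ D, insert v τ = σ) ∨ σ = {v} := by
  simp only [cone, Set.mem_union, Set.mem_image, Set.mem_singleton_iff, or_assoc]

/-- The cone `v ∗ D` over a disk or sphere `D` with triangle set `S` is attached to the complex `L`
along a disk or sphere with triangle set `X` in the boundary of the cone. -/
structure IsConeAttachment [DecidableEq V] (L D : Set (Finset V)) (v : V)
    (S X : Finset (Finset V)) : Prop where
  isComplex : IsComplex L
  isComplex_cone : IsComplex (cone v D)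
  notMem : ∀ σ ∈ D, v ∉ σ
  base : IsDiskOrSphereComplex D S
  inter : IsDiskOrSphereComplex (L ∩ cone v D) X
  inter_subset_bdry : L ∩ cone v D ⊆ bdry (cone v D) 3

namespace IsConeAttachment

variable [DecidableEq V] {L D : Set (Finset V)} {v : V} {R S X : Finset (Finset V)}
  {σ τ t : Finset V}

theorem notMem_of_mem (h : IsConeAttachment L D v S X) (ht : t ∈ S) : v ∉ t :=
  h.notMem t ((h.base.mem_iff t).1 ht).1

theorem insert_mem_cone (h : IsConeAttachment L D v S X) (ht : t ∈ S) : insert v t ∈ cone v D :=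
  mem_cone.2 (.inr (.inl ⟨t, ((h.base.mem_iff t).1 ht).1, rfl⟩))

theorem card_insert (h : IsConeAttachment L D v S X) (ht : t ∈ S) : (insert v t).card = 4 := by
  rw [Finset.card_insert_of_notMem (h.notMem_of_mem ht), h.base.card_eq_three t ht]

theorem mem_cone_of_subset_insert (h : IsConeAttachment L D v S X) (ht : t ∈ S)
    (hτ : τ ⊆ insert v t) (hne : τ ≠ ∅) : τ ∈ cone v D :=
  h.isComplex_cone.2 _ (h.insert_mem_cone ht) τ hτ hne

theorem mem_of_mem_inter (h : IsConeAttachment L D v S X) (ht : t ∈ X) : t ∈ L :=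
  ((h.inter.mem_iff t).1 ht).1.1

theorem mem_of_notMem (h : IsConeAttachment L D v S X) (ht : t ∈ X) (hv : v ∉ t) : t ∈ S := by
  obtain ⟨⟨-, hcone⟩, hcard⟩ := (h.inter.mem_iff t).1 ht
  rcases mem_cone.1 hcone with htD | ⟨τ, -, rfl⟩ | rfl
  · exact (h.base.mem_iff t).2 ⟨htD, hcard⟩
  · exact absurd (Finset.mem_insert_self v τ) hv
  · exact absurd (Finset.mem_singleton_self v) hv

theorem erase_mem (h : IsConeAttachment L D v S X) (ht : t ∈ X) (hv : v ∈ t) : t.erase v ∈ D := by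
  obtain ⟨⟨-, hcone⟩, hcard⟩ := (h.inter.mem_iff t).1 ht
  rcases mem_cone.1 hcone with htD | ⟨τ, hτ, rfl⟩ | rfl
  · exact absurd hv (h.notMem t htD)
  · rwa [Finset.erase_insert (h.notMem τ hτ)]
  · simp at hcard

theorem isFreeEdge_erase (h : IsConeAttachment L D v S X) (ht : t ∈ X) (hv : v ∈ t) :
    IsFreeEdge S (t.erase v) := by
  obtain ⟨hinter, hcard⟩ := (h.inter.mem_iff t).1 ht
  obtain ⟨-, θ, ⟨-, hθ_card, hθ⟩, htθ⟩ := h.inter_subset_bdry hinter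
  obtain rfl : t = θ := Finset.eq_of_subset_of_card_le htθ (by rw [hθ_card, hcard])
  obtain ⟨s, hs, hes⟩ := h.base.exists_subset _ (h.erase_mem ht hv)
  refine ⟨by rw [Finset.card_erase_of_mem hv, hcard], s, ⟨hs, hes⟩, fun r ⟨hr, her⟩ ↦ ?_⟩
  have heq : insert v r = insert v s := hθ.unique
    ⟨h.insert_mem_cone hr, h.card_insert hr, Finset.subset_insert_iff.2 her⟩
    ⟨h.insert_mem_cone hs, h.card_insert hs, Finset.subset_insert_iff.2 hes⟩
  rw [← Finset.erase_insert (h.notMem_of_mem hr), heq, Finset.erase_insert (h.notMem_of_mem hs)]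

theorem isAttachedFan (h : IsConeAttachment L D v S X) : IsAttachedFan S (linkEdges X v) v where
  notMem _ := h.notMem_of_mem
  isFreeEdge e he := by
    obtain ⟨t, ht, rfl⟩ := Finset.mem_image.1 he
    obtain ⟨htX, hv⟩ := Finset.mem_filter.1 ht
    exact h.isFreeEdge_erase htX hv
  isPseudosurface := by
    rw [image_insert_linkEdges]
    exact h.inter.toIsPseudosurface.subset (Finset.filter_subset _ X)
  starConnected := by
    rw [image_insert_linkEdges]
    exact (h.inter.starConnected {v} (Finset.card_singleton v).le).filter_mem

theorem isDiskOrSphere_union (h : IsConeAttachment L D v S X) : IsDiskOrSphere (S ∪ X) := by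
  have hunion : S ∪ X.filter (v ∈ ·) = S ∪ X := by
    refine Finset.Subset.antisymm
      (Finset.union_subset_union_right (Finset.filter_subset _ X)) fun t ht ↦ ?_
    have := @h.mem_of_notMem _ _ _ _ _ _ _ t
    grind
  simpa only [image_insert_linkEdges, hunion] using
    h.isAttachedFan.isDiskOrSphere_union h.base.toIsDiskOrSphere

theorem exists_triangle (h : IsConeAttachment L D v S X) (ht : t ∈ S) (hτ : τ ∈ L)
    (hτt : τ ⊆ insert v t) : ∃ r ∈ X, τ ⊆ r :=
  h.inter.exists_subset τ
    ⟨hτ, h.mem_cone_of_subset_insert ht hτt (h.isComplex.1 τ hτ)⟩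

theorem shellsOnto_of_erase (h : IsConeAttachment L D v S X) (hR : IsDiskOrSphere R)
    (hRSX : R ⊆ S ∪ X) (ht : t ∈ R) (hv : v ∉ t) (hne : t ∈ L ∨ (R.erase t).Nonempty)
    (htL : ∀ τ ∈ L, τ ⊆ insert v t → (τ ⊆ t ∧ t ∈ L) ∨ ∃ r ∈ R.erase t, τ.erase v ⊆ r)
    (hshell : ShellsOnto (L ∪ cone v D) L 3 (coneFacets v (R.erase t))) :
    ShellsOnto (L ∪ cone v D) L 3 (coneFacets v R) := by
  have htS : t ∈ S := (Finset.mem_union.1 (hRSX ht)).elim id (h.mem_of_notMem · hv)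
  refine shellsOnto_coneFacets_of_erase hR ht hv hne
    (fun ρ hρ hρ_ne ↦ .inr (h.mem_cone_of_subset_insert htS hρ hρ_ne)) (fun r hr hvr ↦ ?_)
    htL hshell
  exact h.mem_of_mem_inter ((Finset.mem_union.1 (hRSX hr)).resolve_left
    fun hrS ↦ h.notMem_of_mem hrS hvr)

/-- There are no tetrahedra over the star of `v` in `L ∩ (v ∗ D)`, so it can serve as `Y`. If it is
empty, `Y` consists of a single triangle. -/
theorem exists_shellsOnto_star (h : IsConeAttachment L D v S X) :
    ∃ Y ⊆ X, IsDiskOrSphere Y ∧ (∀ t ∈ X, v ∈ t → t ∈ Y) ∧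
      ShellsOnto (L ∪ cone v D) L 3 (coneFacets v Y) := by
  by_cases hne : ∃ t ∈ X, v ∈ t
  · refine ⟨X.filter (v ∈ ·), Finset.filter_subset _ X, h.inter.toIsDiskOrSphere.filter_mem hne,
      fun t ht hv ↦ Finset.mem_filter.2 ⟨ht, hv⟩, ?_⟩
    have hempty : coneFacets v (X.filter (v ∈ ·)) = ∅ := by
      rw [coneFacets, Finset.filter_filter]
      simp
    exact hempty ▸ .empty
  · push Not at hne
    obtain ⟨t, ht⟩ := h.inter.nonempty
    have htL := h.mem_of_mem_inter ht
    have htS := h.mem_of_notMem ht (hne t ht)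
    have ht_disk := isDiskOrSphere_singleton (h.inter.card_eq_three t ht)
    refine ⟨{t}, Finset.singleton_subset_iff.2 ht, ht_disk, fun s hs hv ↦ absurd hv (hne s hs), ?_⟩
    refine h.shellsOnto_of_erase ht_disk
      (Finset.singleton_subset_iff.2 (Finset.mem_union_right S ht)) (Finset.mem_singleton_self t)
      (hne t ht) (.inl htL) (fun τ hτ hτt ↦ .inl ⟨?_, htL⟩) ?_
    · obtain ⟨r, hr, hτr⟩ := h.exists_triangle htS hτ hτt
      exact (Finset.subset_insert_iff_of_notMem fun hv ↦ hne r hr (hτr hv)).1 hτt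
    · simpa [coneFacets] using ShellsOnto.empty

theorem shellsOnto_inter (h : IsConeAttachment L D v S X) :
    ShellsOnto (L ∪ cone v D) L 3 (coneFacets v X) := by
  obtain ⟨Y, hYX, hY, hstar, hshell⟩ := h.exists_shellsOnto_star
  refine hY.shelling_induction
    (motive := fun R ↦ ShellsOnto (L ∪ cone v D) L 3 (coneFacets v R)) hshell
    (fun R t hRX hYR hR ht hRt ↦ ?_) h.inter.toIsDiskOrSphere hYX
  have htX := hRX ht
  have hv : v ∉ t := fun hv ↦ Finset.notMem_erase t R (hYR (hstar t htX hv))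
  refine h.shellsOnto_of_erase hR (hRX.trans Finset.subset_union_right) ht hv
    (.inl (h.mem_of_mem_inter htX)) (fun τ hτ hτt ↦ ?_) hRt
  by_cases hvτ : v ∈ τ
  · obtain ⟨r, hr, hτr⟩ := h.exists_triangle (h.mem_of_notMem htX hv) hτ hτt
    exact .inr ⟨r, hYR (hstar r hr (hτr hvτ)), (Finset.erase_subset v τ).trans hτr⟩
  · exact .inl ⟨(Finset.subset_insert_iff_of_notMem hvτ).1 hτt, h.mem_of_mem_inter htX⟩

theorem shellsOnto_union (h : IsConeAttachment L D v S X) :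
    ShellsOnto (L ∪ cone v D) L 3 (coneFacets v (S ∪ X)) := by
  refine h.inter.toIsDiskOrSphere.shelling_induction
    (motive := fun R ↦ ShellsOnto (L ∪ cone v D) L 3 (coneFacets v R)) h.shellsOnto_inter
    (fun R t hRSX hXR hR ht hRt ↦ ?_) h.isDiskOrSphere_union Finset.subset_union_right
  have htS : t ∈ S := (Finset.mem_union.1 (hRSX ht)).resolve_right
    fun htX ↦ Finset.notMem_erase t R (hXR htX)
  refine h.shellsOnto_of_erase hR hRSX ht (h.notMem_of_mem htS)
    (.inr (h.inter.nonempty.mono hXR)) (fun τ hτ hτt ↦ ?_) hRt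
  obtain ⟨r, hr, hτr⟩ := h.exists_triangle htS hτ hτt
  exact .inr ⟨r, hXR hr, (Finset.erase_subset v τ).trans hτr⟩

theorem mem_coneFacets_iff (h : IsConeAttachment L D v S X) :
    σ ∈ coneFacets v (S ∪ X) ↔ σ ∈ (L ∪ cone v D) \ L ∧ σ.card = 4 := by
  rw [mem_coneFacets]
  constructor
  · rintro ⟨t, ht, hv, rfl⟩
    have htS : t ∈ S := (Finset.mem_union.1 ht).elim id (h.mem_of_notMem · hv)
    have hcone := h.insert_mem_cone htS
    refine ⟨⟨.inr hcone, fun hL ↦ ?_⟩, h.card_insert htS⟩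
    have hcard_le := h.inter.card_le ⟨hL, hcone⟩
    have hcard := h.card_insert htS
    omega
  · rintro ⟨⟨hσ, hL⟩, hcard⟩
    rcases mem_cone.1 (hσ.resolve_left hL) with hσD | ⟨τ, hτ, rfl⟩ | rfl
    · have := h.base.card_le hσD
      omega
    · have hv := h.notMem τ hτ
      rw [Finset.card_insert_of_notMem hv] at hcard
      exact ⟨τ, Finset.mem_union_left X ((h.base.mem_iff τ).2 ⟨hτ, by omega⟩), hv, rfl⟩
    · simp at hcard

theorem shellsDownTo (h : IsConeAttachment L D v S X) (hfin : (L ∪ cone v D).Finite)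
    (hpure : PureDim (L ∪ cone v D) 3) (hLpure : PureDim L 3) :
    ShellsDownTo (L ∪ cone v D) 3 L := by
  refine h.shellsOnto_union.shellsDownTo hfin hpure ?_ Set.subset_union_left h.isComplex hLpure
    fun _ ↦ h.mem_coneFacets_iff
  refine ⟨fun σ hσ ↦ hσ.elim (h.isComplex.1 σ) (h.isComplex_cone.1 σ), fun σ hσ τ hτ hne ↦ ?_⟩
  exact hσ.imp (fun hL ↦ h.isComplex.2 σ hL τ hτ hne)
    fun hcone ↦ h.isComplex_cone.2 σ hcone τ hτ hne

end IsConeAttachment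

/-! ### Invariance of domain in the plane -/

section Plane

open Topology Metric

/-- A loop in the punctured plane has a continuous logarithm; this expresses that its winding
number around `0` vanishes. -/
def HasLog (g : Circle → ℂ) : Prop :=
  ∃ l : Circle → ℂ, Continuous l ∧ ∀ z, Complex.exp (l z) = g z

theorem hasLog_const {c : ℂ} (hc : c ≠ 0) : HasLog fun _ ↦ c :=
  ⟨fun _ ↦ Complex.log c, continuous_const, fun _ ↦ Complex.exp_log hc⟩

theorem HasLog.of_homotopy {H : unitInterval × Circle → ℂ} (hH : Continuous H)
    (hne : ∀ p, H p ≠ 0) (hlog : HasLog fun z ↦ H (0, z)) : HasLog fun z ↦ H (1, z) := by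
  obtain ⟨l, hl, hexp⟩ := hlog
  have cov := Complex.isCoveringMap_exp
  let H' : C(unitInterval × Circle, {z : ℂ // z ≠ 0}) := ⟨fun p ↦ ⟨H p, hne p⟩, by fun_prop⟩
  have hstart (z : Circle) : H' (0, z) = ⟨Complex.exp (l z), Complex.exp_ne_zero _⟩ :=
    Subtype.ext (hexp z).symm
  refine ⟨fun z ↦ cov.liftHomotopy H' ⟨l, hl⟩ hstart (1, z), by fun_prop, fun z ↦ ?_⟩
  exact congrArg Subtype.val (congrFun (cov.liftHomotopy_lifts H' ⟨l, hl⟩ hstart) (1, z))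

theorem not_hasLog_of_odd {g : Circle → ℂ} (hodd : ∀ z, g (-z) = -g z) : ¬ HasLog g := by
  rintro ⟨l, hl, hexp⟩
  have exists_int (z : Circle) : ∃ n : ℤ, (l (-z) - l z).im = (2 * n + 1) * Real.pi := by
    have hshift : Complex.exp (l (-z)) = Complex.exp (l z + Real.pi * Complex.I) := by
      rw [Complex.exp_add, Complex.exp_pi_mul_I, hexp, hexp, hodd, mul_neg_one]
    obtain ⟨n, hn⟩ := Complex.exp_eq_exp_iff_exists_int.1 hshift
    refine ⟨n, ?_⟩
    rw [hn]
    simp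
    ring
  choose n hn using exists_int
  have hn' (z : Circle) : (n z : ℝ) = ((l (-z) - l z).im / Real.pi - 1) / 2 := by
    rw [hn]
    field_simp [Real.pi_ne_zero]
    ring
  have hcont : Continuous n := by
    refine Int.isClosedEmbedding_coe_real.isEmbedding.continuous_iff.2 ?_
    simp only [Function.comp_def, hn']
    fun_prop
  have hconst : n (-1) = n 1 := PreconnectedSpace.constant inferInstance hcont
  have hcancel : (2 * n 1 + 1) * Real.pi + (2 * n (-1) + 1) * Real.pi = 0 := by
    rw [← hn, ← hn, neg_neg]
    simp
  rw [hconst] at hcancel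
  have hzero : (2 * n 1 + 1 : ℝ) = 0 := by
    have := mul_right_cancel₀ Real.pi_ne_zero
      (show (2 * (2 * n 1 + 1) : ℝ) * Real.pi = 0 * Real.pi by linarith)
    linarith
  have : 2 * n 1 + 1 = 0 := by exact_mod_cast hzero
  lia

theorem coe_circle_mem_closedBall (z : Circle) : (z : ℂ) ∈ closedBall (0 : ℂ) 1 := by
  rw [mem_closedBall_zero_iff, Circle.norm_coe]

theorem real_mul_circle_mem_closedBall {s : ℝ} (hs : |s| ≤ 1) (z : Circle) :
    (s : ℂ) * z ∈ closedBall (0 : ℂ) 1 := by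
  rwa [mem_closedBall_zero_iff, norm_mul, Circle.norm_coe, mul_one, Complex.norm_real]

variable {f : ℂ → ℂ}

theorem hasLog_sub_of_notMem_image (hf : ContinuousOn f (closedBall 0 1)) {w : ℂ}
    (hw : w ∉ f '' closedBall 0 1) : HasLog fun z ↦ f z - w := by
  have hmem (p : unitInterval × Circle) : ((p.1 : ℝ) : ℂ) * p.2 ∈ closedBall (0 : ℂ) 1 :=
    real_mul_circle_mem_closedBall (abs_le.2 ⟨by linarith [p.1.2.1], p.1.2.2⟩) p.2
  have hne (p : unitInterval × Circle) : f (((p.1 : ℝ) : ℂ) * p.2) - w ≠ 0 :=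
    fun h ↦ hw ⟨_, hmem p, sub_eq_zero.1 h⟩
  have hcont : Continuous fun p : unitInterval × Circle ↦ f (((p.1 : ℝ) : ℂ) * p.2) - w :=
    (hf.comp_continuous (by fun_prop) hmem).sub continuous_const
  have hstart : HasLog fun z : Circle ↦ f (((0 : unitInterval) : ℝ) * (z : ℂ)) - w := by
    simpa using hasLog_const (by simpa using hne (0, 1))
  simpa using HasLog.of_homotopy hcont hne hstart

theorem not_hasLog_sub_of_injOn (hf : ContinuousOn f (closedBall 0 1))
    (inj : Set.InjOn f (closedBall 0 1)) : ¬ HasLog fun z ↦ f z - f 0 := by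
  intro hlog
  have hmem (s : unitInterval) (z : Circle) : -((s : ℝ) : ℂ) * z ∈ closedBall (0 : ℂ) 1 := by
    simpa using real_mul_circle_mem_closedBall
      (s := -s) (abs_le.2 ⟨by linarith [s.2.2], by linarith [s.2.1]⟩) z
  have hcont : Continuous fun p : unitInterval × Circle ↦
      f p.2 - f (-((p.1 : ℝ) : ℂ) * p.2) :=
    (hf.comp_continuous (by fun_prop) fun p : unitInterval × Circle ↦
      coe_circle_mem_closedBall p.2).sub
      (hf.comp_continuous (by fun_prop) fun p ↦ hmem p.1 p.2)
  have hne (p : unitInterval × Circle) : f p.2 - f (-((p.1 : ℝ) : ℂ) * p.2) ≠ 0 := by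
    intro h
    have heq := inj (coe_circle_mem_closedBall p.2) (hmem p.1 p.2) (sub_eq_zero.1 h)
    have hs : (1 : ℂ) = ((-p.1 : ℝ) : ℂ) :=
      mul_right_cancel₀ (Circle.coe_ne_zero p.2) (by simpa using heq)
    have : (1 : ℝ) = -p.1 := by exact_mod_cast hs
    linarith [p.1.2.1]
  have hend : HasLog fun z ↦ f z - f (-z) := by
    simpa using HasLog.of_homotopy hcont hne (by simpa using hlog)
  exact not_hasLog_of_odd (fun z ↦ by simp) hend

theorem hasLog_sub_of_dist_lt (hf : ContinuousOn f (closedBall 0 1)) {w w' : ℂ}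
    (hdist : ∀ z : Circle, dist w w' < dist (f z) w')
    (hlog : HasLog fun z ↦ f z - w) : HasLog fun z ↦ f z - w' := by
  have hcont : Continuous fun p : unitInterval × Circle ↦
      f p.2 - (w + ((p.1 : ℝ) : ℂ) * (w' - w)) :=
    (hf.comp_continuous (by fun_prop) fun p : unitInterval × Circle ↦
      coe_circle_mem_closedBall p.2).sub (by fun_prop)
  have hne (p : unitInterval × Circle) : f p.2 - (w + ((p.1 : ℝ) : ℂ) * (w' - w)) ≠ 0 := by
    intro h
    have heq : f p.2 - w' = ((1 - p.1 : ℝ) : ℂ) * (w - w') := by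
      push_cast
      linear_combination h
    have hle : dist (f p.2) w' ≤ 1 * dist w w' := by
      rw [dist_eq_norm, heq, norm_mul, dist_eq_norm, Complex.norm_real, Real.norm_eq_abs,
        abs_of_nonneg (by linarith [p.1.2.2])]
      gcongr
      linarith [p.1.2.1]
    linarith [hdist p.2]
  simpa using HasLog.of_homotopy hcont hne (by simpa using hlog)

theorem image_unitDisk_mem_nhds (hf : ContinuousOn f (closedBall 0 1))
    (inj : Set.InjOn f (closedBall 0 1)) : f '' closedBall 0 1 ∈ 𝓝 (f 0) := by
  have hcircle : Continuous fun z : Circle ↦ f z := 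
    hf.comp_continuous (by fun_prop) coe_circle_mem_closedBall
  obtain ⟨z₀, hz₀⟩ : ∃ z₀ : Circle, ∀ z : Circle, dist (f z₀) (f 0) ≤ dist (f z) (f 0) := by
    obtain ⟨z₀, -, h⟩ := isCompact_univ.exists_isMinOn Set.univ_nonempty
      (hcircle.dist (continuous_const (y := f 0))).continuousOn
    exact ⟨z₀, fun z ↦ h (Set.mem_univ z)⟩
  have hpos : 0 < dist (f z₀) (f 0) :=
    dist_pos.2 fun h ↦ Circle.coe_ne_zero z₀ (inj (coe_circle_mem_closedBall z₀) (by simp) h)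
  refine mem_nhds_iff.2 ⟨_, hpos, fun w hw ↦ ?_⟩
  by_contra hmiss
  exact not_hasLog_sub_of_injOn hf inj (hasLog_sub_of_dist_lt hf
    (fun z ↦ (mem_ball.1 hw).trans_le (hz₀ z)) (hasLog_sub_of_notMem_image hf hmiss))

theorem image_mem_nhds_of_injOn {U : Set ℂ} {z₀ : ℂ} (hU : U ∈ 𝓝 z₀)
    (hf : ContinuousOn f U) (inj : Set.InjOn f U) : f '' U ∈ 𝓝 (f z₀) := by
  obtain ⟨r, hr, hrU⟩ := nhds_basis_closedBall.mem_iff.1 hU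
  have hmaps : Set.MapsTo (fun z : ℂ ↦ z₀ + r * z) (closedBall 0 1) U := fun z hz ↦ hrU <| by
    have hz : ‖z‖ ≤ 1 := by simpa using hz
    simpa [Complex.norm_real, abs_of_pos hr] using mul_le_of_le_one_right hr.le hz
  have hinj : Set.InjOn (fun z ↦ f (z₀ + r * z)) (closedBall 0 1) := fun z hz z' hz' h ↦ by
    simpa [hr.ne'] using inj (hmaps hz) (hmaps hz') h
  have hnhds := image_unitDisk_mem_nhds (hf.comp (by fun_prop) hmaps) hinj
  simp only [Function.comp_def, mul_zero, add_zero] at hnhds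
  exact Filter.mem_of_superset hnhds (Set.image_subset_iff.2 fun z hz ↦ ⟨_, hmaps hz, rfl⟩)

theorem not_injOn_of_real_valued {g : ℂ → ℝ} {U : Set ℂ} (hU : (interior U).Nonempty)
    (hg : ContinuousOn g U) : ¬ Set.InjOn g U := by
  intro inj
  obtain ⟨z₀, hz₀⟩ := hU
  have hnhds := image_mem_nhds_of_injOn (mem_interior_iff_mem_nhds.1 hz₀)
    (Complex.continuous_ofReal.comp_continuousOn hg) (Complex.ofReal_injective.comp_injOn inj)
  obtain ⟨ε, hε, hball⟩ := Metric.mem_nhds_iff.1 hnhds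
  obtain ⟨z, -, hz⟩ := hball (show (g z₀ : ℂ) + (ε / 2 : ℝ) * Complex.I ∈ ball _ ε by
    simp [abs_of_pos hε, hε])
  have him := congrArg Complex.im hz
  simp only [Function.comp_apply, Complex.ofReal_im, Complex.add_im, Complex.mul_I_im,
    Complex.ofReal_re, zero_add] at him
  linarith

end Plane

/-! ### Convex sets with finitely many points removed -/

section ConvexDiff

open Topology Metric

variable {E : Type*} [NormedAddCommGroup E] [NormedSpace ℝ E] {s : Set E}

theorem isPreconnected_unitBall_diff_countable (hE : 1 < Module.rank ℝ E) (hs : s.Countable) :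
    IsPreconnected (ball (0 : E) 1 \ s) := by
  let h : E → E := fun x ↦ Homeomorph.unitBall x
  have hinj : Function.Injective h := Subtype.val_injective.comp Homeomorph.unitBall.injective
  have himage : h '' (h ⁻¹' s)ᶜ = ball (0 : E) 1 \ s := by
    have hrange : Set.range h = ball (0 : E) 1 := by
      rw [show h = Subtype.val ∘ Homeomorph.unitBall from rfl,
        Homeomorph.unitBall.surjective.range_comp, Subtype.range_coe]
    rw [← Set.preimage_compl, Set.image_preimage_eq_inter_range, hrange, Set.inter_comm]
    rfl
  rw [← himage]
  exact ((hs.preimage hinj).isConnected_compl_of_one_lt_rank hE).isPreconnected.image h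
    (by fun_prop)

theorem isPreconnected_convex_diff_countable (hE : 1 < Module.rank ℝ E) {C : Set E}
    (hC : Convex ℝ C) (hint : (interior C).Nonempty) (hbdd : Bornology.IsBounded C)
    (hs : s.Countable) : IsPreconnected (C \ s) := by
  obtain ⟨h, hball, -, -⟩ :=
    exists_homeomorph_image_interior_closure_frontier_eq_unitBall hC hint hbdd
  have hpre : IsPreconnected (interior C \ s) := by
    rw [← Homeomorph.isPreconnected_image h, Set.image_sdiff h.injective, hball]
    exact isPreconnected_unitBall_diff_countable hE (hs.image h)
  have : Nontrivial E := (rank_pos_iff_nontrivial (R := ℝ)).1 (zero_lt_one.trans hE)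
  refine hpre.subset_closure (Set.sdiff_subset_sdiff_left interior_subset) ?_
  calc C \ s ⊆ closure (interior C) := by
        rw [hC.closure_interior_eq_closure_of_nonempty_interior hint]
        exact Set.sdiff_subset.trans subset_closure
    _ ⊆ closure (interior C \ s) :=
        closure_minimal ((hs.dense_compl ℝ).open_subset_closure_inter isOpen_interior)
          isClosed_closure

end ConvexDiff

/-! ### Čech cocycles on contractible spaces -/

section Cech

variable {B ι A : Type*} [TopologicalSpace B] [AddGroup A] [TopologicalSpace A]
  [DiscreteTopology A]

/-- A family `c x y` of constants is a Čech `1`-cocycle with coefficients in `A` for the family of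
sets `U x`. -/
structure IsCechCocycle (U : ι → Set B) (c : ι → ι → A) : Prop where
  self (x : ι) : c x x = 0
  add {x y z : ι} (h : (U x ∩ U y ∩ U z).Nonempty) : c x y + c y z = c x z

variable {U : ι → Set B} {c : ι → ι → A}

/-- The covering with fibre `A` glued from the products `U x × A` by right translations by
`c x y`; the function `idx` chooses a chart at every point. -/
def IsCechCocycle.covering (hc : IsCechCocycle U c) (hU : ∀ x, IsOpen (U x)) (idx : B → ι)
    (hidx : ∀ b, b ∈ U (idx b)) : FiberBundleCore ι B A where
  baseSet := U
  isOpen_baseSet := hU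
  indexAt := idx
  mem_baseSet_at := hidx
  coordChange x y _ a := a + c x y
  coordChange_self x _ _ a := by simp [hc.self]
  continuousOn_coordChange x y :=
    ((continuous_of_discreteTopology (f := fun a : A ↦ a + c x y)).comp
      continuous_snd).continuousOn
  coordChange_comp x y z b hb a := by rw [add_assoc, hc.add ⟨b, hb⟩]

theorem exists_continuous_section [ContractibleSpace B] {F : Type*} [TopologicalSpace F]
    [DiscreteTopology F] [Nonempty F] (Z : FiberBundleCore ι B F) :
    ∃ s : B → Bundle.TotalSpace F Z.Fiber, Continuous s ∧ ∀ b, (s b).proj = b := by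
  have cov : IsCoveringMap (Bundle.TotalSpace.proj : Bundle.TotalSpace F Z.Fiber → B) :=
    FiberBundle.isCoveringMap
  obtain ⟨b₀, ⟨H⟩⟩ := id_nullhomotopic B
  let e₀ : Bundle.TotalSpace F Z.Fiber := ⟨b₀, (Classical.arbitrary F : F)⟩
  have hstart (b : B) : H.symm (0, b) = (ContinuousMap.const B e₀ b).proj := by simp [e₀]
  refine ⟨fun b ↦ cov.liftHomotopy H.symm (.const B e₀) hstart (1, b), by fun_prop, fun b ↦ ?_⟩
  simpa using congrFun (cov.liftHomotopy_lifts H.symm (.const B e₀) hstart) (1, b)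

theorem IsCechCocycle.exists_locally_constant [ContractibleSpace B] (hc : IsCechCocycle U c)
    (hU : ∀ x, IsOpen (U x)) (hcover : ∀ b, ∃ x, b ∈ U x) :
    ∃ g : ι → B → A, (∀ x, ContinuousOn (g x) (U x)) ∧
      ∀ x y b, b ∈ U x → b ∈ U y → g y b = g x b + c x y := by
  choose idx hidx using hcover
  let Z := hc.covering hU idx hidx
  obtain ⟨s, hs, hproj⟩ := exists_continuous_section Z
  refine ⟨fun x b ↦ (Z.localTriv x (s b)).2, fun x ↦ ?_, fun x y b hx hy ↦ ?_⟩
  · refine continuous_snd.comp_continuousOn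
      ((Z.localTriv x).continuousOn_toFun.comp hs.continuousOn fun b hb ↦ ?_)
    rw [Z.mem_localTriv_source, hproj]
    exact hb
  · have hb : b ∈ U (idx (s b).proj) := by
      rw [hproj]
      exact hidx b
    simp only [Z.localTriv_apply]
    exact ((add_assoc _ _ _).trans (congrArg _ (hc.add ⟨b, ⟨hb, hx⟩, hy⟩))).symm

theorem IsCechCocycle.exists_potential [ContractibleSpace B] (hc : IsCechCocycle U c)
    (hU : ∀ x, IsOpen (U x)) (hcover : ∀ b, ∃ x, b ∈ U x)
    (hconn : ∀ x, IsPreconnected (U x)) :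
    ∃ γ : ι → A, ∀ x y, (U x ∩ U y).Nonempty → γ y = γ x + c x y := by
  obtain ⟨g, hg, hgc⟩ := hc.exists_locally_constant hU hcover
  have hconst (x : ι) : ∃ a, ∀ b ∈ U x, g x b = a := by
    rcases (U x).eq_empty_or_nonempty with hempty | ⟨b₀, hb₀⟩
    · exact ⟨0, by simp [hempty]⟩
    · exact ⟨g x b₀, fun b hb ↦ (hconn x).constant (hg x) hb hb₀⟩
  choose γ hγ using hconst
  refine ⟨γ, fun x y ⟨b, hbx, hby⟩ ↦ ?_⟩
  rw [← hγ y b hby, ← hγ x b hbx, hgc x y b hbx hby]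

end Cech

/-! ### Barycentric coordinates -/

section Barycentric

variable {E : Type*} [AddCommGroup E] [Module ℝ E] {σ τ : Finset E} {w w' : E → ℝ} {x : E}

/-- The function `w`, extended by zero outside of `σ`, is a system of weights expressing `x` as
a convex combination of the points of `σ`. -/
structure IsBarycentric (σ : Finset E) (w : E → ℝ) (x : E) : Prop where
  nonneg (i : E) : 0 ≤ w i
  eq_zero {i : E} (hi : i ∉ σ) : w i = 0
  sum_eq_one : ∑ i ∈ σ, w i = 1
  sum_smul_eq : ∑ i ∈ σ, w i • i = x

theorem IsBarycentric.mem_convexHull (h : IsBarycentric σ w x) : x ∈ convexHull ℝ (σ : Set E) :=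
  Finset.mem_convexHull'.2 ⟨w, fun i _ ↦ h.nonneg i, h.sum_eq_one, h.sum_smul_eq⟩

theorem exists_isBarycentric (hx : x ∈ convexHull ℝ (σ : Set E)) :
    ∃ w, IsBarycentric σ w x := by
  obtain ⟨w, hnonneg, hsum, hx⟩ := Finset.mem_convexHull'.1 hx
  refine ⟨(σ : Set E).indicator w, Set.indicator_nonneg hnonneg, fun hi ↦ ?_, ?_, ?_⟩
  · exact Set.indicator_of_notMem (by simpa using hi) w
  · rw [← hsum]
    exact Finset.sum_congr rfl fun i hi ↦ Set.indicator_of_mem (by simpa using hi) w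
  · rw [← hx]
    exact Finset.sum_congr rfl fun i hi ↦ by
      rw [Set.indicator_of_mem (by simpa using hi)]

theorem isBarycentric_of_subset (hστ : σ ⊆ τ) (hnonneg : ∀ i, 0 ≤ w i) (hzero : ∀ i ∉ σ, w i = 0)
    (hsum : ∑ i ∈ τ, w i = 1) : IsBarycentric σ w (∑ i ∈ τ, w i • i) where
  nonneg := hnonneg
  eq_zero := hzero _
  sum_eq_one := by rw [← hsum, Finset.sum_subset hστ fun i _ hi ↦ hzero i hi]
  sum_smul_eq := Finset.sum_subset hστ fun i _ hi ↦ by rw [hzero i hi, zero_smul]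

theorem IsBarycentric.mono (h : IsBarycentric σ w x) (hστ : σ ⊆ τ) : IsBarycentric τ w x where
  nonneg := h.nonneg
  eq_zero hi := h.eq_zero fun hiσ ↦ hi (hστ hiσ)
  sum_eq_one := by rw [← h.sum_eq_one, Finset.sum_subset hστ fun i _ hi ↦ h.eq_zero hi]
  sum_smul_eq := by
    rw [← h.sum_smul_eq,
      Finset.sum_subset hστ fun i _ hi ↦ by rw [h.eq_zero hi, zero_smul]]

theorem IsBarycentric.eq_of_affineIndependent (hσ : AffineIndependent ℝ ((↑) : σ → E))
    (h : IsBarycentric σ w x) (h' : IsBarycentric σ w' x) : w = w' := by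
  funext i
  by_cases hi : i ∈ σ
  · refine hσ.eq_of_sum_eq_sum (s := .univ) (w₁ := fun j : σ ↦ w j)
      (w₂ := fun j : σ ↦ w' j) ?_ ?_
      ⟨i, hi⟩ (Finset.mem_univ _)
    · rw [Finset.sum_coe_sort σ w, Finset.sum_coe_sort σ w', h.sum_eq_one, h'.sum_eq_one]
    · rw [Finset.sum_coe_sort σ fun j ↦ w j • j, Finset.sum_coe_sort σ fun j ↦ w' j • j,
        h.sum_smul_eq, h'.sum_smul_eq]
  · rw [h.eq_zero hi, h'.eq_zero hi]

variable {K : Geometry.SimplicialComplex ℝ E}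

theorem IsBarycentric.eq_of_mem_faces (hσ : σ ∈ K.faces) (hτ : τ ∈ K.faces)
    (h : IsBarycentric σ w x) (h' : IsBarycentric τ w' x) : w = w' := by
  have hinter := K.inter_subset_convexHull hσ hτ ⟨h.mem_convexHull, h'.mem_convexHull⟩
  rw [← Finset.coe_inter] at hinter
  obtain ⟨u, hu⟩ := exists_isBarycentric hinter
  rw [h.eq_of_affineIndependent (K.indep hσ) (hu.mono Finset.inter_subset_left),
    h'.eq_of_affineIndependent (K.indep hτ) (hu.mono Finset.inter_subset_right)]

/-- The barycentric coordinates of the point `x` in the geometric complex `K`, indexed by all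
points of the ambient space; they are all `0` when `x` lies outside of `K`. -/
noncomputable def bary (K : Geometry.SimplicialComplex ℝ E) (x : E) : E → ℝ :=
  if h : ∃ w, ∃ σ ∈ K.faces, IsBarycentric σ w x then h.choose else 0

theorem IsBarycentric.bary_eq (hσ : σ ∈ K.faces) (h : IsBarycentric σ w x) : bary K x = w := by
  have hex : ∃ w, ∃ σ ∈ K.faces, IsBarycentric σ w x := ⟨w, σ, hσ, h⟩
  obtain ⟨τ, hτ, h'⟩ := hex.choose_spec
  rw [bary, dif_pos hex]
  exact h'.eq_of_mem_faces hτ hσ h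

theorem isBarycentric_bary (hσ : σ ∈ K.faces) (hx : x ∈ convexHull ℝ (σ : Set E)) :
    IsBarycentric σ (bary K x) x := by
  obtain ⟨w, h⟩ := exists_isBarycentric hx
  rwa [h.bary_eq hσ]

theorem mem_of_bary_pos (hσ : σ ∈ K.faces) (hx : x ∈ convexHull ℝ (σ : Set E)) {i : E}
    (hi : 0 < bary K x i) : i ∈ σ := by
  by_contra hiσ
  exact hi.ne' ((isBarycentric_bary hσ hx).eq_zero hiσ)

theorem bary_injOn (hσ : σ ∈ K.faces) (hτ : τ ∈ K.faces) {y : E}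
    (hx : x ∈ convexHull ℝ (σ : Set E)) (hy : y ∈ convexHull ℝ (τ : Set E))
    (hxy : bary K x = bary K y) : x = y := by
  have hbx := (isBarycentric_bary hσ hx).mono (Finset.subset_union_left (s₂ := τ))
  have hby := (isBarycentric_bary hτ hy).mono (Finset.subset_union_right (s₁ := σ))
  rw [← hbx.sum_smul_eq, hxy, hby.sum_smul_eq]

end Barycentric

section ContinuousCoord

variable {E : Type*} [NormedAddCommGroup E] [NormedSpace ℝ E] [FiniteDimensional ℝ E]
  {σ : Finset E}

theorem exists_continuous_coord (hσ : AffineIndependent ℝ ((↑) : σ → E)) {c : E} (hc : c ∈ σ) :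
    ∃ ℓ : E → ℝ, Continuous ℓ ∧ ∀ w x, IsBarycentric σ w x → ℓ x = w c := by
  obtain ⟨s, hσs, hs, htop⟩ := exists_subset_affineIndependent_affineSpan_eq_top (k := ℝ) (V := E)
    (s := (σ : Set E)) hσ
  let b : AffineBasis s ℝ E := ⟨(↑), hs, by rwa [Subtype.range_coe]⟩
  refine ⟨b.coord ⟨c, hσs hc⟩, AffineMap.continuous_of_finiteDimensional _, fun w x h ↦ ?_⟩
  have hx : x = σ.affineCombination ℝ id w := by
    rw [σ.affineCombination_eq_linear_combination _ _ h.sum_eq_one]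
    exact h.sum_smul_eq.symm
  have hvertex (i : E) (hi : i ∈ σ) : b.coord ⟨c, hσs hc⟩ i = if i = c then 1 else 0 := by
    refine (b.coord_apply ⟨c, hσs hc⟩ ⟨i, hσs hi⟩).trans ?_
    simp [eq_comm]
  rw [hx, σ.map_affineCombination _ _ h.sum_eq_one,
    σ.affineCombination_eq_linear_combination _ _ h.sum_eq_one]
  calc ∑ i ∈ σ, w i • (b.coord ⟨c, hσs hc⟩ ∘ id) i = ∑ i ∈ σ, if i = c then w i else 0 :=
        Finset.sum_congr rfl fun i hi ↦ by simp [hvertex i hi]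
    _ = w c := by simp [hc]

theorem continuousOn_bary_convexHull {K : Geometry.SimplicialComplex ℝ E} (hσ : σ ∈ K.faces)
    (i : E) : ContinuousOn (fun x ↦ bary K x i) (convexHull ℝ (σ : Set E)) := by
  by_cases hi : i ∈ σ
  · obtain ⟨ℓ, hℓ, hcoord⟩ := exists_continuous_coord (K.indep hσ) hi
    exact hℓ.continuousOn.congr fun x hx ↦ (hcoord _ x (isBarycentric_bary hσ hx)).symm
  · exact continuousOn_const.congr fun x hx ↦ (isBarycentric_bary hσ hx).eq_zero hi

end ContinuousCoord

/-! ### Disk charts -/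

section DiskChart

open Topology Metric

variable {X : Type*} [TopologicalSpace X] {e : PartialEquiv X ℂ} {S : Set X}

/-- The partial bijection `e` restricts to a homeomorphism from `S` onto the closed unit disk. -/
structure IsDiskChart (e : PartialEquiv X ℂ) (S : Set X) : Prop where
  source_eq : e.source = S
  target_eq : e.target = closedBall 0 1
  continuousOn : ContinuousOn e S
  continuousOn_symm : ContinuousOn e.symm (closedBall 0 1)

theorem exists_isDiskChart {N : ℕ} {S : Set (EuclideanSpace ℝ (Fin N))} (hS : IsBallSet 2 S) :
    ∃ e : PartialEquiv (EuclideanSpace ℝ (Fin N)) ℂ, IsDiskChart e S := by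
  obtain ⟨h⟩ := hS
  let r : ℂ ≃ₗᵢ[ℝ] EuclideanSpace ℝ (Fin 2) := Complex.orthonormalBasisOneI.repr
  have hr : r '' closedBall 0 1 = closedBall 0 1 := by rw [r.image_closedBall, map_zero]
  let k : S ≃ₜ closedBall (0 : ℂ) 1 :=
    h.trans ((r.toHomeomorph.image (closedBall 0 1)).trans (.setCongr hr)).symm
  let F (x : EuclideanSpace ℝ (Fin N)) : ℂ := if hx : x ∈ S then k ⟨x, hx⟩ else 0
  let G (z : ℂ) : EuclideanSpace ℝ (Fin N) :=
    if hz : z ∈ closedBall (0 : ℂ) 1 then k.symm ⟨z, hz⟩ else 0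
  have hF (x : S) : F x = k x := dif_pos x.2
  have hG (z : closedBall (0 : ℂ) 1) : G z = k.symm z := dif_pos z.2
  refine ⟨⟨F, G, S, closedBall 0 1, fun x hx ↦ ?_, fun z hz ↦ ?_, fun x hx ↦ ?_, fun z hz ↦ ?_⟩,
    rfl, rfl, ?_, ?_⟩
  · rw [hF ⟨x, hx⟩]
    exact (k _).2
  · rw [hG ⟨z, hz⟩]
    exact (k.symm _).2
  · rw [hF ⟨x, hx⟩, hG, k.symm_apply_apply]
  · rw [hG ⟨z, hz⟩, hF, k.apply_symm_apply]
  · refine continuousOn_iff_continuous_domRestrict.2 ?_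
    exact (continuous_subtype_val.comp k.continuous).congr fun x ↦ (hF x).symm
  · refine continuousOn_iff_continuous_domRestrict.2 ?_
    exact (continuous_subtype_val.comp k.symm.continuous).congr fun z ↦ (hG z).symm

namespace IsDiskChart

variable {m : X}

theorem map_mem (h : IsDiskChart e S) (hm : m ∈ S) : e m ∈ closedBall (0 : ℂ) 1 :=
  h.target_eq ▸ e.map_source (h.source_eq ▸ hm)

theorem symm_map_mem (h : IsDiskChart e S) {z : ℂ} (hz : z ∈ closedBall (0 : ℂ) 1) :
    e.symm z ∈ S :=
  h.source_eq ▸ e.map_target (h.target_eq ▸ hz)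

theorem left_inv (h : IsDiskChart e S) (hm : m ∈ S) : e.symm (e m) = m :=
  e.left_inv (h.source_eq ▸ hm)

theorem right_inv (h : IsDiskChart e S) {z : ℂ} (hz : z ∈ closedBall (0 : ℂ) 1) :
    e (e.symm z) = z :=
  e.right_inv (h.target_eq ▸ hz)

theorem symm_injOn (h : IsDiskChart e S) : Set.InjOn e.symm (closedBall 0 1) :=
  h.target_eq ▸ e.symm.injOn

theorem injOn (h : IsDiskChart e S) : Set.InjOn e S :=
  h.source_eq ▸ e.injOn

theorem isPreconnected_image_diff_finite (h : IsDiskChart e S) {C : Set ℂ} (hC : Convex ℝ C)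
    (hint : (interior C).Nonempty) (hCball : C ⊆ closedBall 0 1) {s : Set X} (hs : s.Finite) :
    IsPreconnected (e.symm '' C \ s) := by
  have hpre : IsPreconnected (C \ e '' (s ∩ S)) :=
    isPreconnected_convex_diff_countable (by simp [Complex.rank_real_complex]) hC hint
      (isBounded_closedBall.subset hCball) ((hs.inter_of_left S).image e).countable
  have himage : e.symm '' C \ s = e.symm '' (C \ e '' (s ∩ S)) := by
    ext y
    constructor
    · rintro ⟨⟨z, hz, rfl⟩, hys⟩
      refine ⟨z, ⟨hz, ?_⟩, rfl⟩
      rintro ⟨x, ⟨hxs, hxS⟩, rfl⟩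
      exact hys ((h.left_inv hxS).symm ▸ hxs)
    · rintro ⟨z, ⟨hz, hzs⟩, rfl⟩
      exact ⟨⟨z, hz, rfl⟩, fun hys ↦
        hzs ⟨_, ⟨hys, h.symm_map_mem (hCball hz)⟩, h.right_inv (hCball hz)⟩⟩
  rw [himage]
  exact hpre.image _ (h.continuousOn_symm.mono (Set.sdiff_subset.trans hCball))

theorem isPreconnected_diff_finite (h : IsDiskChart e S) {s : Set X} (hs : s.Finite) :
    IsPreconnected (S \ s) := by
  have himage : e.symm '' closedBall 0 1 = S := by
    rw [← h.target_eq, e.symm_image_target_eq_source, h.source_eq]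
  rw [← himage]
  refine h.isPreconnected_image_diff_finite (convex_closedBall _ _) ?_ subset_rfl hs
  rw [interior_closedBall _ one_ne_zero]
  exact nonempty_ball.2 one_pos

theorem exists_convex_image_mem_nhdsWithin (h : IsDiskChart e S) (hm : m ∈ S) {U : Set X}
    (hU : U ∈ 𝓝[S] m) :
    ∃ C ⊆ closedBall (0 : ℂ) 1, Convex ℝ C ∧ (interior C).Nonempty ∧ e.symm '' C ⊆ U ∧
      e.symm '' C ∈ 𝓝[S] m := by
  have hcont : Filter.Tendsto e.symm (𝓝[closedBall 0 1] (e m)) (𝓝[S] m) := by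
    have := h.continuousOn_symm.continuousWithinAt (h.map_mem hm)
    simpa only [h.left_inv hm] using this.tendsto_nhdsWithin fun z ↦ h.symm_map_mem
  obtain ⟨ε, hε, hball⟩ := Metric.mem_nhdsWithin_iff.1 (hcont hU)
  refine ⟨closedBall 0 1 ∩ ball (e m) ε, Set.inter_subset_left,
    (convex_closedBall _ _).inter (convex_ball _ _), ?_, ?_, ?_⟩
  · rw [interior_inter, isOpen_ball.interior_eq, interior_closedBall _ one_ne_zero, Set.inter_comm]
    have hclosure : e m ∈ closure (ball (0 : ℂ) 1) := by
      rw [closure_ball _ one_ne_zero]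
      exact h.map_mem hm
    exact mem_closure_iff_nhds.1 hclosure _ (ball_mem_nhds _ hε)
  · rintro _ ⟨z, ⟨hz, hzε⟩, rfl⟩
    exact hball ⟨hzε, hz⟩
  · filter_upwards [self_mem_nhdsWithin, h.continuousOn.continuousWithinAt hm (ball_mem_nhds _ hε)]
      with y hyS hyε
    exact ⟨e y, ⟨h.map_mem hyS, hyε⟩, h.left_inv hyS⟩

theorem exists_isPreconnected_diff_finite (h : IsDiskChart e S) (hm : m ∈ S) {U : Set X}
    (hU : U ∈ 𝓝[S] m) {s : Set X} (hs : s.Finite) :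
    ∃ W ⊆ U, W ∈ 𝓝[S] m ∧ IsPreconnected (W \ s) := by
  obtain ⟨C, hCball, hC, hint, hCU, hCm⟩ := h.exists_convex_image_mem_nhdsWithin hm hU
  exact ⟨_, hCU, hCm, h.isPreconnected_image_diff_finite hC hint hCball hs⟩

theorem not_injOn_real_valued (h : IsDiskChart e S) (hm : m ∈ S) {U : Set X}
    (hU : U ∈ 𝓝[S] m) {g : X → ℝ} (hg : ContinuousOn g S) : ¬ Set.InjOn g U := by
  intro inj
  obtain ⟨C, hCball, -, hint, hCU, -⟩ := h.exists_convex_image_mem_nhdsWithin hm hU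
  refine not_injOn_of_real_valued hint (g := g ∘ e.symm) ?_ ?_
  · exact hg.comp (h.continuousOn_symm.mono hCball) fun z hz ↦ h.symm_map_mem (hCball hz)
  · exact inj.comp (h.symm_injOn.mono hCball) (Set.mapsTo_iff_image_subset.2 hCU)

theorem map_mem_ball_and_image_mem_nhdsWithin (h : IsDiskChart e S) {f : ℂ → X} {U : Set ℂ}
    (hU : U ∈ 𝓝 0) (hf : ContinuousOn f U) (inj : Set.InjOn f U) (hfU : Set.MapsTo f U S) :
    e (f 0) ∈ ball (0 : ℂ) 1 ∧ f '' U ∈ 𝓝[S] (f 0) := by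
  have hnhds : (e ∘ f) '' U ∈ 𝓝 (e (f 0)) :=
    image_mem_nhds_of_injOn hU (h.continuousOn.comp hf hfU) (h.injOn.comp inj hfU)
  constructor
  · rw [← interior_closedBall _ one_ne_zero, mem_interior_iff_mem_nhds]
    refine Filter.mem_of_superset hnhds ?_
    rintro _ ⟨z, hz, rfl⟩
    exact h.map_mem (hfU hz)
  · filter_upwards [self_mem_nhdsWithin,
      h.continuousOn.continuousWithinAt (hfU (mem_of_mem_nhds hU)) hnhds] with y hyS hy
    obtain ⟨z, hz, hzy⟩ := hy
    exact ⟨z, hz, h.injOn (hfU hz) hyS hzy⟩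

theorem image_mem_nhds_of_map_mem_ball (h : IsDiskChart e S) (hm : m ∈ S)
    (hball : e m ∈ ball (0 : ℂ) 1) {U : Set X} (hU : U ∈ 𝓝[S] m) {f : X → ℂ}
    (hf : ContinuousOn f S) (inj : Set.InjOn f U) : f '' U ∈ 𝓝 (f m) := by
  have hball' : closedBall (0 : ℂ) 1 ∈ 𝓝 (e m) :=
    Filter.mem_of_superset (isOpen_ball.mem_nhds hball) ball_subset_closedBall
  have hcont : Filter.Tendsto e.symm (𝓝 (e m)) (𝓝[S] m) := by
    have := h.continuousOn_symm.continuousWithinAt (h.map_mem hm)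
    simpa only [h.left_inv hm, nhdsWithin_eq_nhds.2 hball'] using
      this.tendsto_nhdsWithin fun z ↦ h.symm_map_mem
  have hnhds := image_mem_nhds_of_injOn (f := f ∘ e.symm) (Filter.inter_mem hball' (hcont hU))
    (hf.comp (h.continuousOn_symm.mono Set.inter_subset_left) fun z hz ↦ h.symm_map_mem hz.1)
    (inj.comp (h.symm_injOn.mono Set.inter_subset_left) fun z hz ↦ hz.2)
  rw [Function.comp_apply, h.left_inv hm] at hnhds
  refine Filter.mem_of_superset hnhds ?_
  rintro _ ⟨z, hz, rfl⟩
  exact ⟨e.symm z, hz.2, rfl⟩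

end IsDiskChart

end DiskChart

/-! ### Triangulated disks -/

section ConvexCombination

variable {E : Type*} [AddCommGroup E] [Module ℝ E] {σ : Finset E} {w w' : E → ℝ} {x y : E}

theorem IsBarycentric.eq_of_forall_ne (h : IsBarycentric σ w x) (h' : IsBarycentric σ w' y) {j : E}
    (heq : ∀ i ∈ σ, i ≠ j → w i = w' i) : w = w' := by
  have hrest : ∑ i ∈ σ.erase j, w i = ∑ i ∈ σ.erase j, w' i :=
    Finset.sum_congr rfl fun i hi ↦ heq i (Finset.mem_of_mem_erase hi) (Finset.ne_of_mem_erase hi)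
  funext i
  by_cases hi : i ∈ σ
  · by_cases hij : i = j
    · subst hij
      have hsum := h.sum_eq_one.trans h'.sum_eq_one.symm
      rwa [← Finset.add_sum_erase σ w hi, ← Finset.add_sum_erase σ w' hi, hrest,
        add_left_inj] at hsum
    · exact heq i hi hij
  · rw [h.eq_zero hi, h'.eq_zero hi]

theorem IsBarycentric.lineMap (h : IsBarycentric σ w x) (h' : IsBarycentric σ w' y) {s : ℝ}
    (hs : s ∈ Set.Icc (0 : ℝ) 1) :
    IsBarycentric σ (AffineMap.lineMap w w' s) (AffineMap.lineMap x y s) where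
  nonneg i := by
    rw [AffineMap.lineMap_apply_module]
    exact add_nonneg (mul_nonneg (sub_nonneg.2 hs.2) (h.nonneg i)) (mul_nonneg hs.1 (h'.nonneg i))
  eq_zero hi := by simp [AffineMap.lineMap_apply_module, h.eq_zero hi, h'.eq_zero hi]
  sum_eq_one := by
    simp [AffineMap.lineMap_apply_module, Finset.sum_add_distrib, ← Finset.mul_sum, h.sum_eq_one,
      h'.sum_eq_one]
  sum_smul_eq := by
    simp only [AffineMap.lineMap_apply_module, Pi.add_apply, Pi.smul_apply, smul_eq_mul, add_smul,
      mul_smul, Finset.sum_add_distrib, ← Finset.smul_sum, h.sum_smul_eq, h'.sum_smul_eq]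

theorem exists_isBarycentric_pos (hσ : σ.Nonempty) :
    ∃ w x, IsBarycentric σ w x ∧ ∀ i ∈ σ, 0 < w i := by
  have hcard : (0 : ℝ) < σ.card := by exact_mod_cast hσ.card_pos
  refine ⟨(σ : Set E).indicator fun _ ↦ (σ.card : ℝ)⁻¹, _,
    isBarycentric_of_subset subset_rfl (fun i ↦ ?_) (fun i hi ↦ ?_) ?_, fun i hi ↦ ?_⟩
  · exact Set.indicator_nonneg (fun _ _ ↦ inv_nonneg.2 hcard.le) i
  · simp [hi]
  · rw [Finset.sum_congr rfl fun i hi ↦ Set.indicator_of_mem (Finset.mem_coe.2 hi) _]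
    simp [hcard.ne']
  · simpa [hi] using hσ

end ConvexCombination

section Triangulation

open Topology Metric

variable {N : ℕ} {K : Geometry.SimplicialComplex ℝ (EuclideanSpace ℝ (Fin N))}
  {M : Set (Finset (EuclideanSpace ℝ (Fin N)))} {e : PartialEquiv (EuclideanSpace ℝ (Fin N)) ℂ}
  {σ τ : Finset (EuclideanSpace ℝ (Fin N))} {x : EuclideanSpace ℝ (Fin N)}

theorem mem_poly : x ∈ poly M ↔ ∃ σ ∈ M, x ∈ convexHull ℝ (σ : Set (EuclideanSpace ℝ (Fin N))) := by
  simp only [poly, Set.mem_iUnion, exists_prop]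

theorem convexHull_subset_poly (hσ : σ ∈ M) :
    convexHull ℝ (σ : Set (EuclideanSpace ℝ (Fin N))) ⊆ poly M :=
  fun _ hx ↦ mem_poly.2 ⟨σ, hσ, hx⟩

theorem continuousOn_bary_poly (hM : M ⊆ K.faces) (hfin : M.Finite)
    (i : EuclideanSpace ℝ (Fin N)) : ContinuousOn (fun x ↦ bary K x i) (poly M) := by
  have : Finite M := hfin
  have hpoly : poly M = ⋃ σ : M, convexHull ℝ (σ.1 : Set (EuclideanSpace ℝ (Fin N))) := by
    rw [poly, Set.biUnion_eq_iUnion]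
  rw [hpoly]
  exact (locallyFinite_of_finite _).continuousOn_iUnion
    (fun σ ↦ (σ : Finset (EuclideanSpace ℝ (Fin N))).finite_toSet.isClosed_convexHull ℝ)
    fun σ ↦ continuousOn_bary_convexHull (hM σ.2) i

/-- The open star of `σ`: the points of the polyhedron of `M` all of whose barycentric coordinates
at the vertices of `σ` are positive. -/
def openStar (K : Geometry.SimplicialComplex ℝ (EuclideanSpace ℝ (Fin N)))
    (M : Set (Finset (EuclideanSpace ℝ (Fin N)))) (σ : Finset (EuclideanSpace ℝ (Fin N))) :
    Set (EuclideanSpace ℝ (Fin N)) :=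
  {x ∈ poly M | ∀ i ∈ σ, 0 < bary K x i}

theorem subset_of_mem_openStar (hx : x ∈ openStar K M σ) (hτ : τ ∈ K.faces)
    (hxτ : x ∈ convexHull ℝ (τ : Set (EuclideanSpace ℝ (Fin N)))) : σ ⊆ τ :=
  fun i hi ↦ mem_of_bary_pos hτ hxτ (hx.2 i hi)

/-- The subcomplex `M` of `K` is finite of dimension at most two, and `e` is a chart identifying
its polyhedron with the closed unit disk. -/
structure IsDiskTriangulation (K : Geometry.SimplicialComplex ℝ (EuclideanSpace ℝ (Fin N)))
    (M : Set (Finset (EuclideanSpace ℝ (Fin N))))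
    (e : PartialEquiv (EuclideanSpace ℝ (Fin N)) ℂ) : Prop where
  subset_faces : M ⊆ K.faces
  finite : M.Finite
  isComplex : IsComplex M
  card_le_three : ∀ σ ∈ M, σ.card ≤ 3
  chart : IsDiskChart e (poly M)

namespace IsDiskTriangulation

theorem continuousOn_bary (h : IsDiskTriangulation K M e) (i : EuclideanSpace ℝ (Fin N)) :
    ContinuousOn (fun x ↦ bary K x i) (poly M) :=
  continuousOn_bary_poly h.subset_faces h.finite i

theorem isBarycentric_bary (h : IsDiskTriangulation K M e) (hσ : σ ∈ M)
    (hx : x ∈ convexHull ℝ (σ : Set (EuclideanSpace ℝ (Fin N)))) :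
    IsBarycentric σ (bary K x) x :=
  PaperFormal.isBarycentric_bary (h.subset_faces hσ) hx

theorem openStar_mem_nhdsWithin (h : IsDiskTriangulation K M e) (hx : x ∈ openStar K M σ) :
    openStar K M σ ∈ 𝓝[poly M] x := by
  have hpos : ∀ᶠ y in 𝓝[poly M] x, ∀ i ∈ σ, 0 < bary K y i :=
    (Finset.eventually_all σ).2 fun i hi ↦
      (h.continuousOn_bary i).continuousWithinAt hx.1 (lt_mem_nhds (hx.2 i hi))
  filter_upwards [self_mem_nhdsWithin, hpos] with y hy hyσ using ⟨hy, hyσ⟩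

theorem exists_mem_openStar (h : IsDiskTriangulation K M e) (hx : x ∈ poly M) :
    ∃ σ ∈ M, x ∈ convexHull ℝ (σ : Set (EuclideanSpace ℝ (Fin N))) ∧ x ∈ openStar K M σ := by
  obtain ⟨τ, hτ, hxτ⟩ := mem_poly.1 hx
  have hb := h.isBarycentric_bary hτ hxτ
  have hσ : IsBarycentric {i ∈ τ | 0 < bary K x i} (bary K x) x := by
    have hzero (i) (hi : i ∉ ({i ∈ τ | 0 < bary K x i} : Finset _)) : bary K x i = 0 := by
      by_cases hiτ : i ∈ τ
      · exact le_antisymm (not_lt.1 fun hpos ↦ hi (by simp [hiτ, hpos])) (hb.nonneg i)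
      · exact hb.eq_zero hiτ
    simpa only [hb.sum_smul_eq] using
      isBarycentric_of_subset (Finset.filter_subset _ τ) hb.nonneg hzero hb.sum_eq_one
  refine ⟨_, h.isComplex.2 τ hτ _ (Finset.filter_subset _ τ) ?_, hσ.mem_convexHull, hx, ?_⟩
  · intro hempty
    simpa [hempty] using hσ.sum_eq_one
  · simp

theorem exists_mem_convexHull_openStar (h : IsDiskTriangulation K M e) (hσ : σ ∈ M) :
    ∃ x ∈ convexHull ℝ (σ : Set (EuclideanSpace ℝ (Fin N))), x ∈ openStar K M σ := by
  obtain ⟨w, x, hw, hpos⟩ :=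
    exists_isBarycentric_pos (Finset.nonempty_iff_ne_empty.2 (h.isComplex.1 σ hσ))
  exact ⟨x, hw.mem_convexHull, convexHull_subset_poly hσ hw.mem_convexHull,
    (hw.bary_eq (h.subset_faces hσ)).symm ▸ hpos⟩

theorem lineMap_mem_convexHull_openStar (h : IsDiskTriangulation K M e) (hτ : τ ∈ M)
    {y : EuclideanSpace ℝ (Fin N)} (hx : x ∈ convexHull ℝ (τ : Set (EuclideanSpace ℝ (Fin N))))
    (hy : y ∈ convexHull ℝ (τ : Set (EuclideanSpace ℝ (Fin N)))) (hyσ : y ∈ openStar K M σ)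
    {s : ℝ} (hs : s ∈ Set.Ioc (0 : ℝ) 1) :
    AffineMap.lineMap x y s ∈
      convexHull ℝ (τ : Set (EuclideanSpace ℝ (Fin N))) ∩ openStar K M σ := by
  have hbx := h.isBarycentric_bary hτ hx
  have hline := hbx.lineMap (h.isBarycentric_bary hτ hy) ⟨hs.1.le, hs.2⟩
  refine ⟨hline.mem_convexHull, convexHull_subset_poly hτ hline.mem_convexHull, fun i hi ↦ ?_⟩
  rw [hline.bary_eq (h.subset_faces hτ), AffineMap.lineMap_apply_module]
  exact add_pos_of_nonneg_of_pos (mul_nonneg (sub_nonneg.2 hs.2) (hbx.nonneg i))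
    (mul_pos hs.1 (hyσ.2 i hi))

theorem mem_closure_convexHull_openStar (h : IsDiskTriangulation K M e) (hσ : σ ∈ M)
    (hx : x ∈ convexHull ℝ (σ : Set (EuclideanSpace ℝ (Fin N)))) :
    x ∈ closure (convexHull ℝ (σ : Set (EuclideanSpace ℝ (Fin N))) ∩ openStar K M σ) := by
  obtain ⟨y, hy, hyσ⟩ := h.exists_mem_convexHull_openStar hσ
  have hlim : Filter.Tendsto (fun s : ℝ ↦ AffineMap.lineMap x y s) (𝓝[>] 0) (𝓝 x) := by
    have hcont : Continuous fun s : ℝ ↦ AffineMap.lineMap x y s := AffineMap.lineMap_continuous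
    simpa using (hcont.tendsto 0).mono_left nhdsWithin_le_nhds
  refine mem_closure_of_tendsto hlim ?_
  filter_upwards [Ioc_mem_nhdsGT one_pos] with s hs
  exact h.lineMap_mem_convexHull_openStar hσ hx hy hyσ hs

theorem bary_injOn (h : IsDiskTriangulation K M e) : Set.InjOn (bary K) (poly M) := by
  intro x hx y hy hxy
  obtain ⟨σ, hσ, hxσ⟩ := mem_poly.1 hx
  obtain ⟨τ, hτ, hyτ⟩ := mem_poly.1 hy
  exact PaperFormal.bary_injOn (h.subset_faces hσ) (h.subset_faces hτ) hxσ hyτ hxy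

theorem exists_card_eq_three (h : IsDiskTriangulation K M e) (hσ : σ ∈ M) :
    ∃ t ∈ M, t.card = 3 ∧ σ ⊆ t := by
  obtain ⟨τ, hστ, hmax⟩ := h.finite.exists_le_maximal hσ
  refine ⟨τ, hmax.prop, ?_, hστ⟩
  by_contra hcard
  obtain ⟨i, j, hij⟩ : ∃ i j, τ ⊆ {i, j} := by
    have hpos := Finset.card_pos.2 (Finset.nonempty_iff_ne_empty.2 (h.isComplex.1 τ hmax.prop))
    have hle := h.card_le_three τ hmax.prop
    obtain hone | htwo : τ.card = 1 ∨ τ.card = 2 := by lia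
    · obtain ⟨i, rfl⟩ := Finset.card_eq_one.1 hone
      exact ⟨i, i, by simp⟩
    · obtain ⟨i, j, -, rfl⟩ := Finset.card_eq_two.1 htwo
      exact ⟨i, j, subset_rfl⟩
  obtain ⟨m, -, hm⟩ := h.exists_mem_convexHull_openStar hmax.prop
  have hbary (y) (hy : y ∈ openStar K M τ) : IsBarycentric τ (bary K y) y := by
    obtain ⟨ρ, hρ, hyρ⟩ := mem_poly.1 hy.1
    have hτρ := subset_of_mem_openStar hy (h.subset_faces hρ) hyρ
    rw [hmax.eq_of_le hρ hτρ]
    exact h.isBarycentric_bary hρ hyρ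
  refine h.chart.not_injOn_real_valued hm.1 (h.openStar_mem_nhdsWithin hm)
    (h.continuousOn_bary i) fun y hy z hz hyz ↦ h.bary_injOn hy.1 hz.1 ?_
  refine (hbary y hy).eq_of_forall_ne (hbary z hz) (j := j) fun k hk hkj ↦ ?_
  have hki : k = i := by simpa [hkj] using hij hk
  rwa [hki]

end IsDiskTriangulation

end Triangulation

theorem of_isPreconnected_of_closed_cover {X ι : Type*} [TopologicalSpace X] {W : Set X}
    (hW : IsPreconnected W) {F : Finset ι} {A : ι → Set X} (hA : ∀ i ∈ F, IsClosed (A i))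
    (hcover : W ⊆ ⋃ i ∈ F, A i) {p : ι → Prop}
    (hp : ∀ i ∈ F, ∀ j ∈ F, (W ∩ (A i ∩ A j)).Nonempty → p i → p j) {i j : ι} (hi : i ∈ F)
    (hj : j ∈ F) (hWi : (W ∩ A i).Nonempty) (hWj : (W ∩ A j).Nonempty) (hpi : p i) : p j := by
  by_contra hpj
  let part (q : ι → Prop) : Set X := ⋃ k ∈ F.filter q, A k
  have hmem (q) (x) : x ∈ part q ↔ ∃ k ∈ F, q k ∧ x ∈ A k := by
    simp only [part, Set.mem_iUnion, Finset.mem_filter, exists_prop, and_assoc]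
  have hclosed (q) : IsClosed (part q) :=
    isClosed_biUnion_finset fun k hk ↦ hA k (Finset.mem_filter.1 hk).1
  have hparts : W ⊆ part p ∪ part fun k ↦ ¬ p k := by
    intro x hx
    obtain ⟨k, hk, hxk⟩ := Set.mem_iUnion₂.1 (hcover hx)
    by_cases hpk : p k
    · exact .inl ((hmem _ _).2 ⟨k, hk, hpk, hxk⟩)
    · exact .inr ((hmem _ _).2 ⟨k, hk, hpk, hxk⟩)
  obtain ⟨z, hzW, hzp, hzn⟩ := isPreconnected_closed_iff.1 hW _ _ (hclosed _) (hclosed _) hparts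
    (hWi.mono fun x hx ↦ ⟨hx.1, (hmem _ _).2 ⟨i, hi, hpi, hx.2⟩⟩)
    (hWj.mono fun x hx ↦ ⟨hx.1, (hmem _ _).2 ⟨j, hj, hpj, hx.2⟩⟩)
  obtain ⟨k, hk, hpk, hzk⟩ := (hmem _ _).1 hzp
  obtain ⟨l, hl, hpl, hzl⟩ := (hmem _ _).1 hzn
  exact hpl (hp k hk l hl ⟨z, hzW, hzk, hzl⟩ hpk)

section TriangleSet

open Topology Metric

variable {N : ℕ} {K : Geometry.SimplicialComplex ℝ (EuclideanSpace ℝ (Fin N))}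
  {M : Set (Finset (EuclideanSpace ℝ (Fin N)))} {e : PartialEquiv (EuclideanSpace ℝ (Fin N)) ℂ}
  {σ r s t : Finset (EuclideanSpace ℝ (Fin N))} {x : EuclideanSpace ℝ (Fin N)}

namespace IsDiskTriangulation

/-- The triangles of a triangulated disk. -/
noncomputable def triangles (h : IsDiskTriangulation K M e) :
    Finset (Finset (EuclideanSpace ℝ (Fin N))) :=
  h.finite.toFinset.filter (·.card = 3)

theorem mem_triangles (h : IsDiskTriangulation K M e) : t ∈ h.triangles ↔ t ∈ M ∧ t.card = 3 := by
  rw [triangles, Finset.mem_filter, Set.Finite.mem_toFinset]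

theorem mem_faces_of_mem_triangles (h : IsDiskTriangulation K M e) (ht : t ∈ h.triangles) :
    t ∈ K.faces :=
  h.subset_faces (h.mem_triangles.1 ht).1

theorem exists_triangle_mem_convexHull (h : IsDiskTriangulation K M e) (hx : x ∈ poly M) :
    ∃ t ∈ h.triangles, x ∈ convexHull ℝ (t : Set (EuclideanSpace ℝ (Fin N))) := by
  obtain ⟨σ, hσ, hxσ⟩ := mem_poly.1 hx
  obtain ⟨t, ht, hcard, hσt⟩ := h.exists_card_eq_three hσ
  exact ⟨t, h.mem_triangles.2 ⟨ht, hcard⟩, convexHull_mono (Finset.coe_subset.2 hσt) hxσ⟩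

theorem finite_vertices (h : IsDiskTriangulation K M e) :
    {x : EuclideanSpace ℝ (Fin N) | {x} ∈ M}.Finite :=
  h.finite.preimage Finset.singleton_injective.injOn

theorem exists_mem_openStar_two_le_card (h : IsDiskTriangulation K M e) (hx : x ∈ poly M)
    (hvertex : {x} ∉ M) :
    ∃ σ ∈ M, x ∈ convexHull ℝ (σ : Set (EuclideanSpace ℝ (Fin N))) ∧ x ∈ openStar K M σ ∧
      2 ≤ σ.card := by
  obtain ⟨σ, hσ, hxσ, hstar⟩ := h.exists_mem_openStar hx
  refine ⟨σ, hσ, hxσ, hstar, ?_⟩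
  have hpos := Finset.card_pos.2 (Finset.nonempty_iff_ne_empty.2 (h.isComplex.1 σ hσ))
  by_contra hlt
  obtain ⟨i, rfl⟩ := Finset.card_eq_one.1 (show σ.card = 1 by lia)
  obtain rfl : x = i := by simpa using hxσ
  exact hvertex hσ

theorem edgeAdj_of_mem_convexHull (h : IsDiskTriangulation K M e) (hσ : σ.card ≤ 2)
    (hx : x ∈ openStar K M σ) (hvertex : {x} ∉ M) (hr : r ∈ h.triangles) (hs : s ∈ h.triangles)
    (hxr : x ∈ convexHull ℝ (r : Set (EuclideanSpace ℝ (Fin N))))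
    (hxs : x ∈ convexHull ℝ (s : Set (EuclideanSpace ℝ (Fin N)))) : EdgeAdj σ r s := by
  obtain ⟨ρ, hρ, hxρ, hstar, hcard⟩ := h.exists_mem_openStar_two_le_card hx.1 hvertex
  obtain ⟨f, hσf, hfρ, hf⟩ := Finset.exists_subsuperset_card_eq
    (subset_of_mem_openStar hx (h.subset_faces hρ) hxρ) hσ hcard
  exact ⟨f, hf, hσf,
    hfρ.trans (subset_of_mem_openStar hstar (h.mem_faces_of_mem_triangles hr) hxr),
    hfρ.trans (subset_of_mem_openStar hstar (h.mem_faces_of_mem_triangles hs) hxs)⟩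

theorem starConnected_of_isPreconnected (h : IsDiskTriangulation K M e) (hσ : σ.card ≤ 2)
    {W : Set (EuclideanSpace ℝ (Fin N))} (hW : IsPreconnected W) (hWσ : W ⊆ openStar K M σ)
    (hvertex : ∀ x ∈ W, {x} ∉ M)
    (hmeet : ∀ t ∈ h.triangles, σ ⊆ t →
      (W ∩ convexHull ℝ (t : Set (EuclideanSpace ℝ (Fin N)))).Nonempty) :
    StarConnected h.triangles σ := by
  intro p hp s hs t ht hσs hσt hps
  refine of_isPreconnected_of_closed_cover hW
    (A := fun r : Finset (EuclideanSpace ℝ (Fin N)) ↦ convexHull ℝ (r : Set _))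
    (fun r _ ↦ r.finite_toSet.isClosed_convexHull ℝ) (fun x hx ↦ ?_)
    (fun r hr r' hr' ⟨x, hxW, hxr, hxr'⟩ ↦ hp r hr r' hr' ?_) hs ht (hmeet s hs hσs)
    (hmeet t ht hσt) hps
  · obtain ⟨r, hr, hxr⟩ := h.exists_triangle_mem_convexHull (hWσ hx).1
    exact Set.mem_iUnion₂.2 ⟨r, hr, hxr⟩
  · exact h.edgeAdj_of_mem_convexHull hσ (hWσ hxW) (hvertex x hxW) hr hr' hxr hxr'

theorem notMem_of_mem_openStar (h : IsDiskTriangulation K M e) (hσ : 2 ≤ σ.card)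
    (hx : x ∈ openStar K M σ) : {x} ∉ M := by
  intro hvertex
  have hle := Finset.card_le_card
    (subset_of_mem_openStar hx (h.subset_faces hvertex) (subset_convexHull ℝ _ (by simp)))
  rw [Finset.card_singleton] at hle
  lia

theorem starConnected_empty (h : IsDiskTriangulation K M e) : StarConnected h.triangles ∅ := by
  refine h.starConnected_of_isPreconnected (by simp)
    (h.chart.isPreconnected_diff_finite h.finite_vertices) (fun x hx ↦ ⟨hx.1, by simp⟩)
    (fun x hx ↦ hx.2) fun t ht _ ↦ ?_
  obtain ⟨htM, hcard⟩ := h.mem_triangles.1 ht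
  obtain ⟨x, hxt, hx⟩ := h.exists_mem_convexHull_openStar htM
  exact ⟨x, ⟨hx.1, h.notMem_of_mem_openStar (by lia) hx⟩, hxt⟩

theorem mem_openStar_singleton (h : IsDiskTriangulation K M e) (hx : {x} ∈ M) :
    x ∈ openStar K M {x} := by
  obtain ⟨y, hy, hstar⟩ := h.exists_mem_convexHull_openStar hx
  obtain rfl : y = x := by simpa using hy
  exact hstar

theorem starConnected_singleton (h : IsDiskTriangulation K M e)
    (x : EuclideanSpace ℝ (Fin N)) : StarConnected h.triangles {x} := by
  by_cases hx : {x} ∈ M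
  · have hstar := h.mem_openStar_singleton hx
    obtain ⟨W, hWstar, hWx, hW⟩ := h.chart.exists_isPreconnected_diff_finite hstar.1
      (h.openStar_mem_nhdsWithin hstar) h.finite_vertices
    refine h.starConnected_of_isPreconnected (by simp) hW (Set.sdiff_subset.trans hWstar)
      (fun y hy ↦ hy.2) fun t ht hxt ↦ ?_
    obtain ⟨htM, hcard⟩ := h.mem_triangles.1 ht
    have hclosure := h.mem_closure_convexHull_openStar htM
      (subset_convexHull ℝ _ (Finset.singleton_subset_iff.1 hxt))
    obtain ⟨U, hU, hUW⟩ := mem_nhdsWithin_iff_exists_mem_nhds_inter.1 hWx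
    obtain ⟨y, hyU, hyt, hy⟩ := mem_closure_iff_nhds.1 hclosure U hU
    exact ⟨y, ⟨hUW ⟨hyU, hy.1⟩, h.notMem_of_mem_openStar (by lia) hy⟩, hyt⟩
  · intro p _ s hs _ _ hxs
    exact absurd (h.isComplex.2 s (h.mem_triangles.1 hs).1 _ hxs (by simp)) hx

theorem starConnected (h : IsDiskTriangulation K M e) (hσ : σ.card ≤ 1) :
    StarConnected h.triangles σ := by
  obtain hzero | hone := Nat.le_one_iff_eq_zero_or_eq_one.1 hσ
  · rw [Finset.card_eq_zero.1 hzero]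
    exact h.starConnected_empty
  · obtain ⟨x, rfl⟩ := Finset.card_eq_one.1 hone
    exact h.starConnected_singleton x

end IsDiskTriangulation

end TriangleSet

section FoldedWeights

open Topology

variable {E : Type*} {σ : Finset E} {a b c d : E}

theorem eventually_weights_pos {W : ℂ → E → ℝ}
    (hcont : ∀ i, Continuous fun z ↦ W z i) (hpos : ∀ i ∈ σ, 0 < W 0 i) :
    ∀ᶠ z in 𝓝 0, ∀ i ∈ σ, 0 < W z i :=
  (Finset.eventually_all σ).2 fun i hi ↦ (hcont i).continuousAt.eventually_const_lt (hpos i hi)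

variable [DecidableEq E]

/-- The weights obtained from those of a point of the edge `bc` by moving along the edge by `z.re`
and into the triangle `abc` or `dbc`, according to the sign of `z.im`. -/
noncomputable def foldedWeights (w : E → ℝ) (a b c d : E) (z : ℂ) : E → ℝ :=
  w + (z.re • (Pi.single c 1 - Pi.single b 1) + (max z.im 0 • (Pi.single a 1 - Pi.single b 1) +
    max (-z.im) 0 • (Pi.single d 1 - Pi.single b 1)))

theorem continuous_foldedWeights (w : E → ℝ)
    (i : E) : Continuous fun z ↦ foldedWeights w a b c d z i := by
  simp only [foldedWeights, Pi.add_apply, Pi.smul_apply, smul_eq_mul]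
  fun_prop

theorem foldedWeights_zero (w : E → ℝ) : foldedWeights w a b c d 0 = w := by
  simp [foldedWeights]

theorem foldedWeights_injective (w : E → ℝ) (ha : a ∉ ({b, c} : Finset _))
    (hd : d ∉ ({b, c} : Finset _)) (had : a ≠ d) (hbc : b ≠ c) :
    Function.Injective (foldedWeights w a b c d) := by
  intro z z' hzz
  simp only [Finset.mem_insert, Finset.mem_singleton, not_or] at ha hd
  have hpos : max z.im 0 = max z'.im 0 := by
    simpa [foldedWeights, ha, had] using congrFun hzz a
  have hneg : max (-z.im) 0 = max (-z'.im) 0 := by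
    simpa [foldedWeights, hd, had.symm] using congrFun hzz d
  have hre : z.re = z'.re := by
    simpa [foldedWeights, Ne.symm ha.2, Ne.symm hd.2, hbc.symm] using congrFun hzz c
  refine Complex.ext hre ?_
  rw [← max_zero_sub_max_neg_zero_eq_self z.im, ← max_zero_sub_max_neg_zero_eq_self z'.im, hpos,
    hneg]

theorem foldedWeights_eq_zero {w : E → ℝ} {z : ℂ}
    {i : E} (hw : w i = 0) (hb : i ≠ b) (hc : i ≠ c)
    (ha : i = a → z.im ≤ 0) (hd : i = d → 0 ≤ z.im) : foldedWeights w a b c d z i = 0 := by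
  by_cases hia : i = a <;> by_cases hid : i = d <;>
    simp_all [foldedWeights]

theorem foldedWeights_nonneg {w : E → ℝ} {z : ℂ}
    {i : E} (hw : 0 ≤ w i) (hb : i ≠ b) (hc : i ≠ c) :
    0 ≤ foldedWeights w a b c d z i := by
  have hsingle (j : E) : (0 : ℝ) ≤ (Pi.single j 1 : E → ℝ) i :=
    (Pi.single_nonneg.2 zero_le_one : (0 : E → ℝ) ≤ Pi.single j 1) i
  simp only [foldedWeights, Pi.add_apply, Pi.smul_apply, Pi.sub_apply, Pi.single_eq_of_ne hb,
    Pi.single_eq_of_ne hc, smul_eq_mul, sub_zero, mul_zero, zero_add]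
  exact add_nonneg hw (add_nonneg (mul_nonneg (le_max_right _ _) (hsingle a))
    (mul_nonneg (le_max_right _ _) (hsingle d)))

theorem IsBarycentric.foldedWeights [AddCommGroup E] [Module ℝ E] {x : E} {w : E → ℝ}
    (hw : IsBarycentric {b, c} w x) {z : ℂ}
    (hpos : ∀ i ∈ ({b, c} : Finset _), 0 < foldedWeights w a b c d z i) :
    ∃ σ : Finset _, (σ = {a, b, c} ∨ σ = {d, b, c}) ∧ IsBarycentric σ (foldedWeights w a b c d z)
      (∑ i ∈ {a, d, b, c}, foldedWeights w a b c d z i • i) := by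
  have hnonneg (i) : 0 ≤ PaperFormal.foldedWeights w a b c d z i := by
    by_cases hi : i ∈ ({b, c} : Finset _)
    · exact (hpos i hi).le
    · simp only [Finset.mem_insert, Finset.mem_singleton, not_or] at hi
      exact foldedWeights_nonneg (hw.nonneg i) hi.1 hi.2
  have hsum : ∑ i ∈ {a, d, b, c}, PaperFormal.foldedWeights w a b c d z i = 1 := by
    have hbc : ({b, c} : Finset _) ⊆ {a, d, b, c} := by grind
    have hw1 : ∑ i ∈ {a, d, b, c}, w i = 1 := (hw.mono hbc).sum_eq_one
    simp [PaperFormal.foldedWeights, Finset.sum_add_distrib, ← Finset.mul_sum, hw1]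
  have hzero (i) (hi : i ∉ ({b, c} : Finset _)) (ha : i = a → z.im ≤ 0) (hd : i = d → 0 ≤ z.im) :
      PaperFormal.foldedWeights w a b c d z i = 0 := by
    have hwi := hw.eq_zero hi
    simp only [Finset.mem_insert, Finset.mem_singleton, not_or] at hi
    exact foldedWeights_eq_zero hwi hi.1 hi.2 ha hd
  rcases le_total 0 z.im with him | him
  · exact ⟨{a, b, c}, .inl rfl, isBarycentric_of_subset (by grind) hnonneg
      (fun i hi ↦ hzero i (by grind) (by grind) fun _ ↦ him) hsum⟩
  · exact ⟨{d, b, c}, .inr rfl, isBarycentric_of_subset (by grind) hnonneg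
      (fun i hi ↦ hzero i (by grind) (fun _ ↦ him) (by grind)) hsum⟩

end FoldedWeights

section WeightChart

open Topology Metric

variable {N : ℕ} {K : Geometry.SimplicialComplex ℝ (EuclideanSpace ℝ (Fin N))}
  {M : Set (Finset (EuclideanSpace ℝ (Fin N)))} {e : PartialEquiv (EuclideanSpace ℝ (Fin N)) ℂ}
  {σ r s t : Finset (EuclideanSpace ℝ (Fin N))} {a b c d x : EuclideanSpace ℝ (Fin N)}

namespace IsDiskTriangulation

/-- A family of barycentric weights parametrised injectively by the plane sweeps out a neighbourhood
of its centre, by invariance of domain. -/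
theorem map_mem_ball_and_eventually_eq_weights (h : IsDiskTriangulation K M e)
    {W : ℂ → EuclideanSpace ℝ (Fin N) → ℝ} (hinj : Function.Injective W)
    (hcont : ∀ i, Continuous fun z ↦ W z i) {A : Finset (EuclideanSpace ℝ (Fin N))}
    (hW : ∀ᶠ z in 𝓝 0, ∃ σ ∈ M, IsBarycentric σ (W z) (∑ i ∈ A, W z i • i))
    (hx : x ∈ poly M) (hWx : W 0 = bary K x) :
    e x ∈ ball (0 : ℂ) 1 ∧ ∀ᶠ y in 𝓝[poly M] x, ∃ z, bary K y = W z := by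
  let f (z : ℂ) : EuclideanSpace ℝ (Fin N) := ∑ i ∈ A, W z i • i
  let U : Set ℂ := {z | ∃ σ ∈ M, IsBarycentric σ (W z) (f z)}
  have hbary : ∀ z ∈ U, bary K (f z) = W z := fun z ⟨σ, hσ, hz⟩ ↦ hz.bary_eq (h.subset_faces hσ)
  have hpoly : Set.MapsTo f U (poly M) :=
    fun z ⟨σ, hσ, hz⟩ ↦ convexHull_subset_poly hσ hz.mem_convexHull
  have hf : Continuous f := continuous_finsetSum _ fun i _ ↦ (hcont i).smul continuous_const
  have hfinj : Set.InjOn f U := fun z hz z' hz' heq ↦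
    hinj ((hbary z hz).symm.trans ((congrArg (bary K) heq).trans (hbary z' hz')))
  have hzero : (0 : ℂ) ∈ U := mem_of_mem_nhds hW
  have hf0 : f 0 = x := h.bary_injOn (hpoly hzero) hx ((hbary 0 hzero).trans hWx)
  rw [← hf0]
  obtain ⟨hball, hnhds⟩ :=
    h.chart.map_mem_ball_and_image_mem_nhdsWithin hW hf.continuousOn hfinj hpoly
  refine ⟨hball, Filter.mem_of_superset hnhds ?_⟩
  rintro _ ⟨z, hz, rfl⟩
  exact ⟨z, hbary z hz⟩

theorem map_mem_ball_of_mem_openStar_triangle (h : IsDiskTriangulation K M e)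
    (ht : t ∈ h.triangles) (hxt : x ∈ convexHull ℝ (t : Set (EuclideanSpace ℝ (Fin N))))
    (hx : x ∈ openStar K M t) : e x ∈ ball (0 : ℂ) 1 := by
  obtain ⟨htM, hcard⟩ := h.mem_triangles.1 ht
  obtain ⟨a, b, c, hab, hac, hbc, rfl⟩ := Finset.card_eq_three.1 hcard
  let W (z : ℂ) : EuclideanSpace ℝ (Fin N) → ℝ := bary K x +
    (z.re • (Pi.single a 1 - Pi.single c 1) + z.im • (Pi.single b 1 - Pi.single c 1))
  have hcont (i) : Continuous fun z ↦ W z i := by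
    simp only [W, Pi.add_apply, Pi.smul_apply, smul_eq_mul]
    fun_prop
  have hb := h.isBarycentric_bary htM hxt
  have hW0 : W 0 = bary K x := by simp [W]
  refine (h.map_mem_ball_and_eventually_eq_weights (W := W) (A := {a, b, c}) ?_ hcont ?_ hx.1
    hW0).1
  · intro z z' hzz
    exact Complex.ext (by simpa [W, hab, hac] using congrFun hzz a)
      (by simpa [W, hbc, hab.symm] using congrFun hzz b)
  · filter_upwards [eventually_weights_pos hcont (hW0 ▸ hx.2)] with z hz
    have hzero (i) (hi : i ∉ ({a, b, c} : Finset _)) : W z i = 0 := by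
      have hbi := hb.eq_zero hi
      simp only [Finset.mem_insert, Finset.mem_singleton, not_or] at hi
      simp [W, hbi, hi]
    refine ⟨_, htM, isBarycentric_of_subset subset_rfl (fun i ↦ ?_) hzero ?_⟩
    · by_cases hi : i ∈ ({a, b, c} : Finset _)
      exacts [(hz i hi).le, (hzero i hi).ge]
    · simp [W, Finset.sum_add_distrib, ← Finset.mul_sum, Finset.sum_sub_distrib, hb.sum_eq_one]

theorem map_mem_ball_and_eventually_eq_zero (h : IsDiskTriangulation K M e) (hσ : σ.card = 2)
    (hr : r ∈ h.triangles) (hs : s ∈ h.triangles) (hrs : r ≠ s) (hσr : σ ⊆ r) (hσs : σ ⊆ s)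
    (hxσ : x ∈ convexHull ℝ (σ : Set (EuclideanSpace ℝ (Fin N)))) (hx : x ∈ openStar K M σ) :
    e x ∈ ball (0 : ℂ) 1 ∧ ∀ᶠ y in 𝓝[poly M] x, ∀ i ∉ r ∪ s, bary K y i = 0 := by
  obtain ⟨hrM, hrcard⟩ := h.mem_triangles.1 hr
  obtain ⟨hsM, hscard⟩ := h.mem_triangles.1 hs
  obtain ⟨a, har, haσ⟩ := Finset.exists_mem_notMem_of_card_lt_card (show σ.card < r.card by lia)
  obtain ⟨d, hds, hdσ⟩ := Finset.exists_mem_notMem_of_card_lt_card (show σ.card < s.card by lia)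
  obtain rfl := insert_eq_of_edge hrcard hσ hσr har haσ
  obtain rfl := insert_eq_of_edge hscard hσ hσs hds hdσ
  have had : a ≠ d := fun had ↦ hrs (had ▸ rfl)
  obtain ⟨b, c, hbc, rfl⟩ := Finset.card_eq_two.1 hσ
  have hb : IsBarycentric {b, c} (bary K x) x :=
    h.isBarycentric_bary (h.isComplex.2 _ hrM _ hσr (by simp)) hxσ
  have hcont (i) := continuous_foldedWeights (a := a) (b := b) (c := c) (d := d) (bary K x) i
  have hW0 := foldedWeights_zero (a := a) (b := b) (c := c) (d := d) (bary K x)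
  have hpos := eventually_weights_pos hcont (hW0.symm ▸ hx.2)
  refine (h.map_mem_ball_and_eventually_eq_weights (A := {a, d, b, c})
    (foldedWeights_injective (bary K x) haσ hdσ had hbc) hcont ?_ hx.1 hW0).imp_right
    fun hnear ↦ ?_
  · filter_upwards [hpos] with z hz
    obtain ⟨τ, rfl | rfl, hτ⟩ := hb.foldedWeights hz
    exacts [⟨_, hrM, hτ⟩, ⟨_, hsM, hτ⟩]
  · filter_upwards [hnear] with y ⟨z, hz⟩ i hi
    have hzero := hb.eq_zero fun hiσ ↦ hi (Finset.mem_union_left _ (hσr hiσ))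
    simp only [Finset.mem_union, Finset.mem_insert, Finset.mem_singleton, not_or] at hi
    rw [hz]
    exact foldedWeights_eq_zero hzero hi.1.2.1 hi.1.2.2 (absurd · hi.1.1) (absurd · hi.2.1)

theorem eq_of_ne_of_edge_subset (h : IsDiskTriangulation K M e) (hσ : σ.card = 2)
    (hr : r ∈ h.triangles) (hs : s ∈ h.triangles) (ht : t ∈ h.triangles) (hσr : σ ⊆ r)
    (hσs : σ ⊆ s) (hσt : σ ⊆ t) (hrt : r ≠ t) (hst : s ≠ t) : r = s := by
  by_contra hrs
  obtain ⟨-, hrcard⟩ := h.mem_triangles.1 hr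
  obtain ⟨-, hscard⟩ := h.mem_triangles.1 hs
  obtain ⟨htM, htcard⟩ := h.mem_triangles.1 ht
  obtain ⟨a, hat, haσ⟩ := Finset.exists_mem_notMem_of_card_lt_card (show σ.card < t.card by lia)
  have hinsert := insert_eq_of_edge htcard hσ hσt hat haσ
  have har : a ∉ r := fun har ↦ hrt (by rw [← insert_eq_of_edge hrcard hσ hσr har haσ, hinsert])
  have has : a ∉ s := fun has ↦ hst (by rw [← insert_eq_of_edge hscard hσ hσs has haσ, hinsert])
  have hσM : σ ∈ M := h.isComplex.2 t htM σ hσt (Finset.card_pos.1 (by lia)).ne_empty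
  obtain ⟨x, hxσ, hx⟩ := h.exists_mem_convexHull_openStar hσM
  obtain ⟨U, hU, hzero⟩ := mem_nhdsWithin_iff_exists_mem_nhds_inter.1
    (h.map_mem_ball_and_eventually_eq_zero hσ hr hs hrs hσr hσs hxσ hx).2
  obtain ⟨y, hyU, -, hy⟩ := mem_closure_iff_nhds.1 (h.mem_closure_convexHull_openStar htM
    (convexHull_mono (Finset.coe_subset.2 hσt) hxσ)) U hU
  exact (hy.2 a hat).ne' (hzero ⟨hyU, hy.1⟩ a (by simp [har, has]))

theorem isPseudosurface (h : IsDiskTriangulation K M e) : IsPseudosurface h.triangles where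
  card_eq_three _ ht := (h.mem_triangles.1 ht).2
  eq_of_ne _ hσ _ hr _ hs _ ht := h.eq_of_ne_of_edge_subset hσ hr hs ht

end IsDiskTriangulation

end WeightChart

theorem subset_closure_diff_finite_of_isPreconnected {X : Type*} [TopologicalSpace X] [T1Space X]
    {C s : Set X} (hC : IsPreconnected C) (hnontrivial : C.Nontrivial) (hs : s.Finite) :
    C ⊆ closure (C \ s) := by
  have : ConnectedSpace C := Subtype.connectedSpace ⟨hnontrivial.nonempty, hC⟩
  have : Nontrivial C := hnontrivial.coe_sort
  have hdense : Dense (Set.univ \ (Subtype.val ⁻¹' s : Set C)) :=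
    dense_univ.sdiff_finite (hs.preimage Subtype.val_injective.injOn)
  intro x hx
  refine closure_mono ?_ (image_closure_subset_closure_image continuous_subtype_val
    ⟨⟨x, hx⟩, hdense _, rfl⟩)
  rintro _ ⟨y, hy, rfl⟩
  exact ⟨y.2, hy.2⟩

section Rim

open Topology Metric

variable {N : ℕ} {K : Geometry.SimplicialComplex ℝ (EuclideanSpace ℝ (Fin N))}
  {M : Set (Finset (EuclideanSpace ℝ (Fin N)))} {e : PartialEquiv (EuclideanSpace ℝ (Fin N)) ℂ}
  {f f' t : Finset (EuclideanSpace ℝ (Fin N))} {x : EuclideanSpace ℝ (Fin N)}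

theorem IsDiskChart.isPreconnected_rim {X : Type*} [TopologicalSpace X] {e : PartialEquiv X ℂ}
    {S : Set X} (h : IsDiskChart e S) : IsPreconnected (e.symm '' sphere 0 1) :=
  (isPreconnected_sphere (by simp [Complex.rank_real_complex]) 0 1).image _
    (h.continuousOn_symm.mono sphere_subset_closedBall)

theorem IsDiskChart.nontrivial_rim {X : Type*} [TopologicalSpace X] {e : PartialEquiv X ℂ}
    {S : Set X} (h : IsDiskChart e S) : (e.symm '' sphere 0 1).Nontrivial :=
  have hsphere : (sphere (0 : ℂ) 1).Nontrivial := ⟨1, by simp, -1, by simp, by norm_num⟩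
  hsphere.image_of_injOn (h.symm_injOn.mono sphere_subset_closedBall)

namespace IsDiskTriangulation

theorem mem_of_isFreeEdge (h : IsDiskTriangulation K M e) (hf : IsFreeEdge h.triangles f) :
    f ∈ M := by
  obtain ⟨t, ht, hft⟩ := hf.2.exists
  exact h.isComplex.2 t (h.mem_triangles.1 ht).1 f hft
    (Finset.card_pos.1 (hf.1 ▸ Nat.two_pos)).ne_empty

theorem isBarycentric_of_isFreeEdge (h : IsDiskTriangulation K M e)
    (hf : IsFreeEdge h.triangles f) (ht : t ∈ h.triangles) (hft : f ⊆ t)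
    (hx : x ∈ openStar K M f) : IsBarycentric t (bary K x) x := by
  obtain ⟨s, hs, hxs⟩ := h.exists_triangle_mem_convexHull hx.1
  have hfs := subset_of_mem_openStar hx (h.mem_faces_of_mem_triangles hs) hxs
  rw [hf.eq ht hs hft hfs]
  exact h.isBarycentric_bary (h.mem_triangles.1 hs).1 hxs

/-- In the coordinates `bary · b` and `bary · a`, where `b` is a vertex of the free edge and `a` is
the opposite vertex of its triangle, the polyhedron near `x` stays on one side of a line. -/
theorem map_mem_sphere_of_isFreeEdge (h : IsDiskTriangulation K M e)
    (hf : IsFreeEdge h.triangles f)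
    (hxf : x ∈ convexHull ℝ (f : Set (EuclideanSpace ℝ (Fin N)))) (hx : x ∈ openStar K M f) :
    e x ∈ sphere (0 : ℂ) 1 := by
  by_contra hsphere
  have hball : e x ∈ ball (0 : ℂ) 1 := lt_of_le_of_ne (h.chart.map_mem hx.1) hsphere
  obtain ⟨t, ht, hft⟩ := hf.2.exists
  obtain ⟨-, hcard⟩ := h.mem_triangles.1 ht
  have hstar (y) (hy : y ∈ openStar K M f) := h.isBarycentric_of_isFreeEdge hf ht hft hy
  obtain ⟨a, hat, haf⟩ := Finset.exists_mem_notMem_of_card_lt_card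
    (show f.card < t.card by have := hf.1; lia)
  have hinsert := insert_eq_of_edge hcard hf.1 hft hat haf
  obtain ⟨b, c, hbc, rfl⟩ := Finset.card_eq_two.1 hf.1
  let Ψ (y : EuclideanSpace ℝ (Fin N)) : ℂ := ⟨bary K y b, bary K y a⟩
  have hinj : Set.InjOn Ψ (openStar K M {b, c}) := by
    intro y hy z hz hyz
    obtain ⟨hb, ha⟩ := Complex.ext_iff.1 hyz
    refine h.bary_injOn hy.1 hz.1
      ((hstar y hy).eq_of_forall_ne (hstar z hz) (j := c) fun i hi hic ↦ ?_)
    rw [← hinsert] at hi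
    simp only [Finset.mem_insert, Finset.mem_singleton, hic, or_false] at hi
    obtain rfl | rfl := hi
    exacts [ha, hb]
  have hcont : ContinuousOn Ψ (poly M) :=
    Complex.equivRealProdCLM.symm.continuous.comp_continuousOn
      ((h.continuousOn_bary b).prodMk (h.continuousOn_bary a))
  have hnhds := h.chart.image_mem_nhds_of_map_mem_ball hx.1 hball (h.openStar_mem_nhdsWithin hx)
    hcont hinj
  have hhalf : Ψ '' openStar K M {b, c} ⊆ {z : ℂ | 0 ≤ z.im} := by
    rintro _ ⟨y, hy, rfl⟩
    exact (hstar y hy).nonneg a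
  have hpos : Ψ x ∈ interior {z : ℂ | 0 ≤ z.im} :=
    mem_interior_iff_mem_nhds.2 (Filter.mem_of_superset hnhds hhalf)
  rw [Complex.interior_setOfPred_le_im] at hpos
  exact hpos.ne' ((h.isBarycentric_bary (h.mem_of_isFreeEdge hf) hxf).eq_zero haf)

theorem exists_isFreeEdge_of_map_mem_sphere (h : IsDiskTriangulation K M e) (hx : x ∈ poly M)
    (hsphere : e x ∈ sphere (0 : ℂ) 1) (hvertex : {x} ∉ M) :
    ∃ f, IsFreeEdge h.triangles f ∧ x ∈ convexHull ℝ (f : Set (EuclideanSpace ℝ (Fin N))) := by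
  have hball : e x ∉ ball (0 : ℂ) 1 := fun hball ↦ (mem_ball.1 hball).ne hsphere
  obtain ⟨f, hf, hxf, hstar, hcard⟩ := h.exists_mem_openStar_two_le_card hx hvertex
  obtain htwo | hthree : f.card = 2 ∨ f.card = 3 := by have := h.card_le_three f hf; lia
  · obtain ⟨t, ht, htcard, hft⟩ := h.exists_card_eq_three hf
    refine ⟨f, ⟨htwo, t, ⟨h.mem_triangles.2 ⟨ht, htcard⟩, hft⟩, fun s hs ↦ ?_⟩, hxf⟩
    by_contra hst
    exact hball (h.map_mem_ball_and_eventually_eq_zero htwo hs.1 (h.mem_triangles.2 ⟨ht, htcard⟩)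
      hst hs.2 hft hxf hstar).1
  · exact absurd (h.map_mem_ball_of_mem_openStar_triangle (h.mem_triangles.2 ⟨hf, hthree⟩) hxf
      hstar) hball

theorem rim_subset_iUnion_freeEdges (h : IsDiskTriangulation K M e) :
    e.symm '' sphere 0 1 ⊆ ⋃ f ∈ h.finite.toFinset.filter (IsFreeEdge h.triangles),
      convexHull ℝ (f : Set (EuclideanSpace ℝ (Fin N))) := by
  refine (subset_closure_diff_finite_of_isPreconnected h.chart.isPreconnected_rim
    h.chart.nontrivial_rim h.finite_vertices).trans (closure_minimal ?_
    (isClosed_biUnion_finset fun f _ ↦ f.finite_toSet.isClosed_convexHull ℝ))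
  rintro _ ⟨⟨z, hz, rfl⟩, hvertex⟩
  have hz' := sphere_subset_closedBall hz
  obtain ⟨f, hf, hzf⟩ := h.exists_isFreeEdge_of_map_mem_sphere (h.chart.symm_map_mem hz')
    (by rwa [h.chart.right_inv hz']) hvertex
  exact Set.mem_iUnion₂.2 ⟨f, by simp [hf, h.mem_of_isFreeEdge hf], hzf⟩

theorem rim_inter_convexHull_nonempty (h : IsDiskTriangulation K M e)
    (hf : IsFreeEdge h.triangles f) :
    (e.symm '' sphere 0 1 ∩ convexHull ℝ (f : Set (EuclideanSpace ℝ (Fin N)))).Nonempty := by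
  obtain ⟨x, hxf, hx⟩ := h.exists_mem_convexHull_openStar (h.mem_of_isFreeEdge hf)
  exact ⟨x, ⟨e x, h.map_mem_sphere_of_isFreeEdge hf hxf hx, h.chart.left_inv hx.1⟩, hxf⟩

theorem eq_of_forall_isFreeEdge (h : IsDiskTriangulation K M e) {α : Type*}
    {g : EuclideanSpace ℝ (Fin N) → α}
    (hg : ∀ f, IsFreeEdge h.triangles f → ∀ x ∈ f, ∀ y ∈ f, g x = g y)
    (hf : IsFreeEdge h.triangles f) (hf' : IsFreeEdge h.triangles f')
    {y : EuclideanSpace ℝ (Fin N)} (hx : x ∈ f) (hy : y ∈ f') : g x = g y := by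
  have hmem {f} : f ∈ h.finite.toFinset.filter (IsFreeEdge h.triangles) ↔
      IsFreeEdge h.triangles f := by
    simp only [Finset.mem_filter, Set.Finite.mem_toFinset, and_iff_right_iff_imp]
    exact h.mem_of_isFreeEdge
  refine of_isPreconnected_of_closed_cover (p := fun f ↦ ∀ z ∈ f, g x = g z)
    h.chart.isPreconnected_rim (fun f _ ↦ f.finite_toSet.isClosed_convexHull ℝ)
    h.rim_subset_iUnion_freeEdges (fun r hr s hs ⟨z, _, hzr, hzs⟩ hgr w hw ↦ ?_) (hmem.2 hf)
    (hmem.2 hf') (h.rim_inter_convexHull_nonempty hf) (h.rim_inter_convexHull_nonempty hf')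
    (hg f hf x hx) y hy
  have hrM := h.mem_of_isFreeEdge (hmem.1 hr)
  have hsM := h.mem_of_isFreeEdge (hmem.1 hs)
  obtain ⟨ρ, hρ, -, hstar⟩ := h.exists_mem_openStar (convexHull_subset_poly hrM hzr)
  obtain ⟨i, hi⟩ := Finset.nonempty_iff_ne_empty.2 (h.isComplex.1 ρ hρ)
  have hir := subset_of_mem_openStar hstar (h.subset_faces hrM) hzr hi
  have his := subset_of_mem_openStar hstar (h.subset_faces hsM) hzs hi
  exact (hgr i hir).trans (hg s (hmem.1 hs) i his w hw)

end IsDiskTriangulation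

end Rim

section EdgeCochain

variable [DecidableEq V] {T : Finset (Finset V)} {φ : Finset V → ZMod 2} {t : Finset V} {x y z : V}

/-- The value of the mod 2 cochain `φ` on the possibly degenerate edge from `x` to `y`. -/
def edgeValue (φ : Finset V → ZMod 2) (x y : V) : ZMod 2 :=
  if x = y then 0 else φ {x, y}

theorem IsRelCocycle.edgeValue_add (hφ : IsRelCocycle T φ) (hcard : t.card = 3) (ht : t ∈ T)
    (hx : x ∈ t) (hy : y ∈ t) (hz : z ∈ t) :
    edgeValue φ x y + edgeValue φ y z = edgeValue φ x z := by
  by_cases hxy : x = y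
  · simp [edgeValue, hxy]
  by_cases hyz : y = z
  · simp [edgeValue, hyz]
  by_cases hxz : x = z
  · subst hxz
    simp [edgeValue, hxy, hyz, Finset.pair_comm y x, CharTwo.add_self_eq_zero]
  obtain rfl : insert x {y, z} = t := Finset.eq_of_subset_of_card_le
    (by simp [Finset.insert_subset_iff, hx, hy, hz]) (by simp [hcard, hxy, hyz, hxz])
  have hsum := hφ.eq_sum_apex (Finset.card_pair hyz) (by simp [hxy, hxz]) ht
  rw [Finset.sum_pair hyz] at hsum
  rw [edgeValue, edgeValue, edgeValue, if_neg hxy, if_neg hyz, if_neg hxz, hsum, ← add_assoc,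
    CharTwo.add_self_eq_zero, zero_add]

end EdgeCochain

section Cohomology

open Topology Metric

variable {N : ℕ} {K : Geometry.SimplicialComplex ℝ (EuclideanSpace ℝ (Fin N))}
  {M : Set (Finset (EuclideanSpace ℝ (Fin N)))} {e : PartialEquiv (EuclideanSpace ℝ (Fin N)) ℂ}
  {σ t : Finset (EuclideanSpace ℝ (Fin N))} {x y : EuclideanSpace ℝ (Fin N)}

theorem IsDiskChart.contractibleSpace {X : Type*} [TopologicalSpace X] {e : PartialEquiv X ℂ}
    {S : Set X} (h : IsDiskChart e S) : ContractibleSpace S := by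
  have : ContractibleSpace (closedBall (0 : ℂ) 1) := contractibleSpace_closedBall zero_le_one
  let k : S ≃ₜ closedBall (0 : ℂ) 1 :=
    { toFun x := ⟨e x, h.map_mem x.2⟩
      invFun z := ⟨e.symm z, h.symm_map_mem z.2⟩
      left_inv x := Subtype.ext (h.left_inv x.2)
      right_inv z := Subtype.ext (h.right_inv z.2)
      continuous_toFun := (continuousOn_iff_continuous_domRestrict.1 h.continuousOn).subtype_mk _
      continuous_invFun :=
        (continuousOn_iff_continuous_domRestrict.1 h.continuousOn_symm).subtype_mk _ }
  exact k.contractibleSpace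

theorem mem_openStar_singleton_of_mem (hx : x ∈ openStar K M σ) (hy : y ∈ σ) :
    x ∈ openStar K M {y} :=
  ⟨hx.1, by simpa using hx.2 y hy⟩

namespace IsDiskTriangulation

theorem isOpen_openStar (h : IsDiskTriangulation K M e) (σ : Finset (EuclideanSpace ℝ (Fin N))) :
    IsOpen (Subtype.val ⁻¹' openStar K M σ : Set (poly M)) :=
  isOpen_iff_mem_nhds.2 fun _ hx ↦
    preimage_coe_mem_nhds_subtype.2 (h.openStar_mem_nhdsWithin hx)

theorem starConvex_openStar_singleton (h : IsDiskTriangulation K M e)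
    (x : EuclideanSpace ℝ (Fin N)) : StarConvex ℝ x (openStar K M {x}) := by
  intro y hy a b ha hb hab
  obtain ⟨τ, hτ, hyτ⟩ := mem_poly.1 hy.1
  have hxτ := subset_of_mem_openStar hy (h.subset_faces hτ) hyτ
  obtain rfl | hpos := hb.eq_or_lt
  · obtain rfl : a = 1 := by linarith
    simpa using h.mem_openStar_singleton (h.isComplex.2 τ hτ _ hxτ (by simp))
  · have hline := (h.lineMap_mem_convexHull_openStar hτ
      (subset_convexHull ℝ _ (Finset.singleton_subset_iff.1 hxτ)) hyτ hy ⟨hpos, by linarith⟩).2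
    rwa [AffineMap.lineMap_apply_module, ← eq_sub_of_add_eq hab] at hline

theorem isPreconnected_openStar_singleton (h : IsDiskTriangulation K M e)
    (x : EuclideanSpace ℝ (Fin N)) :
    IsPreconnected (Subtype.val ⁻¹' openStar K M {x} : Set (poly M)) := by
  rw [← IsInducing.subtypeVal.isPreconnected_image, Subtype.image_preimage_coe,
    Set.inter_eq_right.2 fun _ hy ↦ hy.1]
  rcases (openStar K M {x}).eq_empty_or_nonempty with hempty | hne
  · simp [hempty, isPreconnected_empty]
  · obtain ⟨y, hy⟩ := hne
    obtain ⟨τ, hτ, hyτ⟩ := mem_poly.1 hy.1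
    have hxτ := subset_of_mem_openStar hy (h.subset_faces hτ) hyτ
    have hx := h.mem_openStar_singleton (h.isComplex.2 τ hτ _ hxτ (by simp))
    exact ((h.starConvex_openStar_singleton x).isPathConnected hx).isConnected.isPreconnected

theorem isCechCocycle_edgeValue (h : IsDiskTriangulation K M e)
    {φ : Finset (EuclideanSpace ℝ (Fin N)) → ZMod 2} (hφ : IsRelCocycle h.triangles φ) :
    IsCechCocycle (fun x ↦ (Subtype.val ⁻¹' openStar K M {x} : Set (poly M))) (edgeValue φ) where
  self x := by simp [edgeValue]
  add {x y z} := by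
    rintro ⟨b, ⟨hx, hy⟩, hz⟩
    obtain ⟨t, ht, hbt⟩ := h.exists_triangle_mem_convexHull b.2
    have htK := h.mem_faces_of_mem_triangles ht
    exact hφ.edgeValue_add (h.mem_triangles.1 ht).2 ht
      (Finset.singleton_subset_iff.1 (subset_of_mem_openStar hx htK hbt))
      (Finset.singleton_subset_iff.1 (subset_of_mem_openStar hy htK hbt))
      (Finset.singleton_subset_iff.1 (subset_of_mem_openStar hz htK hbt))

theorem exists_forall_edge_eq_sum (h : IsDiskTriangulation K M e)
    {φ : Finset (EuclideanSpace ℝ (Fin N)) → ZMod 2} (hφ : IsRelCocycle h.triangles φ) :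
    ∃ γ : EuclideanSpace ℝ (Fin N) → ZMod 2, ∀ f ∈ M, f.card = 2 → φ f = ∑ x ∈ f, γ x := by
  have := h.chart.contractibleSpace
  have hcover (b : poly M) : ∃ x, b ∈ (Subtype.val ⁻¹' openStar K M {x} : Set (poly M)) := by
    obtain ⟨σ, hσ, -, hstar⟩ := h.exists_mem_openStar b.2
    obtain ⟨x, hx⟩ := Finset.nonempty_iff_ne_empty.2 (h.isComplex.1 σ hσ)
    exact ⟨x, mem_openStar_singleton_of_mem hstar hx⟩
  obtain ⟨γ, hγ⟩ := (h.isCechCocycle_edgeValue hφ).exists_potential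
    (fun x ↦ h.isOpen_openStar {x}) hcover h.isPreconnected_openStar_singleton
  refine ⟨γ, fun f hf hcard ↦ ?_⟩
  obtain ⟨b, hbf, hb⟩ := h.exists_mem_convexHull_openStar hf
  obtain ⟨x, y, hxy, rfl⟩ := Finset.card_eq_two.1 hcard
  have hstep := hγ x y ⟨⟨b, hb.1⟩, mem_openStar_singleton_of_mem hb (by simp),
    mem_openStar_singleton_of_mem hb (by simp)⟩
  rw [Finset.sum_pair hxy, hstep, edgeValue, if_neg hxy, ← add_assoc, CharTwo.add_self_eq_zero,
    zero_add]

theorem exists_isRelPrimitive (h : IsDiskTriangulation K M e)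
    {φ : Finset (EuclideanSpace ℝ (Fin N)) → ZMod 2} (hφ : IsRelCocycle h.triangles φ) :
    ∃ g, IsRelPrimitive h.triangles φ g := by
  obtain ⟨γ, hγ⟩ := h.exists_forall_edge_eq_sum hφ
  have hfree (f) (hf : IsFreeEdge h.triangles f) : ∀ x ∈ f, ∀ y ∈ f, γ x = γ y := by
    rw [← sum_eq_zero_iff_forall_eq hf.1, ← hγ f (h.mem_of_isFreeEdge hf) hf.1,
      hφ.eq_zero_of_isFreeEdge f hf]
  obtain ⟨k, hk⟩ : ∃ k, ∀ f, IsFreeEdge h.triangles f → ∀ x ∈ f, γ x = k := by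
    by_cases hex : ∃ f x, IsFreeEdge h.triangles f ∧ x ∈ f
    · obtain ⟨f₀, x₀, hf₀, hx₀⟩ := hex
      exact ⟨γ x₀, fun f hf x hx ↦ h.eq_of_forall_isFreeEdge hfree hf hf₀ hx hx₀⟩
    · exact ⟨0, fun f hf x hx ↦ absurd ⟨f, x, hf, hx⟩ hex⟩
  refine ⟨fun x ↦ γ x + k, fun t ht f hf hft ↦ ?_, fun f hf x hx ↦ ?_⟩
  · rw [sum_add_const_of_card_eq_two hf]
    exact hγ f (h.isComplex.2 t (h.mem_triangles.1 ht).1 f hft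
      (Finset.card_pos.1 (hf ▸ Nat.two_pos)).ne_empty) hf
  · rw [hk f hf x hx, CharTwo.add_self_eq_zero]

theorem isDiskOrSphereComplex (h : IsDiskTriangulation K M e) :
    IsDiskOrSphereComplex M h.triangles where
  toIsPseudosurface := h.isPseudosurface
  nonempty := by
    obtain ⟨t, ht, -⟩ := h.exists_triangle_mem_convexHull (h.chart.symm_map_mem (z := 0) (by simp))
    exact ⟨t, ht⟩
  starConnected _ hσ := h.starConnected hσ
  exists_primitive _ hφ := h.exists_isRelPrimitive hφ
  mem_iff _ := h.mem_triangles
  exists_subset σ hσ := by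
    obtain ⟨t, ht, hcard, hσt⟩ := h.exists_card_eq_three hσ
    exact ⟨t, h.mem_triangles.2 ⟨ht, hcard⟩, hσt⟩

end IsDiskTriangulation

theorem exists_isDiskOrSphereComplex (hM : M ⊆ K.faces) (hfin : M.Finite) (hcx : IsComplex M)
    (hcard : ∀ σ ∈ M, σ.card ≤ 3) (hdisk : IsBallSet 2 (poly M)) :
    ∃ T, IsDiskOrSphereComplex M T := by
  obtain ⟨e, he⟩ := exists_isDiskChart hdisk
  have h : IsDiskTriangulation K M e := ⟨hM, hfin, hcx, hcard, he⟩
  exact ⟨h.triangles, h.isDiskOrSphereComplex⟩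

end Cohomology

section CardBounds

variable {K K' : Set (Finset V)} {d : ℕ} {σ : Finset V}

theorem IsComplex.inter (hK : IsComplex K) (hK' : IsComplex K') : IsComplex (K ∩ K') :=
  ⟨fun σ hσ ↦ hK.1 σ hσ.1,
    fun σ hσ τ hτσ hτ ↦ ⟨hK.2 σ hσ.1 τ hτσ hτ, hK'.2 σ hσ.2 τ hτσ hτ⟩⟩

theorem PureDim.card_le (hK : PureDim K d) (hfin : K.Finite) (hσ : σ ∈ K) : σ.card ≤ d + 1 := by
  obtain ⟨τ, -, hστ, hτ⟩ := hK.exists_facet hfin hσ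
  exact hτ ▸ Finset.card_le_card hστ

theorem PureDim.card_le_of_cone_subset [DecidableEq V] {v : V} {D : Set (Finset V)}
    (hK : PureDim K d) (hfin : K.Finite) (hcone : cone v D ⊆ K) (hv : v ∉ σ) (hσ : σ ∈ D) :
    σ.card ≤ d := by
  have hcard := hK.card_le hfin (hcone (mem_cone.2 (.inr (.inl ⟨σ, hσ, rfl⟩))))
  rw [Finset.card_insert_of_notMem hv] at hcard
  omega

theorem card_le_of_mem_bdry (hσ : σ ∈ bdry K d) : σ.card ≤ d := by
  obtain ⟨-, τ, ⟨-, hτ, -⟩, hστ⟩ := hσ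
  exact hτ ▸ Finset.card_le_card hστ

end CardBounds

/-- Lemma 6.1 (shelling a canonically triangulated polytope off). -/
theorem shells_to_L_of_cone_over_disk {N : ℕ}
    (K : Geometry.SimplicialComplex ℝ (EuclideanSpace ℝ (Fin N)))
    (hfin : K.faces.Finite)
    (hKpure : PureDim K.faces 3)
    (L P : Set (Finset (EuclideanSpace ℝ (Fin N))))
    (hLsub : L ⊆ K.faces) (hPsub : P ⊆ K.faces)
    (hLcx : IsComplex L) (hPcx : IsComplex P)
    (hLpure : PureDim L 3) (hPpure : PureDim P 3)
    (hunion : K.faces = L ∪ P)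
    (v : EuclideanSpace ℝ (Fin N))
    (D : Set (Finset (EuclideanSpace ℝ (Fin N))))
    (hDcx : IsComplex D)
    (hDdisk : IsBallSet 2 (poly D))
    (hvD : ∀ σ ∈ D, v ∉ σ)
    (hPcone : P = cone v D)
    (hLPdisk : IsBallSet 2 (poly (L ∩ P)))
    (hLPbd : L ∩ P ⊆ bdry P 3) :
    ShellsDownTo K.faces 3 L := by
  subst hPcone
  have hDsub : D ⊆ K.faces := fun σ hσ ↦ hPsub (mem_cone.2 (.inl hσ))
  have hLPsub : L ∩ cone v D ⊆ K.faces := Set.inter_subset_left.trans hLsub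
  obtain ⟨S, hS⟩ := exists_isDiskOrSphereComplex hDsub (hfin.subset hDsub) hDcx
    (fun σ hσ ↦ hKpure.card_le_of_cone_subset hfin hPsub (hvD σ hσ) hσ) hDdisk
  obtain ⟨X, hX⟩ := exists_isDiskOrSphereComplex hLPsub (hfin.subset hLPsub) (hLcx.inter hPcx)
    (fun σ hσ ↦ card_le_of_mem_bdry (hLPbd hσ)) hLPdisk
  have hattach : IsConeAttachment L D v S X :=
    { isComplex := hLcx
      isComplex_cone := hPcx
      notMem := hvD
      base := hS
      inter := hX
      inter_subset_bdry := hLPbd }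
  rw [hunion] at hfin hKpure ⊢
  exact hattach.shellsDownTo hfin hKpure hLpure

end PaperFormal
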